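/- For every nonnegative integer n, the number of partitions of 5n+1 without repeated odd parts whose M₂-rank is congruent to 1 modulo 5 equals the number of partitions of 5n+1 without repeated odd parts whose M₂-rank is congruent to 2 modulo 5; that is, N₂(1,5,5n+1) = N₂(2,5,5n+1). -/

import Mathlib

/-!
Write `D(x) = ∑ (N₂(1,5,n) - N₂(2,5,n)) xⁿ`. The theorem says that `D` has no terms with exponent
`≡ 1 mod 5`; all series are treated as convergent series for `‖x‖ < 1/2`.

*Generating function.* Remove the largest part of a partition, add `2` to the remaining parts, and
pad with parts `2` and at most one part `1`. This maps the partitions with M₂-rank `≥ -m-1`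
bijectively to those with rank `≤ -m` and changes the size by `2m+1`. The resulting recurrence has
a unique bounded solution, a partial theta series (`eq_mul_partialTheta_of_recurrence`), and summing
over the ranks gives, with sums over `n ∈ ℤ`,
`(∑ q^{2n²+n}) D(-q) = 2 ∑_{n≠0} q^{2n²+3n}/(1-q^{10n}) - ∑_{n≠0} q^{2n²+n}/(1-q^{10n})`.

*Partial fractions.* Splitting `n` modulo `5` turns the right-hand side into bilateral Lambert
series `∑ w^{m²} yᵐ/(1 - wᵐ x)` with `Q = q⁵`, `w = Q¹⁰` and `x`, `y` powers of `Q`. A quotient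
`θ(at)/(θ(bt)θ(ct)θ(dt))` of theta functions of nome `w` minus its expansion into three such series
has only removable singularities and satisfies `Φ(wt) = κ t² Φ(t) + α + β t`. By
`eventually_eq_zero_of_mul_quasiperiodic` this forces `Φ = 0`, which is a linear relation between
Lambert series, and then `α = 0`, which is one between theta series.

*Dissection.* These relations eliminate all Lambert series but two. The remaining theta quotients
and logarithmic derivatives are compared with Weierstrass' three-term relation and its infinitesimal
form, and it follows that `D(-q)` is a combination of `1, q², q³, q⁴` with coefficients depending on
`q⁵` only. Averaging over the fifth roots of unity and uniqueness of power series coefficients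
finish the proof.
-/

/-- The infinite q-Pochhammer symbol `(a; q)_∞ = ∏_{k ≥ 0} (1 - a qᵏ)`. -/
noncomputable def qPoch (a q : ℂ) : ℂ := ∏' k : ℕ, (1 - a * q ^ k)

/-- A partition has no repeated odd parts: each odd number occurs at most once as a part. -/
def Nat.Partition.noRepeatedOdd {n : ℕ} (p : n.Partition) : Prop :=
  ∀ i, Odd i → p.parts.count i ≤ 1

/-- The M₂-rank of a partition: ⌈(largest part)/2⌉ minus the number of parts. -/
def Nat.Partition.m2Rank {n : ℕ} (p : n.Partition) : ℤ :=
  (((p.parts.sup + 1) / 2 : ℕ) : ℤ) - (Multiset.card p.parts : ℤ)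

/-- `N2 s ℓ n` is the number of partitions of `n` without repeated odd parts whose
M₂-rank is congruent to `s` modulo `ℓ`. -/
noncomputable def N2 (s ℓ n : ℕ) : ℕ :=
  Nat.card {p : n.Partition // p.noRepeatedOdd ∧ p.m2Rank ≡ (s : ℤ) [ZMOD (ℓ : ℤ)]}

open Filter Topology

/-! ### Removable singularities and functional equations under `t ↦ w t` -/

/-- `Φ` is analytic at `t` up to changing its value at `t`: the singularity at `t`, if any, is
removable. The value `Φ t` itself is irrelevant. -/
def HasRemovableSingularityAt (Φ : ℂ → ℂ) (t : ℂ) : Prop :=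
  ∃ g : ℂ → ℂ, AnalyticAt ℂ g t ∧ Φ =ᶠ[𝓝[≠] t] g

lemma hasRemovableSingularityAt_of_analyticAt {Φ : ℂ → ℂ} {t : ℂ} (h : AnalyticAt ℂ Φ t) :
    HasRemovableSingularityAt Φ t :=
  ⟨Φ, h, EventuallyEq.rfl⟩

lemma HasRemovableSingularityAt.exists_analyticAt_extension {Φ : ℂ → ℂ} {U : Set ℂ}
    (h : ∀ t ∈ U, HasRemovableSingularityAt Φ t) :
    ∃ Ψ : ℂ → ℂ, ∀ t ∈ U, AnalyticAt ℂ Ψ t ∧ Φ =ᶠ[𝓝[≠] t] Ψ := by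
  have hmero : MeromorphicOn Φ U := fun t ht ↦
    let ⟨_, hg, hΦ⟩ := h t ht
    hg.meromorphicAt.congr hΦ.symm
  refine ⟨toMeromorphicNFOn Φ U, fun t ht ↦ ?_⟩
  have hΦ := hmero.toMeromorphicNFOn_eq_self_on_nhdsNE ht
  refine ⟨?_, hΦ.symm⟩
  rw [← (meromorphicNFOn_toMeromorphicNFOn Φ U ht).meromorphicOrderAt_nonneg_iff_analyticAt,
    meromorphicOrderAt_congr hΦ, (hmero t ht).meromorphicOrderAt_nonneg_iff]
  exact h t ht

lemma eq_of_eventuallyEq_nhdsNE {f g : ℂ → ℂ} {t : ℂ} (hf : ContinuousAt f t)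
    (hg : ContinuousAt g t) (h : f =ᶠ[𝓝[≠] t] g) : f t = g t :=
  ((hf.eventuallyEq_nhds_iff_eventuallyEq_nhdsNE hg).mp h).eq_of_nhds

lemma tendsto_const_mul_nhdsNE {w : ℂ} (hw : w ≠ 0) (t : ℂ) :
    Tendsto (w * ·) (𝓝[≠] t) (𝓝[≠] (w * t)) :=
  ((Homeomorph.mulLeft₀ w hw).map_punctured_nhds_eq t).le

section FunctionalEquation

variable {w : ℂ} {Φ m ρ : ℂ → ℂ}

lemma HasRemovableSingularityAt.const_mul_iff (hw : w ≠ 0) {t : ℂ}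
    (hm : AnalyticAt ℂ m t) (hmt : m t ≠ 0) (hρ : AnalyticAt ℂ ρ t)
    (hfe : ∀ᶠ s in 𝓝[≠] t, Φ (w * s) = m s * Φ s + ρ s) :
    HasRemovableSingularityAt Φ (w * t) ↔ HasRemovableSingularityAt Φ t := by
  constructor
  · rintro ⟨g, hg, hΦ⟩
    refine ⟨fun s ↦ (g (w * s) - ρ s) / m s, ?_, ?_⟩
    · exact ((hg.fun_comp (f := (w * ·)) (by fun_prop)).fun_sub hρ).fun_div hm hmt
    · have hm_ne : ∀ᶠ s in 𝓝[≠] t, m s ≠ 0 :=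
        (hm.continuousAt.eventually_ne hmt).filter_mono nhdsWithin_le_nhds
      filter_upwards [(tendsto_const_mul_nhdsNE hw t).eventually hΦ, hfe, hm_ne]
        with s hs hfes hms
      rw [← hs, hfes]
      field_simp
      ring
  · rintro ⟨g, hg, hΦ⟩
    have hwt : w⁻¹ * (w * t) = t := inv_mul_cancel_left₀ hw t
    refine ⟨fun s ↦ m (w⁻¹ * s) * g (w⁻¹ * s) + ρ (w⁻¹ * s), ?_, ?_⟩
    · exact ((hm.fun_mul hg).fun_add hρ).fun_comp_of_eq (f := (w⁻¹ * ·)) (by fun_prop) hwt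
    · have hlim := tendsto_const_mul_nhdsNE (inv_ne_zero hw) (w * t)
      rw [hwt] at hlim
      filter_upwards [hlim.eventually hΦ, hlim.eventually hfe] with s hs hfes
      rw [← hs, ← hfes, mul_inv_cancel_left₀ hw]

lemma HasRemovableSingularityAt.zpow_mul (hw : w ≠ 0)
    (hm : ∀ t ≠ 0, AnalyticAt ℂ m t) (hm0 : ∀ t ≠ 0, m t ≠ 0) (hρ : ∀ t ≠ 0, AnalyticAt ℂ ρ t)
    (hfe : ∀ t ≠ 0, ∀ᶠ s in 𝓝[≠] t, Φ (w * s) = m s * Φ s + ρ s)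
    {t : ℂ} (ht : t ≠ 0) (h : HasRemovableSingularityAt Φ t) (n : ℤ) :
    HasRemovableSingularityAt Φ (w ^ n * t) := by
  have shift (n : ℤ) : HasRemovableSingularityAt Φ (w ^ (n + 1) * t) ↔
      HasRemovableSingularityAt Φ (w ^ n * t) := by
    have hne : w ^ n * t ≠ 0 := mul_ne_zero (zpow_ne_zero n hw) ht
    rw [zpow_add_one₀ hw, mul_comm (w ^ n), mul_assoc]
    exact const_mul_iff hw (hm _ hne) (hm0 _ hne) (hρ _ hne) (hfe _ hne)
  induction n using Int.induction_on with
  | zero => simpa using h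
  | succ n ih => exact (shift n).mpr ih
  | pred n ih => exact (shift (-n - 1)).mp (by rwa [sub_add_cancel])

lemma exists_differentiableAt_extension_of_functionalEquation (hw : w ≠ 0)
    (hm : ∀ t ≠ 0, ContinuousAt m t) (hρ : ∀ t ≠ 0, ContinuousAt ρ t)
    (hext : ∀ t ≠ 0, HasRemovableSingularityAt Φ t)
    (hfe : ∀ t ≠ 0, ∀ᶠ s in 𝓝[≠] t, Φ (w * s) = m s * Φ s + ρ s) :
    ∃ Ψ : ℂ → ℂ, (∀ t ≠ 0, DifferentiableAt ℂ Ψ t) ∧ (∀ t ≠ 0, Φ =ᶠ[𝓝[≠] t] Ψ) ∧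
      ∀ t ≠ 0, Ψ (w * t) = m t * Ψ t + ρ t := by
  obtain ⟨Ψ, hΨ⟩ := HasRemovableSingularityAt.exists_analyticAt_extension (U := {0}ᶜ) hext
  refine ⟨Ψ, fun t ht ↦ (hΨ t ht).1.differentiableAt, fun t ht ↦ (hΨ t ht).2, fun t ht ↦ ?_⟩
  have hwt : w * t ≠ 0 := mul_ne_zero hw ht
  refine eq_of_eventuallyEq_nhdsNE (f := fun s ↦ Ψ (w * s)) (g := fun s ↦ m s * Ψ s + ρ s)
    ((hΨ _ hwt).1.continuousAt.comp (f := (w * ·)) (by fun_prop))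
    (((hm t ht).mul (hΨ t ht).1.continuousAt).add (hρ t ht)) ?_
  filter_upwards [hfe t ht, (hΨ t ht).2,
    (tendsto_const_mul_nhdsNE hw t).eventually (hΨ _ hwt).2] with s hfes hs hws
  rw [← hws, hfes, hs]

end FunctionalEquation

/-! ### Boundedness on the punctured plane -/

lemma eq_const_of_norm_le_punctured {f : ℂ → ℂ} (hf : ∀ t ≠ 0, DifferentiableAt ℂ f t)
    {M : ℝ} (hM : ∀ t ≠ 0, ‖f t‖ ≤ M) : ∃ c, ∀ t ≠ 0, f t = c := by
  set F := Function.update f 0 (limUnder (𝓝[≠] 0) f)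
  have hFf {t : ℂ} (ht : t ≠ 0) : F t = f t := Function.update_of_ne ht _ _
  have hdiff : Differentiable ℂ F := by
    refine differentiableOn_univ.mp
      (Complex.differentiableOn_update_limUnder_of_bddAbove univ_mem
        (fun t ht ↦ (hf t ht.2).differentiableWithinAt) ⟨M, ?_⟩)
    rintro _ ⟨t, ht, rfl⟩
    exact hM t ht.2
  have hbdd : Bornology.IsBounded (Set.range F) := by
    refine isBounded_iff_forall_norm_le.mpr ⟨max M ‖F 0‖, ?_⟩
    rintro _ ⟨t, rfl⟩
    rcases eq_or_ne t 0 with rfl | ht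
    · exact le_max_right _ _
    · exact hFf ht ▸ (hM t ht).trans (le_max_left _ _)
  refine ⟨f 1, fun t ht ↦ ?_⟩
  rw [← hFf ht, ← hFf one_ne_zero]
  exact hdiff.apply_eq_apply_of_bounded hbdd t 1

lemma exists_norm_le_on_annulus {f : ℂ → ℂ} (hf : ContinuousOn f {0}ᶜ) {a : ℝ} (ha : 0 < a)
    (b : ℝ) : ∃ M, ∀ t, a ≤ ‖t‖ → ‖t‖ ≤ b → ‖f t‖ ≤ M := by
  have hcompact : IsCompact ({t : ℂ | a ≤ ‖t‖} ∩ Metric.closedBall 0 b) :=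
    (isCompact_closedBall 0 b).inter_left (isClosed_le continuous_const continuous_norm)
  obtain ⟨M, hM⟩ := hcompact.exists_bound_of_continuousOn
    (hf.mono fun t ht ↦ norm_pos_iff.mp (ha.trans_le ht.1))
  exact ⟨M, fun t hat htb ↦ hM t ⟨hat, mem_closedBall_zero_iff.mpr htb⟩⟩

section Bounded

variable {w : ℂ} {f : ℂ → ℂ} {K₀ : ℝ}

lemma exists_norm_le_near_zero (hw : w ≠ 0) (hw1 : ‖w‖ < 1) (hf : ContinuousOn f {0}ᶜ)
    {r : ℝ} (hr : 0 < r)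
    (hstep : ∀ K ≥ K₀, ∀ t ≠ 0, ‖t‖ ≤ r → ‖f t‖ ≤ K → ‖f (w * t)‖ ≤ K) :
    ∃ M, ∀ t ≠ 0, ‖t‖ ≤ r → ‖f t‖ ≤ M := by
  have hw0 : 0 < ‖w‖ := norm_pos_iff.mpr hw
  obtain ⟨M, hM⟩ := exists_norm_le_on_annulus hf (mul_pos hw0 hr) r
  have hiter (n : ℕ) (s : ℂ) (hs : ‖w‖ * r ≤ ‖s‖) (hsr : ‖s‖ ≤ r) :
      ‖f (w ^ n * s)‖ ≤ max K₀ M := by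
    have hs0 : s ≠ 0 := norm_pos_iff.mp ((mul_pos hw0 hr).trans_le hs)
    induction n with
    | zero => simpa using Or.inr (hM s hs hsr)
    | succ n ih =>
      rw [pow_succ', mul_assoc]
      refine hstep _ (le_max_left _ _) _ (mul_ne_zero (pow_ne_zero n hw) hs0) ?_ ih
      rw [norm_mul, norm_pow]
      exact (mul_le_of_le_one_left (norm_nonneg s) (pow_le_one₀ hw0.le hw1.le)).trans hsr
  refine ⟨max K₀ M, fun t ht htr ↦ ?_⟩
  have ht0 : 0 < ‖t‖ := norm_pos_iff.mpr ht
  obtain ⟨n, hn, hn'⟩ := exists_nat_pow_near_of_lt_one (div_pos ht0 hr) ((div_le_one hr).mpr htr)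
    hw0 hw1
  have hwn : 0 < ‖w‖ ^ n := pow_pos hw0 n
  have hnorm : ‖t / w ^ n‖ = ‖t‖ / ‖w‖ ^ n := by rw [norm_div, norm_pow]
  have h := hiter n (t / w ^ n)
    (by rw [hnorm, le_div_iff₀ hwn]; rw [lt_div_iff₀ hr, pow_succ] at hn; linarith)
    (by rw [hnorm, div_le_iff₀ hwn]; rw [div_le_iff₀ hr] at hn'; linarith)
  rwa [mul_div_cancel₀ _ (pow_ne_zero n hw)] at h

lemma exists_norm_le_near_infty (hw : w ≠ 0) (hw1 : ‖w‖ < 1) (hf : ContinuousOn f {0}ᶜ)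
    {R : ℝ} (hR : 0 < R)
    (hstep : ∀ K ≥ K₀, ∀ t ≠ 0, R ≤ ‖t‖ → ‖f (w * t)‖ ≤ K → ‖f t‖ ≤ K) :
    ∃ M, ∀ t ≠ 0, R ≤ ‖t‖ → ‖f t‖ ≤ M := by
  have hinv : ContinuousOn (fun t ↦ f t⁻¹) {0}ᶜ :=
    hf.comp continuousOn_inv₀ fun t ht ↦ inv_ne_zero ht
  obtain ⟨M, hM⟩ : ∃ M, ∀ t ≠ 0, ‖t‖ ≤ R⁻¹ → ‖f t⁻¹‖ ≤ M := by
    refine exists_norm_le_near_zero hw hw1 hinv (inv_pos.mpr hR) (K₀ := K₀) ?_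
    intro K hK t ht htR hft
    have hwt : w * t ≠ 0 := mul_ne_zero hw ht
    refine hstep K hK _ (inv_ne_zero hwt) ?_ (by rwa [mul_inv, mul_inv_cancel_left₀ hw])
    rw [norm_inv, le_inv_comm₀ hR (norm_pos_iff.mpr hwt), norm_mul]
    exact (mul_le_of_le_one_left (norm_nonneg t) hw1.le).trans htR
  refine ⟨M, fun t ht htR ↦ ?_⟩
  simpa using hM t⁻¹ (inv_ne_zero ht) (by rw [norm_inv]; exact inv_anti₀ hR htR)

lemma eq_const_of_norm_step (hw : w ≠ 0) (hw1 : ‖w‖ < 1)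
    (hf : ∀ t ≠ 0, DifferentiableAt ℂ f t) {r R : ℝ} (hr : 0 < r) (hR : 0 < R)
    (hzero : ∀ K ≥ K₀, ∀ t ≠ 0, ‖t‖ ≤ r → ‖f t‖ ≤ K → ‖f (w * t)‖ ≤ K)
    (hinfty : ∀ K ≥ K₀, ∀ t ≠ 0, R ≤ ‖t‖ → ‖f (w * t)‖ ≤ K → ‖f t‖ ≤ K) :
    ∃ c, ∀ t ≠ 0, f t = c := by
  have hcont : ContinuousOn f {0}ᶜ := fun t ht ↦ (hf t ht).continuousAt.continuousWithinAt
  obtain ⟨M₀, hM₀⟩ := exists_norm_le_near_zero hw hw1 hcont hr hzero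
  obtain ⟨M₁, hM₁⟩ := exists_norm_le_near_infty hw hw1 hcont hR hinfty
  obtain ⟨M, hM⟩ := exists_norm_le_on_annulus hcont hr R
  refine eq_const_of_norm_le_punctured hf (M := max M (max M₀ M₁)) fun t ht ↦ ?_
  rcases le_total ‖t‖ r with h | h
  · exact (hM₀ t ht h).trans (by simp)
  rcases le_total R ‖t‖ with h' | h'
  · exact (hM₁ t ht h').trans (by simp)
  · exact (hM t h h').trans (by simp)

lemma eq_const_of_mul_periodic (hw : w ≠ 0) (hw1 : ‖w‖ < 1)
    (hf : ∀ t ≠ 0, DifferentiableAt ℂ f t) (hper : ∀ t ≠ 0, f (w * t) = f t) :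
    ∃ c, ∀ t ≠ 0, f t = c :=
  eq_const_of_norm_step hw hw1 hf (K₀ := 0) one_pos one_pos
    (fun _ _ t ht _ h ↦ (hper t ht).symm ▸ h) (fun _ _ t ht _ h ↦ hper t ht ▸ h)

lemma eq_const_of_mul_quasiperiodic (hw : w ≠ 0) (hw1 : ‖w‖ < 1)
    (hf : ∀ t ≠ 0, DifferentiableAt ℂ f t) {κ : ℂ} (hκ : κ ≠ 0) {k : ℕ} (hk : k ≠ 0)
    {ρ : ℂ → ℂ} {C : ℝ} (hρ : ∀ t, ‖ρ t‖ ≤ C * max 1 (‖t‖ ^ k))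
    (hfe : ∀ t ≠ 0, f (w * t) = κ * t ^ k * f t + ρ t) :
    ∃ c, ∀ t ≠ 0, f t = c := by
  have hκ0 : 0 < ‖κ‖ := norm_pos_iff.mpr hκ
  have : 0 ≤ C := by simpa [hk] using (norm_nonneg _).trans (hρ 0)
  refine eq_const_of_norm_step hw hw1 hf (K₀ := max (2 * C) (2 * C / ‖κ‖))
    (r := min 1 (1 / (2 * ‖κ‖))) (R := max 1 (2 / ‖κ‖)) (by positivity) (by positivity) ?_ ?_
  -- for small `t` the factor `κ tᵏ` is at most `1/2`, for large `t` it is at least `2`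
  · intro K hK t _ ht hft
    obtain ⟨hKC, -⟩ := max_le_iff.mp hK
    obtain ⟨ht1, htκ⟩ := le_min_iff.mp ht
    have hpow : ‖t‖ ^ k ≤ 1 / (2 * ‖κ‖) :=
      (pow_le_of_le_one (norm_nonneg t) ht1 hk).trans htκ
    have hρt : ‖ρ t‖ ≤ C := by
      simpa [max_eq_left (pow_le_one₀ (n := k) (norm_nonneg t) ht1)] using hρ t
    have : 0 ≤ K := (norm_nonneg _).trans hft
    calc ‖f (w * t)‖ ≤ ‖κ‖ * ‖t‖ ^ k * ‖f t‖ + ‖ρ t‖ := by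
          rw [hfe t ‹_›, ← norm_pow, ← norm_mul, ← norm_mul]
          exact norm_add_le _ _
      _ ≤ ‖κ‖ * (1 / (2 * ‖κ‖)) * K + C := by gcongr
      _ = K / 2 + C := by field_simp
      _ ≤ K := by linarith
  · intro K hK t ht0 ht hft
    obtain ⟨_, hKCκ⟩ := max_le_iff.mp hK
    obtain ⟨ht1, htκ⟩ := max_le_iff.mp ht
    rw [div_le_iff₀ hκ0] at hKCκ htκ
    have hone : 1 ≤ ‖t‖ ^ k := one_le_pow₀ ht1
    have hpow : 2 ≤ ‖t‖ ^ k * ‖κ‖ := htκ.trans (by gcongr; exact le_self_pow₀ ht1 hk)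
    have hρt : ‖ρ t‖ ≤ C * ‖t‖ ^ k := by simpa [max_eq_right hone] using hρ t
    have hK0 : 0 ≤ K := (norm_nonneg _).trans hft
    refine le_of_mul_le_mul_right ?_ (by positivity : 0 < ‖κ‖ * ‖t‖ ^ k)
    calc ‖f t‖ * (‖κ‖ * ‖t‖ ^ k) = ‖f (w * t) - ρ t‖ := by
          rw [hfe t ht0, add_sub_cancel_right, norm_mul, norm_mul, norm_pow, mul_comm]
      _ ≤ K + C * ‖t‖ ^ k := (norm_sub_le _ _).trans (add_le_add hft hρt)
      _ ≤ K * (‖κ‖ * ‖t‖ ^ k) := by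
        have h₁ := mul_le_mul_of_nonneg_left hpow hK0
        have h₂ := mul_le_mul_of_nonneg_right hKCκ (zero_le_one.trans hone)
        linarith

end Bounded

lemma eventually_eq_const_of_mul_periodic {w : ℂ} (hw : w ≠ 0) (hw1 : ‖w‖ < 1) {Φ : ℂ → ℂ}
    (hext : ∀ t ≠ 0, HasRemovableSingularityAt Φ t)
    (hper : ∀ t ≠ 0, ∀ᶠ s in 𝓝[≠] t, Φ (w * s) = Φ s) :
    ∃ c, ∀ t ≠ 0, ∀ᶠ s in 𝓝[≠] t, Φ s = c := by
  obtain ⟨Ψ, hΨ, hΦ, hfe⟩ := exists_differentiableAt_extension_of_functionalEquation hw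
    (m := 1) (ρ := 0) (fun _ _ ↦ continuousAt_const) (fun _ _ ↦ continuousAt_const) hext
    (by simpa using hper)
  obtain ⟨c, hc⟩ := eq_const_of_mul_periodic hw hw1 hΨ (by simpa using hfe)
  refine ⟨c, fun t ht ↦ ?_⟩
  filter_upwards [hΦ t ht, (eventually_ne_nhds ht).filter_mono nhdsWithin_le_nhds] with s hs hs0
  rw [hs, hc s hs0]

lemma eventually_eq_zero_of_mul_quasiperiodic {w : ℂ} (hw : w ≠ 0) (hw1 : ‖w‖ < 1)
    {Φ : ℂ → ℂ} {κ α β : ℂ} (hκ : κ ≠ 0) (hext : ∀ t ≠ 0, HasRemovableSingularityAt Φ t)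
    (hfe : ∀ t ≠ 0, ∀ᶠ s in 𝓝[≠] t, Φ (w * s) = κ * s ^ 2 * Φ s + (α + β * s)) :
    (∀ t ≠ 0, ∀ᶠ s in 𝓝[≠] t, Φ s = 0) ∧ α = 0 := by
  obtain ⟨Ψ, hΨ, hΦ, hfeΨ⟩ := exists_differentiableAt_extension_of_functionalEquation hw
    (m := fun s ↦ κ * s ^ 2) (ρ := fun s ↦ α + β * s) (by fun_prop) (by fun_prop) hext hfe
  have hρ (t : ℂ) : ‖α + β * t‖ ≤ (‖α‖ + ‖β‖) * max 1 (‖t‖ ^ 2) := by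
    have ht : ‖t‖ ≤ max 1 (‖t‖ ^ 2) := by
      rcases le_total ‖t‖ 1 with h | h
      · exact h.trans (le_max_left _ _)
      · exact (le_self_pow₀ h two_ne_zero).trans (le_max_right _ _)
    calc ‖α + β * t‖ ≤ ‖α‖ * 1 + ‖β‖ * ‖t‖ := by simpa using norm_add_le α (β * t)
      _ ≤ ‖α‖ * max 1 (‖t‖ ^ 2) + ‖β‖ * max 1 (‖t‖ ^ 2) := by gcongr; exact le_max_left _ _
      _ = (‖α‖ + ‖β‖) * max 1 (‖t‖ ^ 2) := (add_mul _ _ _).symm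
  obtain ⟨c, hc⟩ := eq_const_of_mul_quasiperiodic hw hw1 hΨ hκ two_ne_zero hρ hfeΨ
  have hpoly (t : ℂ) (ht : t ≠ 0) : c = κ * t ^ 2 * c + (α + β * t) := by
    simpa only [hc _ (mul_ne_zero hw ht), hc t ht] using hfeΨ t ht
  have h₁ := hpoly 1 one_ne_zero
  have h₂ := hpoly (-1) (neg_ne_zero.mpr one_ne_zero)
  have h₃ := hpoly 2 two_ne_zero
  have h₄ := hpoly (-2) (neg_ne_zero.mpr two_ne_zero)
  have hc0 : c = 0 := by
    refine (mul_eq_zero.mp ?_).resolve_left hκ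
    linear_combination (1 / 6) * (h₁ + h₂ - h₃ - h₄)
  refine ⟨fun t ht ↦ ?_, by rw [hc0] at h₁ h₂; linear_combination -(1 / 2) * (h₁ + h₂)⟩
  filter_upwards [hΦ t ht, (eventually_ne_nhds ht).filter_mono nhdsWithin_le_nhds] with s hs hs0
  rw [hs, hc s hs0, hc0]

/-! ### The theta function -/

section Theta

variable {w : ℂ}

lemma summable_norm_neg_mul_pow (hw1 : ‖w‖ < 1) (a : ℂ) :
    Summable fun k : ℕ ↦ ‖-(a * w ^ k)‖ := by
  simpa only [norm_neg, norm_mul, norm_pow] using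
    (summable_geometric_of_lt_one (norm_nonneg w) hw1).mul_left ‖a‖

lemma multipliable_one_sub_mul_pow (hw1 : ‖w‖ < 1) (a : ℂ) :
    Multipliable fun k : ℕ ↦ 1 - a * w ^ k := by
  simpa only [sub_eq_add_neg] using
    multipliable_one_add_of_summable (summable_norm_neg_mul_pow hw1 a)

lemma qPoch_ne_zero (hw1 : ‖w‖ < 1) {a : ℂ} (h : ∀ k : ℕ, a * w ^ k ≠ 1) : qPoch a w ≠ 0 := by
  simpa only [qPoch, sub_eq_add_neg] using
    tprod_one_add_ne_zero_of_summable (f := fun k : ℕ ↦ -(a * w ^ k))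
      (fun k ↦ by rw [← sub_eq_add_neg, sub_ne_zero]; exact (h k).symm)
      (summable_norm_neg_mul_pow hw1 a)

lemma qPoch_ne_zero_of_norm_lt_one (hw1 : ‖w‖ < 1) {a : ℂ} (ha : ‖a‖ < 1) : qPoch a w ≠ 0 := by
  refine qPoch_ne_zero hw1 fun k hk ↦ ne_of_lt ?_ (hk ▸ norm_one (α := ℂ))
  rw [norm_mul, norm_pow]
  exact (mul_le_of_le_one_right (norm_nonneg a) (pow_le_one₀ (norm_nonneg w) hw1.le)).trans_lt ha

lemma qPoch_eq_one_sub_mul (hw1 : ‖w‖ < 1) (a : ℂ) :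
    qPoch a w = (1 - a) * qPoch (a * w) w := by
  rw [qPoch, tprod_eq_zero_mul' (by
    simpa only [pow_succ', mul_assoc] using multipliable_one_sub_mul_pow hw1 (a * w))]
  simp only [qPoch, pow_zero, mul_one, pow_succ', mul_assoc]

lemma differentiable_qPoch (hw1 : ‖w‖ < 1) : Differentiable ℂ (qPoch · w) := by
  intro a
  have hprod : HasProdLocallyUniformlyOn (fun (k : ℕ) (x : ℂ) ↦ 1 + -(x * w ^ k))
      (fun x ↦ ∏' k : ℕ, (1 + -(x * w ^ k))) (Metric.ball 0 (‖a‖ + 1)) := by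
    refine Summable.hasProdLocallyUniformlyOn_nat_one_add Metric.isOpen_ball
      ((summable_geometric_of_lt_one (norm_nonneg w) hw1).mul_left (‖a‖ + 1))
      (Eventually.of_forall fun k x hx ↦ ?_) fun k ↦ by fun_prop
    rw [norm_neg, norm_mul, norm_pow]
    gcongr
    exact (mem_ball_zero_iff.mp hx).le
  have hdiff := hprod.differentiableOn
    (Eventually.of_forall fun s ↦ by simp only; fun_prop) Metric.isOpen_ball
  simpa only [qPoch, sub_eq_add_neg] using
    hdiff.differentiableAt (Metric.isOpen_ball.mem_nhds (x := a) (by simp))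

/-- The theta function `θ(x) = ∏_{k ≥ 0} (1 - x wᵏ)(1 - wᵏ⁺¹ / x)` of nome `w`, meaningful for
`x ≠ 0`. -/
noncomputable def theta (w x : ℂ) : ℂ := qPoch x w * qPoch (w / x) w

/-- The quotient `θ(x) / (1 - x)`, without its removable singularity at `x = 1`. -/
noncomputable def thetaReg (w x : ℂ) : ℂ := qPoch (x * w) w * qPoch (w / x) w

lemma theta_eq_one_sub_mul (hw1 : ‖w‖ < 1) (x : ℂ) : theta w x = (1 - x) * thetaReg w x := by
  rw [theta, thetaReg, qPoch_eq_one_sub_mul hw1 x, mul_assoc]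

lemma theta_one (hw1 : ‖w‖ < 1) : theta w 1 = 0 := by simp [theta_eq_one_sub_mul hw1]

lemma thetaReg_inv (x : ℂ) : thetaReg w x⁻¹ = thetaReg w x := by
  rw [thetaReg, thetaReg, mul_comm, div_inv_eq_mul, mul_comm w, inv_mul_eq_div]

lemma theta_inv (hw1 : ‖w‖ < 1) {x : ℂ} (hx : x ≠ 0) : theta w x⁻¹ = -(theta w x / x) := by
  rw [theta_eq_one_sub_mul hw1, theta_eq_one_sub_mul hw1, thetaReg_inv]
  field_simp
  ring

lemma theta_nome_div (hw : w ≠ 0) (x : ℂ) : theta w (w / x) = theta w x := by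
  rw [theta, theta, mul_comm, div_div_cancel₀ hw]

lemma theta_nome_mul (hw : w ≠ 0) (hw1 : ‖w‖ < 1) {x : ℂ} (hx : x ≠ 0) :
    theta w (w * x) = -(theta w x / x) := by
  rw [← theta_inv hw1 hx, ← theta_nome_div hw x⁻¹, div_inv_eq_mul]

lemma theta_zpow_mul_eq_zero_iff (hw : w ≠ 0) (hw1 : ‖w‖ < 1) {x : ℂ} (hx : x ≠ 0) (n : ℤ) :
    theta w (w ^ n * x) = 0 ↔ theta w x = 0 := by
  have shift (n : ℤ) : theta w (w ^ (n + 1) * x) = 0 ↔ theta w (w ^ n * x) = 0 := by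
    have hne : w ^ n * x ≠ 0 := mul_ne_zero (zpow_ne_zero n hw) hx
    rw [zpow_add_one₀ hw, mul_comm (w ^ n), mul_assoc, theta_nome_mul hw hw1 hne, neg_eq_zero,
      div_eq_zero_iff, or_iff_left hne]
  induction n using Int.induction_on with
  | zero => simp
  | succ n ih => exact (shift n).trans ih
  | pred n ih => exact (by simpa using shift (-n - 1) : _ ↔ _).symm.trans ih

lemma theta_eq_zero_iff (hw : w ≠ 0) (hw1 : ‖w‖ < 1) {x : ℂ} (hx : x ≠ 0) :
    theta w x = 0 ↔ ∃ n : ℤ, w ^ n * x = 1 := by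
  constructor
  · intro hzero
    by_contra! hne
    refine mul_ne_zero (qPoch_ne_zero hw1 fun k hk ↦ ?_) (qPoch_ne_zero hw1 fun k hk ↦ ?_) hzero
    · exact hne k (by rwa [zpow_natCast, mul_comm])
    · refine hne (-(k + 1)) ?_
      rw [div_mul_eq_mul_div, div_eq_one_iff_eq hx, ← pow_succ'] at hk
      rw [← hk, zpow_neg]
      exact_mod_cast inv_mul_cancel₀ (pow_ne_zero (k + 1) hw)
  · rintro ⟨n, hn⟩
    rw [← theta_zpow_mul_eq_zero_iff hw hw1 hx n, hn, theta_one hw1]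

lemma thetaReg_one_ne_zero (hw1 : ‖w‖ < 1) : thetaReg w 1 ≠ 0 := by
  simpa [thetaReg] using qPoch_ne_zero_of_norm_lt_one hw1 hw1

lemma analyticAt_thetaReg (hw1 : ‖w‖ < 1) {x : ℂ} (hx : x ≠ 0) :
    AnalyticAt ℂ (thetaReg w) x := by
  have hq := differentiable_qPoch hw1
  exact ((hq.analyticAt _).fun_comp (f := (· * w)) (by fun_prop)).fun_mul
    ((hq.analyticAt _).fun_comp (f := (w / ·)) (by fun_prop (disch := exact hx)))

lemma analyticAt_theta (hw1 : ‖w‖ < 1) {x : ℂ} (hx : x ≠ 0) : AnalyticAt ℂ (theta w) x := by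
  rw [funext (theta_eq_one_sub_mul hw1)]
  exact AnalyticAt.fun_mul (by fun_prop) (analyticAt_thetaReg hw1 hx)

lemma analyticAt_theta_mul (hw1 : ‖w‖ < 1) {b t : ℂ} (hb : b ≠ 0) (ht : t ≠ 0) :
    AnalyticAt ℂ (fun t ↦ theta w (b * t)) t :=
  (analyticAt_theta hw1 (mul_ne_zero hb ht)).fun_comp (f := (b * ·)) (by fun_prop)

lemma eventually_theta_ne_zero (hw : w ≠ 0) (hw1 : ‖w‖ < 1) {x : ℂ} (hx : x ≠ 0) :
    ∀ᶠ s in 𝓝[≠] x, theta w s ≠ 0 := by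
  by_cases h : theta w x = 0
  · obtain ⟨n, hn⟩ := (theta_eq_zero_iff hw hw1 hx).mp h
    have near_one : ∀ᶠ y in 𝓝[≠] (1 : ℂ), theta w y ≠ 0 := by
      have hreg : ∀ᶠ y in 𝓝 (1 : ℂ), thetaReg w y ≠ 0 :=
        (analyticAt_thetaReg hw1 one_ne_zero).continuousAt.eventually_ne (thetaReg_one_ne_zero hw1)
      filter_upwards [hreg.filter_mono nhdsWithin_le_nhds, self_mem_nhdsWithin] with y hy hy1
      rw [theta_eq_one_sub_mul hw1]
      exact mul_ne_zero (sub_ne_zero.mpr (Ne.symm hy1)) hy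
    have hlim := tendsto_const_mul_nhdsNE (zpow_ne_zero n hw) x
    rw [hn] at hlim
    filter_upwards [hlim.eventually near_one,
      (eventually_ne_nhds hx).filter_mono nhdsWithin_le_nhds] with s hs hs0
    rwa [ne_eq, theta_zpow_mul_eq_zero_iff hw hw1 hs0] at hs
  · exact ((analyticAt_theta hw1 hx).continuousAt.eventually_ne h).filter_mono nhdsWithin_le_nhds

lemma eventually_theta_mul_ne_zero (hw : w ≠ 0) (hw1 : ‖w‖ < 1) {b x : ℂ} (hb : b ≠ 0)
    (hx : x ≠ 0) : ∀ᶠ s in 𝓝[≠] x, theta w (b * s) ≠ 0 :=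
  (tendsto_const_mul_nhdsNE hb x).eventually
    (eventually_theta_ne_zero hw hw1 (mul_ne_zero hb hx))

end Theta

/-! ### Bilateral Lambert series -/

lemma summable_pow_sq_mul_pow {r s : ℝ} (hr0 : 0 ≤ r) (hr1 : r < 1) (hs : 0 ≤ s) :
    Summable fun n : ℕ ↦ r ^ (n ^ 2) * s ^ n := by
  have hlim : Tendsto (fun n : ℕ ↦ r ^ n * s) atTop (𝓝 0) := by
    simpa using (tendsto_pow_atTop_nhds_zero_of_lt_one hr0 hr1).mul_const s
  refine Summable.of_norm_bounded_eventually_nat (g := fun n ↦ (1 / 2 : ℝ) ^ n)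
    (summable_geometric_of_lt_one (by norm_num) (by norm_num)) ?_
  filter_upwards [hlim.eventually_le_const (by norm_num : (0 : ℝ) < 1 / 2)] with n hn
  rw [Real.norm_of_nonneg (by positivity), pow_two, pow_mul, ← mul_pow]
  gcongr

lemma summable_zpow_sq_mul_zpow {r s : ℝ} (hr0 : 0 ≤ r) (hr1 : r < 1) (hs : 0 ≤ s) :
    Summable fun m : ℤ ↦ r ^ (m ^ 2) * s ^ m := by
  refine Summable.of_nat_of_neg ((summable_pow_sq_mul_pow hr0 hr1 hs).congr fun n ↦ ?_)
    ((summable_pow_sq_mul_pow hr0 hr1 (inv_nonneg.mpr hs)).congr fun n ↦ ?_)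
  · norm_cast
  · rw [neg_sq, zpow_neg, ← inv_zpow]
    norm_cast

lemma exists_pos_forall_le_of_cofinite {ι : Type*} {s : Set ι} {a : ι → ℝ} {l : ℝ} (hl : 0 < l)
    (ha : ∀ i ∈ s, 0 < a i) (h : ∀ᶠ i in cofinite, l ≤ a i) : ∃ δ > 0, ∀ i ∈ s, δ ≤ a i := by
  rcases (s ∩ {i | ¬ l ≤ a i}).eq_empty_or_nonempty with hempty | hne
  · refine ⟨l, hl, fun i hi ↦ ?_⟩
    by_contra hlt
    exact hempty.subset ⟨hi, hlt⟩
  · obtain ⟨k, ⟨hks, hkl⟩, hk⟩ :=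
      Set.exists_min_image _ a ((eventually_cofinite.mp h).inter_of_right s) hne
    refine ⟨a k, ha k hks, fun i hi ↦ ?_⟩
    by_cases hil : l ≤ a i
    · exact (not_le.mp hkl).le.trans hil
    · exact hk i ⟨hi, hil⟩

/-- The term of index `m` of the bilateral Lambert series `lambert`. -/
noncomputable def lambertTerm (w x y : ℂ) (m : ℤ) : ℂ := w ^ (m ^ 2) * y ^ m / (1 - w ^ m * x)

/-- The bilateral Lambert series `∑_{m ∈ ℤ} w^{m²} y^m / (1 - w^m x)`. -/
noncomputable def lambert (w x y : ℂ) : ℂ := ∑' m : ℤ, lambertTerm w x y m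

/-- The bilateral Lambert series `lambert` without its term of index `0`, which carries the pole
at `x = 1`. -/
noncomputable def lambertReg (w x y : ℂ) : ℂ := ∑' m : ℤ, if m = 0 then 0 else lambertTerm w x y m

/-- The theta series `∑_{m ∈ ℤ} w^{m²} y^m`. -/
noncomputable def thetaSeries (w y : ℂ) : ℂ := ∑' m : ℤ, w ^ (m ^ 2) * y ^ m

section Lambert

variable {w x y : ℂ}

lemma summable_norm_thetaSeries (hw1 : ‖w‖ < 1) (y : ℂ) :
    Summable fun m : ℤ ↦ ‖w ^ (m ^ 2) * y ^ m‖ := by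
  simpa only [norm_mul, norm_zpow] using
    summable_zpow_sq_mul_zpow (norm_nonneg w) hw1 (norm_nonneg y)

-- The weights `1 + ‖wᵐ‖` make the bound stable under small perturbations of `x`.
lemma exists_pos_forall_mul_le_norm_one_sub (hw : w ≠ 0) (hw1 : ‖w‖ < 1) (hx : x ≠ 0)
    (h : ∀ m : ℤ, m ≠ 0 → w ^ m * x ≠ 1) :
    ∃ δ > 0, ∀ m : ℤ, m ≠ 0 → δ * (1 + ‖w ^ m‖) ≤ ‖1 - w ^ m * x‖ := by
  have hpow : Tendsto (fun n : ℕ ↦ w ^ n) atTop (𝓝 0) :=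
    tendsto_pow_atTop_nhds_zero_of_norm_lt_one hw1
  have hpos (m : ℤ) : 0 < 1 + ‖w ^ m‖ := by positivity
  have htop : Tendsto (fun n : ℕ ↦ ‖1 - w ^ n * x‖ / (1 + ‖w ^ n‖)) atTop (𝓝 1) := by
    simpa [Pi.div_def] using
      ((hpow.mul_const x).const_sub 1).norm.div (hpow.norm.const_add 1) (by simp)
  have hbot : Tendsto (fun n : ℕ ↦ ‖1 - (w ^ n)⁻¹ * x‖ / (1 + ‖(w ^ n)⁻¹‖)) atTop (𝓝 ‖x‖) := by
    have hlim : Tendsto (fun n : ℕ ↦ ‖w ^ n - x‖ / (‖w ^ n‖ + 1)) atTop (𝓝 ‖x‖) := by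
      simpa [Pi.div_def] using (hpow.sub_const x).norm.div (hpow.norm.add_const 1) (by simp)
    refine hlim.congr fun n ↦ ?_
    have hn : w ^ n ≠ 0 := pow_ne_zero n hw
    have : 0 < ‖w ^ n‖ := norm_pos_iff.mpr hn
    rw [show 1 - (w ^ n)⁻¹ * x = (w ^ n)⁻¹ * (w ^ n - x) by field_simp, norm_mul, norm_inv]
    field_simp
  have hx0 : 0 < ‖x‖ := norm_pos_iff.mpr hx
  set l := min (1 / 2) (‖x‖ / 2)
  have hcof : ∀ᶠ m : ℤ in cofinite, l ≤ ‖1 - w ^ m * x‖ / (1 + ‖w ^ m‖) := by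
    have htop' := htop.eventually_const_le ((min_le_left _ _).trans_lt one_half_lt_one : l < 1)
    have hbot' := hbot.eventually_const_le
      ((min_le_right _ _).trans_lt (half_lt_self hx0) : l < ‖x‖)
    rw [Int.cofinite_eq, ← map_neg_atTop, ← Nat.map_cast_int_atTop]
    refine eventually_sup.mpr ⟨?_, ?_⟩
    · simpa only [eventually_map, zpow_neg, zpow_natCast] using hbot'
    · simpa only [eventually_map, zpow_natCast] using htop'
  obtain ⟨δ, hδ, hle⟩ := exists_pos_forall_le_of_cofinite (s := {0}ᶜ) (by positivity : 0 < l)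
    (fun m hm ↦ div_pos (norm_pos_iff.mpr (sub_ne_zero.mpr (h m hm).symm)) (hpos m)) hcof
  exact ⟨δ, hδ, fun m hm ↦ (le_div_iff₀ (hpos m)).mp (hle m hm)⟩

lemma exists_ball_forall_le_norm_one_sub (hw : w ≠ 0) (hw1 : ‖w‖ < 1) (hx : x ≠ 0)
    (h : ∀ m : ℤ, m ≠ 0 → w ^ m * x ≠ 1) :
    ∃ δ > 0, ∀ m : ℤ, m ≠ 0 → ∀ z ∈ Metric.ball x δ, δ ≤ ‖1 - w ^ m * z‖ := by
  obtain ⟨δ, hδ, hle⟩ := exists_pos_forall_mul_le_norm_one_sub hw hw1 hx h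
  refine ⟨δ / 2, half_pos hδ, fun m hm z hz ↦ ?_⟩
  have hzx : ‖z - x‖ ≤ δ / 2 := (mem_ball_iff_norm.mp hz).le
  have htri : ‖1 - w ^ m * x‖ ≤ ‖1 - w ^ m * z‖ + ‖w ^ m‖ * ‖z - x‖ := by
    rw [← norm_mul]
    exact (norm_add_le _ _).trans_eq' (by ring_nf)
  nlinarith [hle m hm, norm_nonneg (w ^ m)]

lemma exists_ball_summable_bound_lambertTerm (hw : w ≠ 0) (hw1 : ‖w‖ < 1) (hx : x ≠ 0) (y : ℂ)
    (h : ∀ m : ℤ, m ≠ 0 → w ^ m * x ≠ 1) :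
    ∃ δ > 0, (∀ m : ℤ, m ≠ 0 → ∀ z ∈ Metric.ball x δ, 1 - w ^ m * z ≠ 0) ∧
      ∃ u : ℤ → ℝ, Summable u ∧ ∀ m : ℤ, ∀ z ∈ Metric.ball x δ,
        ‖if m = 0 then 0 else lambertTerm w z y m‖ ≤ u m := by
  obtain ⟨δ, hδ, hle⟩ := exists_ball_forall_le_norm_one_sub hw hw1 hx h
  refine ⟨δ, hδ, fun m hm z hz ↦ norm_pos_iff.mp (hδ.trans_le (hle m hm z hz)),
    fun m ↦ ‖w ^ (m ^ 2) * y ^ m‖ / δ, (summable_norm_thetaSeries hw1 y).div_const δ,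
    fun m z hz ↦ ?_⟩
  split_ifs with hm
  · rw [norm_zero]
    positivity
  · rw [lambertTerm, norm_div]
    exact div_le_div_of_nonneg_left (norm_nonneg _) hδ (hle m hm z hz)

lemma summable_lambertReg (hw : w ≠ 0) (hw1 : ‖w‖ < 1) (hx : x ≠ 0) (y : ℂ)
    (h : ∀ m : ℤ, m ≠ 0 → w ^ m * x ≠ 1) :
    Summable fun m : ℤ ↦ if m = 0 then 0 else lambertTerm w x y m := by
  obtain ⟨δ, hδ, -, u, hu, hle⟩ := exists_ball_summable_bound_lambertTerm hw hw1 hx y h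
  exact hu.of_norm_bounded fun m ↦ hle m x (Metric.mem_ball_self hδ)

lemma analyticAt_lambertReg (hw : w ≠ 0) (hw1 : ‖w‖ < 1) (hx : x ≠ 0) (y : ℂ)
    (h : ∀ m : ℤ, m ≠ 0 → w ^ m * x ≠ 1) : AnalyticAt ℂ (fun x ↦ lambertReg w x y) x := by
  obtain ⟨δ, hδ, hne, u, hu, hle⟩ := exists_ball_summable_bound_lambertTerm hw hw1 hx y h
  refine (Complex.differentiableOn_tsum_of_summable_norm hu (fun m ↦ ?_) Metric.isOpen_ball
    hle).analyticAt (Metric.isOpen_ball.mem_nhds (Metric.mem_ball_self hδ))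
  split_ifs with hm
  · fun_prop
  · intro z hz
    have := hne m hm z hz
    unfold lambertTerm
    fun_prop (disch := assumption)

lemma summable_lambertTerm (hw : w ≠ 0) (hw1 : ‖w‖ < 1) (hx : x ≠ 0) (y : ℂ)
    (h : ∀ m : ℤ, m ≠ 0 → w ^ m * x ≠ 1) : Summable (lambertTerm w x y) := by
  refine (summable_lambertReg hw hw1 hx y h).congr_cofinite ?_
  filter_upwards [(Set.finite_singleton (0 : ℤ)).compl_mem_cofinite] with m hm
  exact if_neg hm

lemma lambert_eq_add_lambertReg (hw : w ≠ 0) (hw1 : ‖w‖ < 1) (hx : x ≠ 0) (y : ℂ)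
    (h : ∀ m : ℤ, m ≠ 0 → w ^ m * x ≠ 1) :
    lambert w x y = 1 / (1 - x) + lambertReg w x y := by
  rw [lambert, (summable_lambertTerm hw hw1 hx y h).tsum_eq_add_tsum_ite 0]
  simp [lambertTerm, lambertReg]

lemma zpow_mul_ne_one_of_theta_ne_zero (hw : w ≠ 0) (hw1 : ‖w‖ < 1) (h : theta w x ≠ 0) (m : ℤ) :
    w ^ m * x ≠ 1 := by
  intro hm
  have hx : x ≠ 0 := by
    rintro rfl
    simp at hm
  exact h ((theta_eq_zero_iff hw hw1 hx).mpr ⟨m, hm⟩)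

lemma analyticAt_lambert (hw : w ≠ 0) (hw1 : ‖w‖ < 1) (hx : x ≠ 0) (y : ℂ)
    (h : theta w x ≠ 0) : AnalyticAt ℂ (fun x ↦ lambert w x y) x := by
  have hne := zpow_mul_ne_one_of_theta_ne_zero hw hw1 h
  have hsum : AnalyticAt ℂ (fun x ↦ 1 / (1 - x) + lambertReg w x y) x := by
    have : 1 - x ≠ 0 := sub_ne_zero.mpr (by simpa using (hne 0).symm)
    exact AnalyticAt.fun_add (by fun_prop (disch := assumption))
      (analyticAt_lambertReg hw hw1 hx y fun m _ ↦ hne m)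
  refine hsum.congr ?_
  filter_upwards [(analyticAt_theta hw1 hx).continuousAt.eventually_ne h, eventually_ne_nhds hx]
    with z hz hz0
  exact (lambert_eq_add_lambertReg hw hw1 hz0 y
    fun m _ ↦ zpow_mul_ne_one_of_theta_ne_zero hw hw1 hz m).symm

-- `w^{(m-1)²} = w^{m²} w / w^{2m}`, and `1 / (w^{2m} (1 - w^m x))` has the partial fraction
-- expansion `x² / (1 - w^m x) + x / w^m + 1 / w^{2m}`.
lemma lambertTerm_nome_mul_sub_one (hw : w ≠ 0) (hy : y ≠ 0) {m : ℤ} (h : w ^ m * x ≠ 1) :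
    lambertTerm w (w * x) y (m - 1) = w / y * x ^ 2 * lambertTerm w x y m +
      w ^ ((m - 1) ^ 2) * y ^ (m - 1) + x * (w / y) * (w ^ (m ^ 2) * (y / w) ^ m) := by
  have hden : 1 - w ^ m * x ≠ 0 := sub_ne_zero.mpr h.symm
  have hpole : w ^ (m - 1) * (w * x) = w ^ m * x := by
    rw [zpow_sub_one₀ hw]
    field_simp
  have hsq : w ^ ((m - 1) ^ 2) = w ^ (m ^ 2) * w / (w ^ m) ^ 2 := by
    rw [show (m - 1) ^ 2 = m ^ 2 + 1 - (m + m) by ring, zpow_sub₀ hw, zpow_add₀ hw m m,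
      zpow_add₀ hw, zpow_one, pow_two (w ^ m)]
  have hwm : w ^ m ≠ 0 := zpow_ne_zero m hw
  have hym : y ^ m ≠ 0 := zpow_ne_zero m hy
  rw [lambertTerm, lambertTerm, hpole, hsq, zpow_sub_one₀ hy, div_zpow]
  field_simp
  ring

lemma lambert_nome_mul (hw : w ≠ 0) (hw1 : ‖w‖ < 1) (hx : x ≠ 0) (hy : y ≠ 0)
    (h : theta w x ≠ 0) :
    lambert w (w * x) y = w / y * x ^ 2 * lambert w x y + thetaSeries w y +
      x * (w / y * thetaSeries w (y / w)) := by
  have hne := zpow_mul_ne_one_of_theta_ne_zero hw hw1 h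
  have hlam := (summable_lambertTerm hw hw1 hx y fun m _ ↦ hne m).mul_left (w / y * x ^ 2)
  have hshift : Summable fun m : ℤ ↦ w ^ ((m - 1) ^ 2) * y ^ (m - 1) :=
    (summable_norm_thetaSeries hw1 y).of_norm.comp_injective (sub_left_injective (b := (1 : ℤ)))
  have htheta := (summable_norm_thetaSeries hw1 (y / w)).of_norm.mul_left (x * (w / y))
  have hshift_eq : ∑' m : ℤ, w ^ ((m - 1) ^ 2) * y ^ (m - 1) = thetaSeries w y :=
    (Equiv.subRight (1 : ℤ)).tsum_eq fun m ↦ w ^ (m ^ 2) * y ^ m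
  calc lambert w (w * x) y = ∑' m : ℤ, lambertTerm w (w * x) y (m - 1) :=
        ((Equiv.subRight (1 : ℤ)).tsum_eq (lambertTerm w (w * x) y)).symm
    _ = ∑' m : ℤ, (w / y * x ^ 2 * lambertTerm w x y m + w ^ ((m - 1) ^ 2) * y ^ (m - 1) +
          x * (w / y) * (w ^ (m ^ 2) * (y / w) ^ m)) :=
        tsum_congr fun m ↦ lambertTerm_nome_mul_sub_one hw hy (hne m)
    _ = _ := by
      rw [(hlam.add hshift).tsum_add htheta, hlam.tsum_add hshift, tsum_mul_left, tsum_mul_left,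
        hshift_eq, mul_assoc x, lambert, thetaSeries, thetaSeries]

end Lambert

/-! ### Partial fractions of theta quotients -/

lemma analyticAt_dslope {g : ℂ → ℂ} {t : ℂ} (hg : AnalyticAt ℂ g t) :
    AnalyticAt ℂ (dslope g t) t := by
  obtain ⟨p, hp⟩ := hg
  exact ⟨_, hp.has_fpower_series_dslope_fslope⟩

lemma zpow_ne_one_of_norm_lt_one {w : ℂ} (hw1 : ‖w‖ < 1) {m : ℤ} (hm : m ≠ 0) : w ^ m ≠ 1 := by
  intro h
  have := congrArg norm h
  rw [norm_zpow, norm_one, zpow_eq_one_iff_right₀ (norm_nonneg _) hw1.ne] at this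
  exact hm this

lemma deriv_one_eq_zero_of_inv_invariant {f : ℂ → ℂ} (hf : DifferentiableAt ℂ f 1)
    (h : ∀ᶠ x in 𝓝 1, f x⁻¹ = f x) : deriv f 1 = 0 := by
  have hinv : HasDerivAt (fun x : ℂ ↦ x⁻¹) (-1) 1 := by
    simpa using hasDerivAt_inv (one_ne_zero : (1 : ℂ) ≠ 0)
  have hcomp : HasDerivAt (fun x ↦ f x⁻¹) (deriv f 1 * -1) 1 :=
    HasDerivAt.comp (h₂ := f) (h := fun x : ℂ ↦ x⁻¹) 1 (by simpa using hf.hasDerivAt) hinv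
  linear_combination hf.hasDerivAt.unique (hcomp.congr_of_eventuallyEq (h.mono fun _ ↦ Eq.symm)) / 2

/-- The logarithmic derivative `x θ'(x) / θ(x)` of `theta` along the multiplicative group. -/
noncomputable def thetaLogDeriv (w x : ℂ) : ℂ := x * logDeriv (theta w) x

section PartialFractions

variable {w : ℂ} {ι : Type*} [Fintype ι]

/-- The theta quotient `(w; w)² θ(at) / ∏ᵢ θ(bᵢt)`. -/
noncomputable def thetaQuot (w a : ℂ) (b : ι → ℂ) (t : ℂ) : ℂ :=
  thetaReg w 1 * theta w (a * t) / ∏ i, theta w (b i * t)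

/-- The product of `thetaQuot` with `1 - bᵢt`, which is regular at `t = 1 / bᵢ`. -/
noncomputable def thetaQuotReg [DecidableEq ι] (w a : ℂ) (b : ι → ℂ) (i : ι) (t : ℂ) : ℂ :=
  thetaReg w 1 * theta w (a * t) / (thetaReg w (b i * t) * ∏ j ∈ {i}ᶜ, theta w (b j * t))

/-- The residue of `thetaQuot` at `t = 1 / bᵢ`, normalised as the coefficient of
`1 / (1 - bᵢt)`. -/
noncomputable def thetaRes [DecidableEq ι] (w a : ℂ) (b : ι → ℂ) (i : ι) : ℂ :=
  theta w (a / b i) / ∏ j ∈ {i}ᶜ, theta w (b j / b i)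

lemma analyticAt_thetaReg_mul (hw1 : ‖w‖ < 1) {b t : ℂ} (hb : b ≠ 0) (ht : t ≠ 0) :
    AnalyticAt ℂ (fun t ↦ thetaReg w (b * t)) t :=
  (analyticAt_thetaReg hw1 (mul_ne_zero hb ht)).fun_comp (f := fun t ↦ b * t) (by fun_prop)

lemma analyticAt_lambert_mul (hw : w ≠ 0) (hw1 : ‖w‖ < 1) {b t : ℂ} (hb : b ≠ 0) (ht : t ≠ 0)
    (y : ℂ) (h : theta w (b * t) ≠ 0) : AnalyticAt ℂ (fun t ↦ lambert w (b * t) y) t :=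
  (analyticAt_lambert hw hw1 (mul_ne_zero hb ht) y h).fun_comp (g := fun x ↦ lambert w x y)
    (f := fun t ↦ b * t) (by fun_prop)

lemma analyticAt_thetaQuot (hw1 : ‖w‖ < 1) {a t : ℂ} {b : ι → ℂ} (ha : a ≠ 0) (hb : ∀ i, b i ≠ 0)
    (ht : t ≠ 0) (h : ∀ i, theta w (b i * t) ≠ 0) : AnalyticAt ℂ (thetaQuot w a b) t :=
  (analyticAt_const.fun_mul (analyticAt_theta_mul hw1 ha ht)).fun_div
    (Finset.analyticAt_fun_prod _ fun i _ ↦ analyticAt_theta_mul hw1 (hb i) ht)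
    (Finset.prod_ne_zero_iff.mpr fun i _ ↦ h i)

section Residue

variable [DecidableEq ι] {a : ℂ} {b : ι → ℂ} {i : ι}

lemma thetaQuot_eq_div (hw1 : ‖w‖ < 1) (a : ℂ) (b : ι → ℂ) (i : ι) (t : ℂ) :
    thetaQuot w a b t = thetaQuotReg w a b i t / (1 - b i * t) := by
  rw [thetaQuot, thetaQuotReg, Fintype.prod_eq_mul_prod_compl i, theta_eq_one_sub_mul hw1 (b i * t),
    div_div]
  ring

lemma thetaQuotReg_inv (hw1 : ‖w‖ < 1) (hb : b i ≠ 0) :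
    thetaQuotReg w a b i (b i)⁻¹ = thetaRes w a b i := by
  simp only [thetaQuotReg, thetaRes, mul_inv_cancel₀ hb, ← div_eq_mul_inv,
    mul_div_mul_left _ _ (thetaReg_one_ne_zero hw1)]

lemma analyticAt_thetaQuotReg (hw1 : ‖w‖ < 1) (ha : a ≠ 0) (hb : ∀ j, b j ≠ 0)
    (hne : ∀ j ≠ i, theta w (b j / b i) ≠ 0) : AnalyticAt ℂ (thetaQuotReg w a b i) (b i)⁻¹ := by
  have hbi : (b i)⁻¹ ≠ 0 := inv_ne_zero (hb i)
  refine (analyticAt_const.fun_mul (analyticAt_theta_mul hw1 ha hbi)).fun_div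
    ((analyticAt_thetaReg_mul hw1 (hb i) hbi).fun_mul
      (Finset.analyticAt_fun_prod _ fun j _ ↦ analyticAt_theta_mul hw1 (hb j) hbi))
    (mul_ne_zero ?_ (Finset.prod_ne_zero_iff.mpr fun j hj ↦ ?_))
  · rw [mul_inv_cancel₀ (hb i)]
    exact thetaReg_one_ne_zero hw1
  · rw [← div_eq_mul_inv]
    exact hne j (by simpa using hj)

/-- The regular function extending `thetaQuot - thetaRes * lambert` to its pole `1 / bᵢ`. -/
noncomputable def thetaQuotRemainder (w a : ℂ) (b : ι → ℂ) (i : ι) (y t : ℂ) : ℂ :=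
  -(b i)⁻¹ * dslope (thetaQuotReg w a b i) (b i)⁻¹ t - thetaRes w a b i * lambertReg w (b i * t) y

lemma analyticAt_thetaQuotRemainder (hw : w ≠ 0) (hw1 : ‖w‖ < 1) (ha : a ≠ 0) (hb : ∀ j, b j ≠ 0)
    (hne : ∀ j ≠ i, theta w (b j / b i) ≠ 0) (y : ℂ) :
    AnalyticAt ℂ (thetaQuotRemainder w a b i y) (b i)⁻¹ := by
  refine (analyticAt_const.fun_mul (analyticAt_dslope
    (analyticAt_thetaQuotReg hw1 ha hb hne))).fun_sub (analyticAt_const.fun_mul ?_)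
  refine AnalyticAt.fun_comp (g := fun x ↦ lambertReg w x y) (f := fun t ↦ b i * t) ?_
    (by fun_prop)
  rw [mul_inv_cancel₀ (hb i)]
  exact analyticAt_lambertReg hw hw1 one_ne_zero y fun m hm ↦ by
    simpa using zpow_ne_one_of_norm_lt_one hw1 hm

lemma thetaQuotRemainder_inv (hb : b i ≠ 0) (y : ℂ) :
    thetaQuotRemainder w a b i y (b i)⁻¹ =
      -(b i)⁻¹ * deriv (thetaQuotReg w a b i) (b i)⁻¹ - thetaRes w a b i * lambertReg w 1 y := by
  rw [thetaQuotRemainder, dslope_same, mul_inv_cancel₀ hb]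

lemma thetaQuot_sub_lambert_eventuallyEq (hw : w ≠ 0) (hw1 : ‖w‖ < 1) (hb : b i ≠ 0) (y : ℂ) :
    (fun t ↦ thetaQuot w a b t - thetaRes w a b i * lambert w (b i * t) y)
      =ᶠ[𝓝[≠] (b i)⁻¹] thetaQuotRemainder w a b i y := by
  have hbi : (b i)⁻¹ ≠ 0 := inv_ne_zero hb
  filter_upwards [eventually_theta_mul_ne_zero hw hw1 hb hbi, self_mem_nhdsWithin,
    (eventually_ne_nhds hbi).filter_mono nhdsWithin_le_nhds] with t hθ ht ht0
  have hsub : t - (b i)⁻¹ ≠ 0 := sub_ne_zero.mpr ht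
  have hone : 1 - b i * t = -b i * (t - (b i)⁻¹) := by
    field_simp
    ring
  have hone0 : 1 - b i * t ≠ 0 := by
    rw [hone]
    exact mul_ne_zero (neg_ne_zero.mpr hb) hsub
  have hslope := sub_smul_dslope (thetaQuotReg w a b i) (b i)⁻¹ t
  rw [thetaQuotReg_inv hw1 hb, smul_eq_mul] at hslope
  have hquot : -(b i)⁻¹ * dslope (thetaQuotReg w a b i) (b i)⁻¹ t =
      (thetaQuotReg w a b i t - thetaRes w a b i) / (1 - b i * t) := by
    rw [eq_div_iff hone0, ← hslope, hone]
    field_simp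
  rw [thetaQuotRemainder, hquot, thetaQuot_eq_div hw1 a b i, lambert_eq_add_lambertReg hw hw1
    (mul_ne_zero hb ht0) y fun m _ ↦ zpow_mul_ne_one_of_theta_ne_zero hw hw1 hθ m]
  ring

lemma deriv_thetaReg_one (hw1 : ‖w‖ < 1) : deriv (thetaReg w) 1 = 0 :=
  deriv_one_eq_zero_of_inv_invariant (analyticAt_thetaReg hw1 one_ne_zero).differentiableAt
    (Eventually.of_forall thetaReg_inv)

lemma logDeriv_comp_const_mul {f : ℂ → ℂ} {b t : ℂ} (hf : DifferentiableAt ℂ f (b * t)) :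
    logDeriv (fun t ↦ f (b * t)) t = logDeriv f (b * t) * b := by
  have := logDeriv_comp (g := fun t ↦ b * t) hf (by fun_prop)
  simpa [Function.comp_def] using this

lemma inv_mul_logDeriv_theta_mul (hw1 : ‖w‖ < 1) {b c : ℂ} (hb : b ≠ 0) (hc : c ≠ 0) :
    b⁻¹ * logDeriv (fun t ↦ theta w (c * t)) b⁻¹ = thetaLogDeriv w (c / b) := by
  rw [logDeriv_comp_const_mul
    (analyticAt_theta hw1 (mul_ne_zero hc (inv_ne_zero hb))).differentiableAt, thetaLogDeriv,
    ← div_eq_mul_inv]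
  ring

lemma logDeriv_thetaQuotReg (hw1 : ‖w‖ < 1) {t : ℂ} (ha : a ≠ 0) (hb : ∀ j, b j ≠ 0) (ht : t ≠ 0)
    (hat : theta w (a * t) ≠ 0) (hreg : thetaReg w (b i * t) ≠ 0)
    (hne : ∀ j ≠ i, theta w (b j * t) ≠ 0) :
    logDeriv (thetaQuotReg w a b i) t = logDeriv (fun t ↦ theta w (a * t)) t -
      (logDeriv (fun t ↦ thetaReg w (b i * t)) t +
        ∑ j ∈ {i}ᶜ, logDeriv (fun t ↦ theta w (b j * t)) t) := by
  have hone := thetaReg_one_ne_zero hw1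
  have hne' : ∀ j ∈ ({i}ᶜ : Finset ι), theta w (b j * t) ≠ 0 := fun j hj ↦
    hne j (by simpa using hj)
  have hprod := Finset.prod_ne_zero_iff.mpr hne'
  have hdreg := (analyticAt_thetaReg_mul hw1 (hb i) ht).differentiableAt
  have hdtheta {c : ℂ} (hc : c ≠ 0) := (analyticAt_theta_mul hw1 hc ht).differentiableAt
  have hdprod : DifferentiableAt ℂ (fun t ↦ ∏ j ∈ {i}ᶜ, theta w (b j * t)) t :=
    DifferentiableAt.fun_finsetProd fun j _ ↦ hdtheta (hb j)
  calc logDeriv (thetaQuotReg w a b i) t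
      = logDeriv (fun t ↦ thetaReg w 1 * theta w (a * t)) t -
          logDeriv (fun t ↦ thetaReg w (b i * t) * ∏ j ∈ {i}ᶜ, theta w (b j * t)) t :=
        logDeriv_div t (mul_ne_zero hone hat) (mul_ne_zero hreg hprod)
          ((hdtheta ha).const_mul _) (hdreg.fun_mul hdprod)
    _ = _ := by
      rw [logDeriv_const_mul t _ hone, logDeriv_mul t hreg hprod hdreg hdprod,
        logDeriv_prod hne' fun j _ ↦ hdtheta (hb j)]

lemma inv_mul_deriv_thetaQuotReg (hw1 : ‖w‖ < 1) (ha : a ≠ 0) (hb : ∀ j, b j ≠ 0)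
    (hai : theta w (a / b i) ≠ 0) (hne : ∀ j ≠ i, theta w (b j / b i) ≠ 0) :
    (b i)⁻¹ * deriv (thetaQuotReg w a b i) (b i)⁻¹ = thetaRes w a b i *
      (thetaLogDeriv w (a / b i) - ∑ j ∈ {i}ᶜ, thetaLogDeriv w (b j / b i)) := by
  have hres : thetaRes w a b i ≠ 0 := div_ne_zero hai
    (Finset.prod_ne_zero_iff.mpr fun j hj ↦ hne j (by simpa using hj))
  have hreg : logDeriv (fun t ↦ thetaReg w (b i * t)) (b i)⁻¹ = 0 := by
    rw [logDeriv_comp_const_mul, mul_inv_cancel₀ (hb i), logDeriv_apply, deriv_thetaReg_one hw1,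
      zero_div, zero_mul]
    rw [mul_inv_cancel₀ (hb i)]
    exact (analyticAt_thetaReg hw1 one_ne_zero).differentiableAt
  have hlog := logDeriv_thetaQuotReg (a := a) (b := b) (i := i) hw1 ha hb (inv_ne_zero (hb i))
    (by rwa [← div_eq_mul_inv])
    (by rw [mul_inv_cancel₀ (hb i)]; exact thetaReg_one_ne_zero hw1)
    fun j hj ↦ by rw [← div_eq_mul_inv]; exact hne j hj
  rw [hreg, zero_add, logDeriv_apply, thetaQuotReg_inv hw1 (hb i), div_eq_iff hres] at hlog
  rw [hlog, ← mul_assoc, mul_sub, Finset.mul_sum, inv_mul_logDeriv_theta_mul hw1 (hb i) ha,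
    Finset.sum_congr rfl fun j _ ↦ inv_mul_logDeriv_theta_mul hw1 (hb i) (hb j), mul_comm]

end Residue

/-- The second argument of the Lambert series with pole `1 / bᵢ` in the partial fraction expansion
of `thetaQuot`. It is chosen to give `lambert` the quasi-periodicity of a quotient of one theta
function by three. -/
noncomputable def lambertArg (w a : ℂ) (b : Fin 3 → ℂ) (i : Fin 3) : ℂ :=
  w * b i ^ 2 * a / ∏ j, b j

/-- The difference between `thetaQuot` and its partial fraction expansion. -/
noncomputable def partialFractionDefect (w a : ℂ) (b : Fin 3 → ℂ) (t : ℂ) : ℂ :=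
  thetaQuot w a b t - ∑ i, thetaRes w a b i * lambert w (b i * t) (lambertArg w a b i)

variable {a : ℂ} {b : Fin 3 → ℂ}

lemma lambertArg_ne_zero (hw : w ≠ 0) (ha : a ≠ 0) (hb : ∀ i, b i ≠ 0) (i : Fin 3) :
    lambertArg w a b i ≠ 0 :=
  div_ne_zero (mul_ne_zero (mul_ne_zero hw (pow_ne_zero 2 (hb i))) ha)
    (Finset.prod_ne_zero_iff.mpr fun j _ ↦ hb j)

lemma thetaQuot_nome_mul (hw : w ≠ 0) (hw1 : ‖w‖ < 1) (ha : a ≠ 0) (hb : ∀ i, b i ≠ 0) {t : ℂ}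
    (ht : t ≠ 0) :
    thetaQuot w a b (w * t) = (∏ i, b i) / a * t ^ 2 * thetaQuot w a b t := by
  have h (c : ℂ) (hc : c ≠ 0) : theta w (c * (w * t)) = -(theta w (c * t) / (c * t)) := by
    rw [mul_left_comm, theta_nome_mul hw hw1 (mul_ne_zero hc ht)]
  simp only [thetaQuot, h a ha, h _ (hb _), Fin.prod_univ_three]
  have := hb 0
  have := hb 1
  have := hb 2
  field_simp

lemma lambert_lambertArg_nome_mul (hw : w ≠ 0) (hw1 : ‖w‖ < 1) (ha : a ≠ 0) (hb : ∀ i, b i ≠ 0)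
    {t : ℂ} (ht : t ≠ 0) {i : Fin 3} (h : theta w (b i * t) ≠ 0) :
    lambert w (b i * (w * t)) (lambertArg w a b i) =
      (∏ j, b j) / a * t ^ 2 * lambert w (b i * t) (lambertArg w a b i) +
        thetaSeries w (lambertArg w a b i) +
        t * (b i * (w / lambertArg w a b i * thetaSeries w (lambertArg w a b i / w))) := by
  have hκ : w / lambertArg w a b i * (b i * t) ^ 2 = (∏ j, b j) / a * t ^ 2 := by
    have := hb i
    have : ∏ j, b j ≠ 0 := Finset.prod_ne_zero_iff.mpr fun j _ ↦ hb j
    rw [lambertArg]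
    field_simp
  rw [mul_left_comm, lambert_nome_mul hw hw1 (mul_ne_zero (hb i) ht)
    (lambertArg_ne_zero hw ha hb i) h, hκ]
  ring

lemma eventually_forall_theta_mul_ne_zero (hw : w ≠ 0) (hw1 : ‖w‖ < 1) (hb : ∀ i, b i ≠ 0) {t : ℂ}
    (ht : t ≠ 0) : ∀ᶠ s in 𝓝[≠] t, ∀ i, theta w (b i * s) ≠ 0 :=
  eventually_all.mpr fun i ↦ eventually_theta_mul_ne_zero hw hw1 (hb i) ht

lemma partialFractionDefect_nome_mul (hw : w ≠ 0) (hw1 : ‖w‖ < 1) (ha : a ≠ 0)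
    (hb : ∀ i, b i ≠ 0) {t : ℂ} (ht : t ≠ 0) (h : ∀ i, theta w (b i * t) ≠ 0) :
    partialFractionDefect w a b (w * t) =
      (∏ i, b i) / a * t ^ 2 * partialFractionDefect w a b t +
        (-(∑ i, thetaRes w a b i * thetaSeries w (lambertArg w a b i)) +
          -(∑ i, thetaRes w a b i * (b i * (w / lambertArg w a b i *
            thetaSeries w (lambertArg w a b i / w)))) * t) := by
  simp only [partialFractionDefect, thetaQuot_nome_mul hw hw1 ha hb ht,
    lambert_lambertArg_nome_mul hw hw1 ha hb ht (h _), Fin.sum_univ_three]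
  ring

lemma analyticAt_partialFractionDefect (hw : w ≠ 0) (hw1 : ‖w‖ < 1) (ha : a ≠ 0)
    (hb : ∀ i, b i ≠ 0) {t : ℂ} (ht : t ≠ 0) (h : ∀ i, theta w (b i * t) ≠ 0) :
    AnalyticAt ℂ (partialFractionDefect w a b) t :=
  (analyticAt_thetaQuot hw1 ha hb ht h).fun_sub (Finset.analyticAt_fun_sum _ fun i _ ↦
    analyticAt_const.fun_mul (analyticAt_lambert_mul hw hw1 (hb i) ht _ (h i)))

lemma exists_analyticAt_partialFractionDefect_inv (hw : w ≠ 0) (hw1 : ‖w‖ < 1) (ha : a ≠ 0)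
    (hb : ∀ i, b i ≠ 0) {i : Fin 3} (hne : ∀ j ≠ i, theta w (b j / b i) ≠ 0) :
    ∃ g : ℂ → ℂ, AnalyticAt ℂ g (b i)⁻¹ ∧ partialFractionDefect w a b =ᶠ[𝓝[≠] (b i)⁻¹] g ∧
      g (b i)⁻¹ = -(b i)⁻¹ * deriv (thetaQuotReg w a b i) (b i)⁻¹ -
        thetaRes w a b i * lambertReg w 1 (lambertArg w a b i) -
        ∑ j ∈ {i}ᶜ, thetaRes w a b j * lambert w (b j / b i) (lambertArg w a b j) := by
  refine ⟨fun t ↦ thetaQuotRemainder w a b i (lambertArg w a b i) t -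
    ∑ j ∈ {i}ᶜ, thetaRes w a b j * lambert w (b j * t) (lambertArg w a b j),
    (analyticAt_thetaQuotRemainder hw hw1 ha hb hne _).fun_sub
      (Finset.analyticAt_fun_sum _ fun j hj ↦ analyticAt_const.fun_mul
        (analyticAt_lambert_mul hw hw1 (hb j) (inv_ne_zero (hb i)) _ ?_)), ?_, ?_⟩
  · rw [← div_eq_mul_inv]
    exact hne j (by simpa using hj)
  · filter_upwards [thetaQuot_sub_lambert_eventuallyEq (a := a) hw hw1 (hb i) (lambertArg w a b i)]
      with t ht
    rw [← ht, partialFractionDefect, Fintype.sum_eq_add_sum_compl i, sub_add_eq_sub_sub]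
  · simp only [thetaQuotRemainder_inv (hb i), ← div_eq_mul_inv]

lemma hasRemovableSingularityAt_partialFractionDefect (hw : w ≠ 0) (hw1 : ‖w‖ < 1) (ha : a ≠ 0)
    (hb : ∀ i, b i ≠ 0) (hne : Pairwise fun i j ↦ theta w (b j / b i) ≠ 0) {t : ℂ} (ht : t ≠ 0) :
    HasRemovableSingularityAt (partialFractionDefect w a b) t := by
  by_cases h : ∀ i, theta w (b i * t) ≠ 0
  · exact hasRemovableSingularityAt_of_analyticAt
      (analyticAt_partialFractionDefect hw hw1 ha hb ht h)
  push Not at h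
  obtain ⟨i, hi⟩ := h
  obtain ⟨n, hn⟩ := (theta_eq_zero_iff hw hw1 (mul_ne_zero (hb i) ht)).mp hi
  have hpole : HasRemovableSingularityAt (partialFractionDefect w a b) (b i)⁻¹ := by
    obtain ⟨g, hg, heq, -⟩ := exists_analyticAt_partialFractionDefect_inv (i := i) hw hw1 ha hb
      fun j hj ↦ hne hj.symm
    exact ⟨g, hg, heq⟩
  have htn : w ^ (-n) * (b i)⁻¹ = t := by
    have := zpow_ne_zero n hw
    have := hb i
    rw [zpow_neg]
    field_simp
    rw [← hn]
    ring
  have hκ : (∏ j, b j) / a ≠ 0 := div_ne_zero (Finset.prod_ne_zero_iff.mpr fun j _ ↦ hb j) ha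
  set α := -(∑ i, thetaRes w a b i * thetaSeries w (lambertArg w a b i))
  set β := -(∑ i, thetaRes w a b i * (b i * (w / lambertArg w a b i *
    thetaSeries w (lambertArg w a b i / w))))
  rw [← htn]
  refine HasRemovableSingularityAt.zpow_mul hw (m := fun s ↦ (∏ j, b j) / a * s ^ 2)
    (ρ := fun s ↦ α + β * s) (fun s _ ↦ by fun_prop)
    (fun s hs ↦ mul_ne_zero hκ (pow_ne_zero 2 hs)) (fun s _ ↦ by fun_prop) (fun s hs ↦ ?_)
    (inv_ne_zero (hb i)) hpole (-n)
  filter_upwards [eventually_forall_theta_mul_ne_zero hw hw1 hb hs,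
    (eventually_ne_nhds hs).filter_mono nhdsWithin_le_nhds] with z hz hz0
  exact partialFractionDefect_nome_mul hw hw1 ha hb hz0 hz

lemma partialFractionDefect_eq_zero (hw : w ≠ 0) (hw1 : ‖w‖ < 1) (ha : a ≠ 0) (hb : ∀ i, b i ≠ 0)
    (hne : Pairwise fun i j ↦ theta w (b j / b i) ≠ 0) :
    (∀ t ≠ 0, ∀ᶠ s in 𝓝[≠] t, partialFractionDefect w a b s = 0) ∧
      ∑ i, thetaRes w a b i * thetaSeries w (lambertArg w a b i) = 0 := by
  have hκ : (∏ i, b i) / a ≠ 0 := div_ne_zero (Finset.prod_ne_zero_iff.mpr fun i _ ↦ hb i) ha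
  have h := eventually_eq_zero_of_mul_quasiperiodic hw hw1 hκ
    (fun t ht ↦ hasRemovableSingularityAt_partialFractionDefect hw hw1 ha hb hne ht) fun t ht ↦ by
      filter_upwards [eventually_forall_theta_mul_ne_zero hw hw1 hb ht,
        (eventually_ne_nhds ht).filter_mono nhdsWithin_le_nhds] with s hs hs0
      exact partialFractionDefect_nome_mul hw hw1 ha hb hs0 hs
  exact h.imp_right neg_eq_zero.mp

theorem sum_thetaRes_mul_lambert (hw : w ≠ 0) (hw1 : ‖w‖ < 1) (ha : a ≠ 0) (hb : ∀ i, b i ≠ 0)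
    (hne : Pairwise fun i j ↦ theta w (b j / b i) ≠ 0) {t : ℂ} (ht : t ≠ 0)
    (h : ∀ i, theta w (b i * t) ≠ 0) :
    ∑ i, thetaRes w a b i * lambert w (b i * t) (lambertArg w a b i) = thetaQuot w a b t := by
  have hzero : partialFractionDefect w a b t = 0 := eq_of_eventuallyEq_nhdsNE
    (analyticAt_partialFractionDefect hw hw1 ha hb ht h).continuousAt continuousAt_const
    ((partialFractionDefect_eq_zero hw hw1 ha hb hne).1 t ht)
  exact (sub_eq_zero.mp hzero).symm

theorem sum_thetaRes_mul_lambert_at_pole (hw : w ≠ 0) (hw1 : ‖w‖ < 1) (ha : a ≠ 0)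
    (hb : ∀ i, b i ≠ 0) (hne : Pairwise fun i j ↦ theta w (b j / b i) ≠ 0) (i : Fin 3)
    (hai : theta w (a / b i) ≠ 0) :
    thetaRes w a b i * lambertReg w 1 (lambertArg w a b i) +
        ∑ j ∈ {i}ᶜ, thetaRes w a b j * lambert w (b j / b i) (lambertArg w a b j) =
      -(thetaRes w a b i *
        (thetaLogDeriv w (a / b i) - ∑ j ∈ {i}ᶜ, thetaLogDeriv w (b j / b i))) := by
  have hne' : ∀ j ≠ i, theta w (b j / b i) ≠ 0 := fun j hj ↦ hne hj.symm
  obtain ⟨g, hg, heq, hval⟩ := exists_analyticAt_partialFractionDefect_inv hw hw1 ha hb hne'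
  have hzero : g (b i)⁻¹ = 0 := by
    refine eq_of_eventuallyEq_nhdsNE hg.continuousAt continuousAt_const ?_
    filter_upwards [heq,
      (partialFractionDefect_eq_zero hw hw1 ha hb hne).1 _ (inv_ne_zero (hb i))] with s hs hs0
    rw [← hs, hs0]
  rw [← inv_mul_deriv_thetaQuotReg hw1 ha hb hai hne']
  linear_combination hval - hzero

end PartialFractions

/-! ### Weierstrass' three-term relation -/

section Weierstrass

variable {w u x y : ℂ}

/-- The difference of the two sides of Weierstrass' three-term relation, as a function of `x`. -/
noncomputable def weierstrassDefect (w u y x : ℂ) : ℂ :=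
  theta w (x * y) * theta w (x / y) * theta w u ^ 2 -
    theta w x ^ 2 * theta w (u * y) * theta w (u / y) -
    u / y * theta w y ^ 2 * theta w (x * u) * theta w (x / u)

lemma analyticAt_theta_mul_const (hw1 : ‖w‖ < 1) (hy : y ≠ 0) (hx : x ≠ 0) :
    AnalyticAt ℂ (fun x ↦ theta w (x * y)) x := by
  simpa only [mul_comm] using analyticAt_theta_mul hw1 hy hx

lemma analyticAt_theta_div_const (hw1 : ‖w‖ < 1) (hy : y ≠ 0) (hx : x ≠ 0) :
    AnalyticAt ℂ (fun x ↦ theta w (x / y)) x := by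
  simpa only [div_eq_mul_inv] using analyticAt_theta_mul_const hw1 (inv_ne_zero hy) hx

lemma analyticAt_weierstrassDefect (hw1 : ‖w‖ < 1) (hu : u ≠ 0) (hy : y ≠ 0) (hx : x ≠ 0) :
    AnalyticAt ℂ (weierstrassDefect w u y) x := by
  have hmul {b : ℂ} (hb : b ≠ 0) := analyticAt_theta_mul_const hw1 hb hx
  have hdiv {b : ℂ} (hb : b ≠ 0) := analyticAt_theta_div_const hw1 hb hx
  exact ((((hmul hy).fun_mul (hdiv hy)).fun_mul analyticAt_const).fun_sub
    ((((analyticAt_theta hw1 hx).fun_pow 2).fun_mul analyticAt_const).fun_mul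
      analyticAt_const)).fun_sub ((analyticAt_const.fun_mul (hmul hu)).fun_mul (hdiv hu))

lemma weierstrassDefect_nome_mul (hw : w ≠ 0) (hw1 : ‖w‖ < 1) (hu : u ≠ 0) (hy : y ≠ 0)
    (hx : x ≠ 0) : weierstrassDefect w u y (w * x) = weierstrassDefect w u y x / x ^ 2 := by
  simp only [weierstrassDefect, mul_assoc w x, mul_div_assoc w x]
  rw [theta_nome_mul hw hw1 (mul_ne_zero hx hy), theta_nome_mul hw hw1 (div_ne_zero hx hy),
    theta_nome_mul hw hw1 (mul_ne_zero hx hu), theta_nome_mul hw hw1 (div_ne_zero hx hu),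
    theta_nome_mul hw hw1 hx]
  field_simp

lemma weierstrassDefect_inv (hw1 : ‖w‖ < 1) (hu : u ≠ 0) (hy : y ≠ 0) (hx : x ≠ 0) :
    weierstrassDefect w u y x⁻¹ = weierstrassDefect w u y x / x ^ 2 := by
  have hmul (z : ℂ) : x⁻¹ * z = (x / z)⁻¹ := by rw [inv_div, div_eq_inv_mul]
  have hdiv (z : ℂ) : x⁻¹ / z = (x * z)⁻¹ := by rw [mul_inv, div_eq_mul_inv]
  simp only [weierstrassDefect, hmul, hdiv]
  rw [theta_inv hw1 (mul_ne_zero hx hy), theta_inv hw1 (div_ne_zero hx hy),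
    theta_inv hw1 (mul_ne_zero hx hu), theta_inv hw1 (div_ne_zero hx hu), theta_inv hw1 hx]
  field_simp

lemma weierstrassDefect_one (hw1 : ‖w‖ < 1) (hu : u ≠ 0) (hy : y ≠ 0) :
    weierstrassDefect w u y 1 = 0 := by
  simp only [weierstrassDefect, one_mul, one_div, theta_inv hw1 hy, theta_inv hw1 hu,
    theta_one hw1]
  field_simp
  ring

lemma weierstrassDefect_self (hw1 : ‖w‖ < 1) (hu : u ≠ 0) : weierstrassDefect w u y u = 0 := by
  simp only [weierstrassDefect, div_self hu, theta_one hw1]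
  ring

-- `weierstrassDefect w u y x / x` is invariant under `x ↦ x⁻¹`, so its zero at `1` is double.
lemma deriv_weierstrassDefect_one (hw1 : ‖w‖ < 1) (hu : u ≠ 0) (hy : y ≠ 0) :
    deriv (weierstrassDefect w u y) 1 = 0 := by
  have hdiff := (analyticAt_weierstrassDefect hw1 hu hy one_ne_zero).differentiableAt
  have hdiv : HasDerivAt (fun x ↦ weierstrassDefect w u y x / x)
      (deriv (weierstrassDefect w u y) 1) 1 := by
    simpa [weierstrassDefect_one hw1 hu hy] using
      hdiff.hasDerivAt.fun_div (hasDerivAt_id (1 : ℂ)) one_ne_zero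
  rw [← hdiv.deriv]
  refine deriv_one_eq_zero_of_inv_invariant hdiv.differentiableAt ?_
  filter_upwards [eventually_ne_nhds (one_ne_zero : (1 : ℂ) ≠ 0)] with x hx
  rw [weierstrassDefect_inv hw1 hu hy hx]
  field_simp

/-- The quotient of `weierstrassDefect` by `θ(x)²`, which is invariant under `x ↦ wx`. -/
noncomputable def weierstrassQuot (w u y x : ℂ) : ℂ := weierstrassDefect w u y x / theta w x ^ 2

lemma weierstrassQuot_nome_mul (hw : w ≠ 0) (hw1 : ‖w‖ < 1) (hu : u ≠ 0) (hy : y ≠ 0)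
    (hx : x ≠ 0) : weierstrassQuot w u y (w * x) = weierstrassQuot w u y x := by
  rw [weierstrassQuot, weierstrassQuot, weierstrassDefect_nome_mul hw hw1 hu hy hx,
    theta_nome_mul hw hw1 hx]
  field_simp

lemma eventually_weierstrassQuot_nome_mul (hw : w ≠ 0) (hw1 : ‖w‖ < 1) (hu : u ≠ 0) (hy : y ≠ 0)
    (hx : x ≠ 0) : ∀ᶠ s in 𝓝[≠] x, weierstrassQuot w u y (w * s) = weierstrassQuot w u y s := by
  filter_upwards [(eventually_ne_nhds hx).filter_mono nhdsWithin_le_nhds] with s hs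
  exact weierstrassQuot_nome_mul hw hw1 hu hy hs

lemma analyticAt_weierstrassQuot (hw1 : ‖w‖ < 1) (hu : u ≠ 0) (hy : y ≠ 0) (hx : x ≠ 0)
    (h : theta w x ≠ 0) : AnalyticAt ℂ (weierstrassQuot w u y) x :=
  (analyticAt_weierstrassDefect hw1 hu hy hx).fun_div ((analyticAt_theta hw1 hx).fun_pow 2)
    (pow_ne_zero 2 h)

lemma hasRemovableSingularityAt_weierstrassQuot_one (hw1 : ‖w‖ < 1) (hu : u ≠ 0) (hy : y ≠ 0) :
    HasRemovableSingularityAt (weierstrassQuot w u y) 1 := by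
  set N := weierstrassDefect w u y with hN
  refine ⟨fun x ↦ dslope (dslope N 1) 1 x / thetaReg w x ^ 2, ?_, ?_⟩
  · exact (analyticAt_dslope (analyticAt_dslope (analyticAt_weierstrassDefect hw1 hu hy
      one_ne_zero))).fun_div ((analyticAt_thetaReg hw1 one_ne_zero).fun_pow 2)
      (pow_ne_zero 2 (thetaReg_one_ne_zero hw1))
  · filter_upwards [self_mem_nhdsWithin] with x hx
    have hslope := sub_smul_dslope N 1 x
    have hslope' := sub_smul_dslope (dslope N 1) 1 x
    rw [dslope_same, hN, deriv_weierstrassDefect_one hw1 hu hy, sub_zero, smul_eq_mul] at hslope'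
    rw [hN, weierstrassDefect_one hw1 hu hy, sub_zero, ← hslope', smul_eq_mul] at hslope
    have hx' : 1 - x ≠ 0 := sub_ne_zero.mpr (Ne.symm hx)
    rw [weierstrassQuot, ← hslope, theta_eq_one_sub_mul hw1, mul_pow, ← mul_assoc,
      show (x - 1) * (x - 1) = (1 - x) ^ 2 by ring, mul_div_mul_left _ _ (pow_ne_zero 2 hx')]

lemma hasRemovableSingularityAt_weierstrassQuot (hw : w ≠ 0) (hw1 : ‖w‖ < 1) (hu : u ≠ 0)
    (hy : y ≠ 0) (hx : x ≠ 0) : HasRemovableSingularityAt (weierstrassQuot w u y) x := by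
  by_cases h : theta w x = 0
  · obtain ⟨n, hn⟩ := (theta_eq_zero_iff hw hw1 hx).mp h
    have hxn : w ^ (-n) * 1 = x := by rw [← hn, zpow_neg, inv_mul_cancel_left₀ (zpow_ne_zero n hw)]
    rw [← hxn]
    refine HasRemovableSingularityAt.zpow_mul hw (m := fun _ ↦ 1) (ρ := fun _ ↦ 0)
      (fun _ _ ↦ analyticAt_const) (fun _ _ ↦ one_ne_zero) (fun _ _ ↦ analyticAt_const)
      (fun s hs ↦ ?_) one_ne_zero (hasRemovableSingularityAt_weierstrassQuot_one hw1 hu hy) (-n)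
    simpa only [one_mul, add_zero] using eventually_weierstrassQuot_nome_mul hw hw1 hu hy hs
  · exact hasRemovableSingularityAt_of_analyticAt (analyticAt_weierstrassQuot hw1 hu hy hx h)

lemma weierstrassDefect_eq_zero (hw : w ≠ 0) (hw1 : ‖w‖ < 1) (hu : u ≠ 0) (hy : y ≠ 0)
    (hx : x ≠ 0) (h : theta w u ≠ 0) : weierstrassDefect w u y x = 0 := by
  obtain ⟨c, hc⟩ := eventually_eq_const_of_mul_periodic hw hw1
    (fun t ht ↦ hasRemovableSingularityAt_weierstrassQuot hw hw1 hu hy ht)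
    fun t ht ↦ eventually_weierstrassQuot_nome_mul hw hw1 hu hy ht
  have hc0 : 0 = c := by
    have := eq_of_eventuallyEq_nhdsNE (analyticAt_weierstrassQuot hw1 hu hy hu h).continuousAt
      continuousAt_const (hc u hu)
    rwa [weierstrassQuot, weierstrassDefect_self hw1 hu, zero_div] at this
  refine eq_of_eventuallyEq_nhdsNE (analyticAt_weierstrassDefect hw1 hu hy hx).continuousAt
    (continuousAt_const (y := (0 : ℂ))) ?_
  filter_upwards [hc x hx, eventually_theta_ne_zero hw hw1 hx] with s hs hθ
  rw [← hc0] at hs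
  exact (div_eq_zero_iff.mp hs).resolve_right (pow_ne_zero 2 hθ)

theorem theta_weierstrass (hw : w ≠ 0) (hw1 : ‖w‖ < 1) (hu : u ≠ 0) (hy : y ≠ 0) (hx : x ≠ 0)
    (h : theta w u ≠ 0) :
    theta w (x * y) * theta w (x / y) * theta w u ^ 2 -
        theta w x ^ 2 * theta w (u * y) * theta w (u / y) =
      u / y * theta w y ^ 2 * theta w (x * u) * theta w (x / u) :=
  sub_eq_zero.mp (weierstrassDefect_eq_zero hw hw1 hu hy hx h)

lemma thetaLogDeriv_inv (hw1 : ‖w‖ < 1) (hx : x ≠ 0) (h : theta w x ≠ 0) :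
    thetaLogDeriv w x⁻¹ = 1 - thetaLogDeriv w x := by
  have hcomp : logDeriv (fun x ↦ theta w x⁻¹) x = logDeriv (theta w) x⁻¹ * -(x ^ 2)⁻¹ := by
    rw [← (hasDerivAt_inv hx).deriv]
    exact logDeriv_comp (g := fun x ↦ x⁻¹)
      (analyticAt_theta hw1 (inv_ne_zero hx)).differentiableAt (hasDerivAt_inv hx).differentiableAt
  have hinv : logDeriv (fun x ↦ theta w x⁻¹) x = logDeriv (theta w) x - 1 / x := by
    have heq : (fun x ↦ theta w x⁻¹) =ᶠ[𝓝 x] fun x ↦ -1 * (theta w x / x) := by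
      filter_upwards [eventually_ne_nhds hx] with z hz
      rw [theta_inv hw1 hz, neg_one_mul]
    rw [(logDeriv_congr_nhds heq).eq_of_nhds, logDeriv_const_mul x _ (by norm_num),
      logDeriv_div x h hx (analyticAt_theta hw1 hx).differentiableAt differentiableAt_fun_id,
      logDeriv_id']
  have key := hcomp.symm.trans hinv
  rw [thetaLogDeriv, thetaLogDeriv]
  field_simp at key ⊢
  linear_combination -key

lemma thetaLogDeriv_nome_mul (hw : w ≠ 0) (hw1 : ‖w‖ < 1) (hx : x ≠ 0) (h : theta w x ≠ 0) :
    thetaLogDeriv w (w * x) = thetaLogDeriv w x - 1 := by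
  have hcomp : logDeriv (fun x ↦ theta w (w * x)) x = logDeriv (theta w) (w * x) * w :=
    logDeriv_comp_const_mul (analyticAt_theta hw1 (mul_ne_zero hw hx)).differentiableAt
  have hmul : logDeriv (fun x ↦ theta w (w * x)) x = logDeriv (theta w) x - 1 / x := by
    have heq : (fun x ↦ theta w (w * x)) =ᶠ[𝓝 x] fun x ↦ -1 * (theta w x / x) := by
      filter_upwards [eventually_ne_nhds hx] with z hz
      rw [theta_nome_mul hw hw1 hz, neg_one_mul]
    rw [(logDeriv_congr_nhds heq).eq_of_nhds, logDeriv_const_mul x _ (by norm_num),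
      logDeriv_div x h hx (analyticAt_theta hw1 hx).differentiableAt differentiableAt_fun_id,
      logDeriv_id']
  have key := hcomp.symm.trans hmul
  rw [thetaLogDeriv, thetaLogDeriv]
  field_simp at key ⊢
  linear_combination key

lemma hasDerivAt_theta_div_self (hw1 : ‖w‖ < 1) (hx : x ≠ 0) :
    HasDerivAt (fun u ↦ theta w (x / u)) (thetaReg w 1 / x) x := by
  have hdiv : AnalyticAt ℂ (fun u ↦ x / u) x := by fun_prop (disch := assumption)
  have hreg : AnalyticAt ℂ (fun u ↦ thetaReg w (x / u) / u) x :=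
    (AnalyticAt.fun_comp (g := thetaReg w) (analyticAt_thetaReg hw1 (div_ne_zero hx hx))
      hdiv).fun_div analyticAt_id hx
  have hmul := ((hasDerivAt_id x).sub_const x).fun_mul hreg.differentiableAt.hasDerivAt
  simp only [id, sub_self, zero_mul, one_mul, add_zero, div_self hx] at hmul
  refine hmul.congr_of_eventuallyEq ?_
  filter_upwards [eventually_ne_nhds hx] with u hu
  rw [theta_eq_one_sub_mul hw1]
  field_simp

lemma hasDerivAt_theta (hw1 : ‖w‖ < 1) (hx : x ≠ 0) (h : theta w x ≠ 0) :
    HasDerivAt (theta w) (theta w x * thetaLogDeriv w x / x) x := by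
  have hderiv : deriv (theta w) x = theta w x * thetaLogDeriv w x / x := by
    rw [thetaLogDeriv, logDeriv_apply]
    field_simp
  exact hderiv ▸ (analyticAt_theta hw1 hx).differentiableAt.hasDerivAt

lemma hasDerivAt_theta_mul (hw1 : ‖w‖ < 1) (hx : x ≠ 0) (hy : y ≠ 0) (h : theta w (x * y) ≠ 0) :
    HasDerivAt (fun u ↦ theta w (u * y)) (theta w (x * y) * thetaLogDeriv w (x * y) / x) x := by
  have hcomp := (hasDerivAt_theta hw1 (mul_ne_zero hx hy) h).comp x (hasDerivAt_mul_const y)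
  rwa [div_mul_eq_mul_div, mul_div_mul_right _ _ hy] at hcomp

-- Divide Weierstrass' relation by `u - x` and let `u → x`.
theorem theta_weierstrass_logDeriv (hw : w ≠ 0) (hw1 : ‖w‖ < 1) (hy : y ≠ 0) (hx : x ≠ 0)
    (h : theta w x ≠ 0) (hmul : theta w (x * y) ≠ 0) (hdiv : theta w (x / y) ≠ 0) :
    2 * thetaLogDeriv w x - thetaLogDeriv w (x * y) - thetaLogDeriv w (x / y) =
      thetaReg w 1 * (x / y * theta w y ^ 2 * theta w (x * x)) /
        (theta w (x * y) * theta w (x / y) * theta w x ^ 2) := by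
  have hderiv := hasDerivAt_theta hw1 hx h
  have hleft := ((hderiv.fun_pow 2).const_mul (theta w (x * y) * theta w (x / y))).fun_sub
    (((hasDerivAt_theta_mul hw1 hx hy hmul).const_mul (theta w x ^ 2)).fun_mul
      (hasDerivAt_theta_mul hw1 hx (inv_ne_zero hy) (by rwa [← div_eq_mul_inv])))
  have hfactor : DifferentiableAt ℂ (fun u ↦ u / y * theta w y ^ 2 * theta w (x * u)) x :=
    ((differentiableAt_fun_id.div_const y).mul_const _).fun_mul
      (analyticAt_theta_mul hw1 hx hx).differentiableAt
  have hright := hfactor.hasDerivAt.fun_mul (hasDerivAt_theta_div_self hw1 hx)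
  have heq : (fun u ↦ u / y * theta w y ^ 2 * theta w (x * u) * theta w (x / u)) =ᶠ[𝓝 x]
      fun u ↦ theta w (x * y) * theta w (x / y) * theta w u ^ 2 -
        theta w x ^ 2 * theta w (u * y) * theta w (u * y⁻¹) := by
    filter_upwards [eventually_ne_nhds hx, hderiv.continuousAt.eventually_ne h] with u hu hθ
    rw [← theta_weierstrass hw hw1 hu hy hx hθ, div_eq_mul_inv u]
  have key := (hleft.congr_of_eventuallyEq heq).unique hright
  simp only [div_self hx, theta_one hw1, ← div_eq_mul_inv, mul_zero, zero_add] at key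
  field_simp at key ⊢
  linear_combination key

end Weierstrass

/-! ### Theta functions of nome `Q¹⁰` at integral powers of `Q` -/

/-- The theta function of nome `Q¹⁰` at the point `Qᵏ`. -/
noncomputable def thetaPow (Q : ℂ) (k : ℤ) : ℂ := theta (Q ^ 10) (Q ^ k)

/-- The theta series of nome `Q¹⁰` at the point `Qᵏ`. -/
noncomputable def thetaSeriesPow (Q : ℂ) (k : ℤ) : ℂ := thetaSeries (Q ^ 10) (Q ^ k)

/-- The Lambert series of nome `Q¹⁰` at `x = Qᵏ` and `y = Qʲ`. -/
noncomputable def lambertPow (Q : ℂ) (k j : ℤ) : ℂ := lambert (Q ^ 10) (Q ^ k) (Q ^ j)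

/-- The Lambert series of nome `Q¹⁰` at `x = 1` and `y = Qʲ`, without its infinite term. -/
noncomputable def lambertRegPow (Q : ℂ) (j : ℤ) : ℂ := lambertReg (Q ^ 10) 1 (Q ^ j)

/-- The logarithmic derivative `thetaLogDeriv` of nome `Q¹⁰` at the point `Qᵏ`. -/
noncomputable def thetaLogDerivPow (Q : ℂ) (k : ℤ) : ℂ := thetaLogDeriv (Q ^ 10) (Q ^ k)

/-- The residue `thetaRes` of nome `Q¹⁰` at `a = Qᴬ` and `bᵢ = Q ^ (b i)`. -/
noncomputable def thetaResPow (Q : ℂ) (A : ℤ) (b : Fin 3 → ℤ) (i : Fin 3) : ℂ :=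
  thetaPow Q (A - b i) / ∏ j ∈ {i}ᶜ, thetaPow Q (b j - b i)

section Powers

variable {Q : ℂ}

lemma norm_pow_lt_one {n : ℕ} (hn : n ≠ 0) (hQ1 : ‖Q‖ < 1) : ‖Q ^ n‖ < 1 := by
  rw [norm_pow]
  exact pow_lt_one₀ (norm_nonneg Q) hQ1 hn

lemma theta_zpow_div_zpow (hQ : Q ≠ 0) (c b : ℤ) :
    theta (Q ^ 10) (Q ^ c / Q ^ b) = thetaPow Q (c - b) := by
  rw [thetaPow, zpow_sub₀ hQ]

lemma thetaPow_ne_zero (hQ : Q ≠ 0) (hQ1 : ‖Q‖ < 1) {k : ℤ} (hk : k % 10 ≠ 0) :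
    thetaPow Q k ≠ 0 := by
  intro h
  obtain ⟨n, hn⟩ := (theta_eq_zero_iff (pow_ne_zero 10 hQ) (norm_pow_lt_one (by decide) hQ1)
    (zpow_ne_zero k hQ)).mp h
  rw [← zpow_natCast, ← zpow_mul, ← zpow_add₀ hQ] at hn
  exact zpow_ne_one_of_norm_lt_one hQ1 (by push_cast; omega) hn

lemma thetaPow_one_to_five_ne_zero (hQ : Q ≠ 0) (hQ1 : ‖Q‖ < 1) :
    thetaPow Q 1 ≠ 0 ∧ thetaPow Q 2 ≠ 0 ∧ thetaPow Q 3 ≠ 0 ∧ thetaPow Q 4 ≠ 0 ∧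
      thetaPow Q 5 ≠ 0 := by
  refine ⟨?_, ?_, ?_, ?_, ?_⟩ <;> exact thetaPow_ne_zero hQ hQ1 (by decide)

lemma thetaPow_neg (hQ : Q ≠ 0) (hQ1 : ‖Q‖ < 1) (k : ℤ) :
    thetaPow Q (-k) = -(thetaPow Q k / Q ^ k) := by
  rw [thetaPow, thetaPow, zpow_neg,
    theta_inv (norm_pow_lt_one (by decide) hQ1) (zpow_ne_zero k hQ)]

lemma thetaPow_ten_sub (hQ : Q ≠ 0) (k : ℤ) : thetaPow Q (10 - k) = thetaPow Q k := by
  rw [thetaPow, thetaPow, zpow_sub₀ hQ]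
  exact theta_nome_div (pow_ne_zero 10 hQ) _

lemma thetaPow_ten_add (hQ : Q ≠ 0) (hQ1 : ‖Q‖ < 1) (k : ℤ) :
    thetaPow Q (10 + k) = -(thetaPow Q k / Q ^ k) := by
  rw [← thetaPow_neg hQ hQ1, ← thetaPow_ten_sub hQ (-k), sub_neg_eq_add]

lemma thetaPow_six (hQ : Q ≠ 0) : thetaPow Q 6 = thetaPow Q 4 := thetaPow_ten_sub hQ 4

lemma thetaPow_seven (hQ : Q ≠ 0) : thetaPow Q 7 = thetaPow Q 3 := thetaPow_ten_sub hQ 3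

lemma thetaPow_eight (hQ : Q ≠ 0) : thetaPow Q 8 = thetaPow Q 2 := thetaPow_ten_sub hQ 2

lemma thetaPow_nine (hQ : Q ≠ 0) : thetaPow Q 9 = thetaPow Q 1 := thetaPow_ten_sub hQ 1

lemma thetaPow_eleven (hQ : Q ≠ 0) (hQ1 : ‖Q‖ < 1) :
    thetaPow Q 11 = -(thetaPow Q 1 / Q ^ (1 : ℤ)) := thetaPow_ten_add hQ hQ1 1

lemma thetaPow_twelve (hQ : Q ≠ 0) (hQ1 : ‖Q‖ < 1) :
    thetaPow Q 12 = -(thetaPow Q 2 / Q ^ (2 : ℤ)) := thetaPow_ten_add hQ hQ1 2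

lemma thetaPow_thirteen (hQ : Q ≠ 0) (hQ1 : ‖Q‖ < 1) :
    thetaPow Q 13 = -(thetaPow Q 3 / Q ^ (3 : ℤ)) := thetaPow_ten_add hQ hQ1 3

theorem thetaPow_weierstrass (hQ : Q ≠ 0) (hQ1 : ‖Q‖ < 1) (a b : ℤ) {c : ℤ} (hc : c % 10 ≠ 0) :
    thetaPow Q (b + a) * thetaPow Q (b - a) * thetaPow Q c ^ 2 -
        thetaPow Q b ^ 2 * thetaPow Q (c + a) * thetaPow Q (c - a) +
      Q ^ (b - a) * thetaPow Q a ^ 2 * thetaPow Q (b + c) * thetaPow Q (c - b) = 0 := by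
  have hrel := theta_weierstrass (pow_ne_zero 10 hQ) (norm_pow_lt_one (by decide) hQ1)
    (zpow_ne_zero c hQ) (zpow_ne_zero a hQ) (zpow_ne_zero b hQ) (thetaPow_ne_zero hQ hQ1 hc)
  simp only [← zpow_sub₀ hQ, ← zpow_add₀ hQ, ← thetaPow.eq_def] at hrel
  have hneg : thetaPow Q (b - c) = -(thetaPow Q (c - b) / Q ^ (c - b)) := by
    rw [← thetaPow_neg hQ hQ1, neg_sub]
  have hpow : Q ^ (c - a) = Q ^ (b - a) * Q ^ (c - b) := by
    rw [← zpow_add₀ hQ]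
    congr 1
    ring
  rw [hrel, hneg, hpow]
  have := zpow_ne_zero (c - b) hQ
  field_simp
  ring

lemma thetaRes_zpow (hQ : Q ≠ 0) (A : ℤ) (b : Fin 3 → ℤ) (i : Fin 3) :
    thetaRes (Q ^ 10) (Q ^ A) (fun i ↦ Q ^ b i) i = thetaResPow Q A b i := by
  simp only [thetaRes, thetaResPow, theta_zpow_div_zpow hQ]

lemma lambertArg_zpow (hQ : Q ≠ 0) (A : ℤ) (b : Fin 3 → ℤ) (i : Fin 3) :
    lambertArg (Q ^ 10) (Q ^ A) (fun i ↦ Q ^ b i) i = Q ^ (10 + 2 * b i + A - ∑ j, b j) := by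
  simp only [lambertArg, Fin.prod_univ_three, Fin.sum_univ_three, zpow_sub₀ hQ, zpow_add₀ hQ,
    zpow_mul', zpow_ofNat]

lemma pairwise_theta_zpow_ne_zero (hQ : Q ≠ 0) (hQ1 : ‖Q‖ < 1) {b : Fin 3 → ℤ}
    (hb : ∀ i j, i ≠ j → (b j - b i) % 10 ≠ 0) :
    Pairwise fun i j ↦ theta (Q ^ 10) (Q ^ b j / Q ^ b i) ≠ 0 := fun i j hij ↦ by
  simpa only [theta_zpow_div_zpow hQ] using thetaPow_ne_zero hQ hQ1 (hb i j hij)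

lemma sum_thetaResPow_mul_thetaSeriesPow (hQ : Q ≠ 0) (hQ1 : ‖Q‖ < 1) (A : ℤ) {b : Fin 3 → ℤ}
    (hb : ∀ i j, i ≠ j → (b j - b i) % 10 ≠ 0) :
    ∑ i, thetaResPow Q A b i * thetaSeriesPow Q (10 + 2 * b i + A - ∑ j, b j) = 0 := by
  have h := (partialFractionDefect_eq_zero (pow_ne_zero 10 hQ) (norm_pow_lt_one (by decide) hQ1)
    (zpow_ne_zero A hQ) (fun i ↦ zpow_ne_zero (b i) hQ) (pairwise_theta_zpow_ne_zero hQ hQ1 hb)).2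
  simpa only [thetaRes_zpow hQ, lambertArg_zpow hQ, ← thetaSeriesPow.eq_def] using h

lemma sum_thetaResPow_mul_lambertPow (hQ : Q ≠ 0) (hQ1 : ‖Q‖ < 1) (A : ℤ) {b : Fin 3 → ℤ}
    (hb : ∀ i j, i ≠ j → (b j - b i) % 10 ≠ 0) (hb' : ∀ i, b i % 10 ≠ 0) :
    ∑ i, thetaResPow Q A b i * lambertPow Q (b i) (10 + 2 * b i + A - ∑ j, b j) =
      thetaReg (Q ^ 10) 1 * thetaPow Q A / ∏ i, thetaPow Q (b i) := by
  have h := sum_thetaRes_mul_lambert (pow_ne_zero 10 hQ) (norm_pow_lt_one (by decide) hQ1)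
    (zpow_ne_zero A hQ) (fun i ↦ zpow_ne_zero (b i) hQ) (pairwise_theta_zpow_ne_zero hQ hQ1 hb)
    one_ne_zero (fun i ↦ by rw [mul_one]; exact thetaPow_ne_zero hQ hQ1 (hb' i))
  simpa only [thetaRes_zpow hQ, lambertArg_zpow hQ, thetaQuot, mul_one, ← thetaPow.eq_def,
    ← lambertPow.eq_def] using h

lemma sum_thetaResPow_mul_lambertPow_at_pole (hQ : Q ≠ 0) (hQ1 : ‖Q‖ < 1) {A : ℤ} {b : Fin 3 → ℤ}
    (hb : ∀ i j, i ≠ j → (b j - b i) % 10 ≠ 0) (i : Fin 3) (hA : (A - b i) % 10 ≠ 0) :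
    thetaResPow Q A b i * lambertRegPow Q (10 + 2 * b i + A - ∑ j, b j) +
        ∑ j ∈ {i}ᶜ, thetaResPow Q A b j *
          lambertPow Q (b j - b i) (10 + 2 * b j + A - ∑ j, b j) =
      -(thetaResPow Q A b i * (thetaLogDerivPow Q (A - b i) -
        ∑ j ∈ {i}ᶜ, thetaLogDerivPow Q (b j - b i))) := by
  have h := sum_thetaRes_mul_lambert_at_pole (pow_ne_zero 10 hQ)
    (norm_pow_lt_one (by decide) hQ1) (zpow_ne_zero A hQ) (fun i ↦ zpow_ne_zero (b i) hQ)
    (pairwise_theta_zpow_ne_zero hQ hQ1 hb) i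
    (by rw [theta_zpow_div_zpow hQ]; exact thetaPow_ne_zero hQ hQ1 hA)
  simpa only [thetaRes_zpow hQ, lambertArg_zpow hQ, ← zpow_sub₀ hQ, ← lambertPow.eq_def,
    ← lambertRegPow.eq_def, ← thetaLogDerivPow.eq_def] using h

lemma thetaLogDerivPow_neg (hQ : Q ≠ 0) (hQ1 : ‖Q‖ < 1) {k : ℤ} (hk : k % 10 ≠ 0) :
    thetaLogDerivPow Q (-k) = 1 - thetaLogDerivPow Q k := by
  rw [thetaLogDerivPow, thetaLogDerivPow, zpow_neg, thetaLogDeriv_inv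
    (norm_pow_lt_one (by decide) hQ1) (zpow_ne_zero k hQ) (thetaPow_ne_zero hQ hQ1 hk)]

lemma thetaLogDerivPow_ten_add (hQ : Q ≠ 0) (hQ1 : ‖Q‖ < 1) {k : ℤ} (hk : k % 10 ≠ 0) :
    thetaLogDerivPow Q (10 + k) = thetaLogDerivPow Q k - 1 := by
  rw [thetaLogDerivPow, thetaLogDerivPow, zpow_add₀ hQ, zpow_ofNat, thetaLogDeriv_nome_mul
    (pow_ne_zero 10 hQ) (norm_pow_lt_one (by decide) hQ1) (zpow_ne_zero k hQ)
    (thetaPow_ne_zero hQ hQ1 hk)]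

theorem thetaPow_weierstrass_logDeriv (hQ : Q ≠ 0) (hQ1 : ‖Q‖ < 1) {a b : ℤ} (ha : a % 10 ≠ 0)
    (hadd : (a + b) % 10 ≠ 0) (hsub : (a - b) % 10 ≠ 0) :
    2 * thetaLogDerivPow Q a - thetaLogDerivPow Q (a + b) - thetaLogDerivPow Q (a - b) =
      thetaReg (Q ^ 10) 1 * (Q ^ (a - b) * thetaPow Q b ^ 2 * thetaPow Q (a + a)) /
        (thetaPow Q (a + b) * thetaPow Q (a - b) * thetaPow Q a ^ 2) := by
  have h := theta_weierstrass_logDeriv (pow_ne_zero 10 hQ) (norm_pow_lt_one (by decide) hQ1)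
    (zpow_ne_zero b hQ) (zpow_ne_zero a hQ) (thetaPow_ne_zero hQ hQ1 ha)
    (by rw [← zpow_add₀ hQ]; exact thetaPow_ne_zero hQ hQ1 hadd)
    (by rw [← zpow_sub₀ hQ]; exact thetaPow_ne_zero hQ hQ1 hsub)
  simpa only [← zpow_sub₀ hQ, ← zpow_add₀ hQ, ← thetaPow.eq_def, ← thetaLogDerivPow.eq_def] using h

end Powers

section ThetaQuotients

variable {Q : ℂ}

/-- With `Q = q⁵`, the theta quotient multiplying `q⁰` in the 5-dissection of `∑ q^{2n²+n}`. -/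
noncomputable def psiCoeff₀ (Q : ℂ) : ℂ :=
  thetaPow Q 4 * thetaPow Q 5 / (thetaPow Q 2 * thetaPow Q 3)

/-- With `Q = q⁵`, the theta quotient multiplying `q¹` in the 5-dissection of `∑ q^{2n²+n}`. -/
noncomputable def psiCoeff₁ (Q : ℂ) : ℂ :=
  thetaPow Q 2 * thetaPow Q 5 / (thetaPow Q 1 * thetaPow Q 4)

lemma compl_zero_fin_three : ({0}ᶜ : Finset (Fin 3)) = {1, 2} := by decide

lemma compl_one_fin_three : ({1}ᶜ : Finset (Fin 3)) = {0, 2} := by decide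

lemma compl_two_fin_three : ({2}ᶜ : Finset (Fin 3)) = {0, 1} := by decide

lemma thetaResPow_cons (A b c d : ℤ) : thetaResPow Q A ![b, c, d] = ![
    thetaPow Q (A - b) / (thetaPow Q (c - b) * thetaPow Q (d - b)),
    thetaPow Q (A - c) / (thetaPow Q (b - c) * thetaPow Q (d - c)),
    thetaPow Q (A - d) / (thetaPow Q (b - d) * thetaPow Q (c - d))] := by
  ext i
  fin_cases i <;> simp [thetaResPow, compl_zero_fin_three, compl_one_fin_three, compl_two_fin_three]

lemma thetaSeriesPow_one_add (hQ : Q ≠ 0) (hQ1 : ‖Q‖ < 1) :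
    thetaSeriesPow Q 1 + Q ^ 2 * thetaSeriesPow Q 9 = psiCoeff₀ Q * thetaSeriesPow Q 5 := by
  obtain ⟨_, h2, h3, h4, _⟩ := thetaPow_one_to_five_ne_zero hQ hQ1
  have h := sum_thetaResPow_mul_thetaSeriesPow hQ hQ1 (-3) (b := ![0, 4, 2]) (by decide)
  simp only [Fin.sum_univ_three, thetaResPow_cons, Matrix.cons_val] at h
  norm_num only [thetaPow_neg hQ hQ1, thetaPow_six hQ, thetaPow_seven hQ, thetaPow_eight hQ,
    thetaPow_nine hQ, thetaPow_eleven hQ hQ1, thetaPow_thirteen hQ hQ1, zpow_ofNat, zpow_one] at h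
  rw [psiCoeff₀]
  field_simp at h ⊢
  linear_combination -h

lemma thetaSeriesPow_neg_three_add (hQ : Q ≠ 0) (hQ1 : ‖Q‖ < 1) :
    thetaSeriesPow Q (-3) + Q ^ 4 * thetaSeriesPow Q 13 = psiCoeff₁ Q * thetaSeriesPow Q 5 := by
  obtain ⟨h1, h2, _, h4, _⟩ := thetaPow_one_to_five_ne_zero hQ hQ1
  have h := sum_thetaResPow_mul_thetaSeriesPow hQ hQ1 (-3) (b := ![2, -2, 6]) (by decide)
  simp only [Fin.sum_univ_three, thetaResPow_cons, Matrix.cons_val] at h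
  norm_num only [thetaPow_neg hQ hQ1, thetaPow_six hQ, thetaPow_seven hQ, thetaPow_eight hQ,
    thetaPow_nine hQ, thetaPow_eleven hQ hQ1, thetaPow_thirteen hQ hQ1, zpow_ofNat, zpow_one] at h
  rw [psiCoeff₁]
  field_simp at h ⊢
  linear_combination -h

lemma lambertPow_neg_two_add_lambertPow_six (hQ : Q ≠ 0) (hQ1 : ‖Q‖ < 1) :
    lambertPow Q (-2) (-3) + Q ^ 4 * lambertPow Q 6 13 = psiCoeff₁ Q * lambertPow Q 2 5 -
      thetaReg (Q ^ 10) 1 * thetaPow Q 3 / (thetaPow Q 1 * thetaPow Q 2) := by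
  obtain ⟨h1, h2, _, h4, _⟩ := thetaPow_one_to_five_ne_zero hQ hQ1
  have h := sum_thetaResPow_mul_lambertPow hQ hQ1 (-3) (b := ![2, -2, 6]) (by decide) (by decide)
  simp only [Fin.sum_univ_three, Fin.prod_univ_three, thetaResPow_cons, Matrix.cons_val] at h
  norm_num only [thetaPow_neg hQ hQ1, thetaPow_six hQ, thetaPow_seven hQ, thetaPow_eight hQ,
    thetaPow_nine hQ, thetaPow_eleven hQ hQ1, thetaPow_thirteen hQ hQ1, zpow_ofNat, zpow_one] at h
  rw [psiCoeff₁]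
  field_simp at h ⊢
  linear_combination -h

lemma lambertPow_neg_two_add_lambertPow_four (hQ : Q ≠ 0) (hQ1 : ‖Q‖ < 1) :
    lambertPow Q (-2) (-1) + Q ^ 3 * lambertPow Q 4 11 = psiCoeff₀ Q * lambertPow Q (-4) (-5) -
      thetaReg (Q ^ 10) 1 * Q ^ 2 * thetaPow Q 1 / (thetaPow Q 3 * thetaPow Q 4) := by
  obtain ⟨_, h2, h3, h4, _⟩ := thetaPow_one_to_five_ne_zero hQ hQ1
  have h := sum_thetaResPow_mul_lambertPow hQ hQ1 (-9) (b := ![-4, 4, -2]) (by decide) (by decide)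
  simp only [Fin.sum_univ_three, Fin.prod_univ_three, thetaResPow_cons, Matrix.cons_val] at h
  norm_num only [thetaPow_neg hQ hQ1, thetaPow_six hQ, thetaPow_seven hQ, thetaPow_eight hQ,
    thetaPow_nine hQ, thetaPow_eleven hQ hQ1, thetaPow_thirteen hQ hQ1, zpow_ofNat, zpow_one] at h
  rw [psiCoeff₀]
  field_simp at h ⊢
  linear_combination h

lemma lambertRegPow_one_add (hQ : Q ≠ 0) (hQ1 : ‖Q‖ < 1) :
    lambertRegPow Q 1 + Q ^ 2 * lambertPow Q 4 9 = psiCoeff₀ Q * lambertPow Q 2 5 -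
      (thetaLogDerivPow Q (-3) - thetaLogDerivPow Q 4 - thetaLogDerivPow Q 2) := by
  obtain ⟨_, h2, h3, h4, _⟩ := thetaPow_one_to_five_ne_zero hQ hQ1
  have h := sum_thetaResPow_mul_lambertPow_at_pole hQ hQ1 (A := -3) (b := ![0, 4, 2])
    (by decide) 0 (by decide)
  simp only [compl_zero_fin_three, Finset.sum_pair (show (1 : Fin 3) ≠ 2 by decide),
    Fin.sum_univ_three, thetaResPow_cons, Matrix.cons_val] at h
  norm_num only [thetaPow_neg hQ hQ1, thetaPow_six hQ, thetaPow_seven hQ, thetaPow_eight hQ,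
    thetaPow_nine hQ, thetaPow_eleven hQ hQ1, thetaPow_thirteen hQ hQ1, zpow_ofNat, zpow_one] at h
  rw [psiCoeff₀]
  field_simp at h ⊢
  linear_combination -h

lemma lambertRegPow_three_add (hQ : Q ≠ 0) (hQ1 : ‖Q‖ < 1) :
    lambertRegPow Q 3 + Q * lambertPow Q 2 7 = psiCoeff₁ Q * lambertPow Q (-4) (-5) -
      (thetaLogDerivPow Q (-9) - thetaLogDerivPow Q 2 - thetaLogDerivPow Q (-4)) := by
  obtain ⟨h1, h2, _, h4, _⟩ := thetaPow_one_to_five_ne_zero hQ hQ1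
  have h := sum_thetaResPow_mul_lambertPow_at_pole hQ hQ1 (A := -9) (b := ![0, 2, -4])
    (by decide) 0 (by decide)
  simp only [compl_zero_fin_three, Finset.sum_pair (show (1 : Fin 3) ≠ 2 by decide),
    Fin.sum_univ_three, thetaResPow_cons, Matrix.cons_val] at h
  norm_num only [thetaPow_neg hQ hQ1, thetaPow_six hQ, thetaPow_seven hQ, thetaPow_eight hQ,
    thetaPow_nine hQ, thetaPow_eleven hQ hQ1, thetaPow_thirteen hQ hQ1, zpow_ofNat, zpow_one] at h
  rw [psiCoeff₁]
  field_simp at h ⊢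
  linear_combination h

lemma thetaPow_weierstrass_one_two_three (hQ : Q ≠ 0) (hQ1 : ‖Q‖ < 1) :
    Q * thetaPow Q 1 ^ 3 * thetaPow Q 5 + thetaPow Q 1 * thetaPow Q 3 ^ 3 =
      thetaPow Q 2 ^ 3 * thetaPow Q 4 := by
  have h := thetaPow_weierstrass hQ hQ1 1 2 (c := 3) (by decide)
  norm_num only [thetaPow_six hQ, thetaPow_seven hQ, thetaPow_eight hQ, thetaPow_nine hQ,
    zpow_ofNat, zpow_one] at h
  linear_combination h

lemma thetaPow_weierstrass_one_two_four (hQ : Q ≠ 0) (hQ1 : ‖Q‖ < 1) :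
    Q * thetaPow Q 1 ^ 2 * thetaPow Q 2 * thetaPow Q 4 +
      thetaPow Q 1 * thetaPow Q 3 * thetaPow Q 4 ^ 2 =
      thetaPow Q 2 ^ 2 * thetaPow Q 3 * thetaPow Q 5 := by
  have h := thetaPow_weierstrass hQ hQ1 1 2 (c := 4) (by decide)
  norm_num only [thetaPow_six hQ, thetaPow_seven hQ, thetaPow_eight hQ, thetaPow_nine hQ,
    zpow_ofNat, zpow_one] at h
  linear_combination h

lemma thetaPow_weierstrass_one_two_five (hQ : Q ≠ 0) (hQ1 : ‖Q‖ < 1) :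
    Q * thetaPow Q 1 ^ 2 * thetaPow Q 3 ^ 2 + thetaPow Q 1 * thetaPow Q 3 * thetaPow Q 5 ^ 2 =
      thetaPow Q 2 ^ 2 * thetaPow Q 4 ^ 2 := by
  have h := thetaPow_weierstrass hQ hQ1 1 2 (c := 5) (by decide)
  norm_num only [thetaPow_six hQ, thetaPow_seven hQ, thetaPow_eight hQ, thetaPow_nine hQ,
    zpow_ofNat, zpow_one] at h
  linear_combination h

lemma thetaPow_weierstrass_one_three_five (hQ : Q ≠ 0) (hQ1 : ‖Q‖ < 1) :
    Q ^ 2 * thetaPow Q 1 ^ 2 * thetaPow Q 2 ^ 2 + thetaPow Q 2 * thetaPow Q 4 * thetaPow Q 5 ^ 2 =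
      thetaPow Q 3 ^ 2 * thetaPow Q 4 ^ 2 := by
  have h := thetaPow_weierstrass hQ hQ1 1 3 (c := 5) (by decide)
  norm_num only [thetaPow_six hQ, thetaPow_seven hQ, thetaPow_eight hQ, thetaPow_nine hQ,
    zpow_ofNat, zpow_one] at h
  linear_combination h

lemma thetaPow_weierstrass_one_four_five (hQ : Q ≠ 0) (hQ1 : ‖Q‖ < 1) :
    Q ^ 3 * thetaPow Q 1 ^ 4 + thetaPow Q 3 * thetaPow Q 5 ^ 3 = thetaPow Q 4 ^ 4 := by
  have h := thetaPow_weierstrass hQ hQ1 1 4 (c := 5) (by decide)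
  norm_num only [thetaPow_six hQ, thetaPow_seven hQ, thetaPow_eight hQ, thetaPow_nine hQ,
    zpow_ofNat, zpow_one] at h
  linear_combination h

lemma thetaPow_weierstrass_two_three_four (hQ : Q ≠ 0) (hQ1 : ‖Q‖ < 1) :
    Q * thetaPow Q 1 * thetaPow Q 2 ^ 2 * thetaPow Q 3 +
      thetaPow Q 1 * thetaPow Q 4 ^ 2 * thetaPow Q 5 =
      thetaPow Q 2 * thetaPow Q 3 ^ 2 * thetaPow Q 4 := by
  have h := thetaPow_weierstrass hQ hQ1 2 3 (c := 4) (by decide)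
  norm_num only [thetaPow_six hQ, thetaPow_seven hQ, thetaPow_eight hQ, thetaPow_nine hQ,
    zpow_ofNat, zpow_one] at h
  linear_combination h

lemma thetaLogDerivPow_combination (hQ : Q ≠ 0) (hQ1 : ‖Q‖ < 1) :
    thetaLogDerivPow Q (-3) - thetaLogDerivPow Q 4 - thetaLogDerivPow Q 2 -
        2 * (thetaLogDerivPow Q (-9) - thetaLogDerivPow Q 2 - thetaLogDerivPow Q (-4)) =
      thetaReg (Q ^ 10) 1 *
        (thetaPow Q 2 * thetaPow Q 4 ^ 2 / (thetaPow Q 1 ^ 2 * thetaPow Q 3 * thetaPow Q 5) -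
          Q ^ 2 * thetaPow Q 2 ^ 2 / thetaPow Q 4 ^ 3) := by
  obtain ⟨h1, h2, h3, h4, h5⟩ := thetaPow_one_to_five_ne_zero hQ hQ1
  have hone : 2 * thetaLogDerivPow Q 1 - thetaLogDerivPow Q 5 - thetaLogDerivPow Q (-3) =
      -(thetaReg (Q ^ 10) 1 *
        (thetaPow Q 2 * thetaPow Q 4 ^ 2 / (thetaPow Q 1 ^ 2 * thetaPow Q 3 * thetaPow Q 5))) := by
    have h := thetaPow_weierstrass_logDeriv hQ hQ1 (a := 1) (b := 4)
      (by decide) (by decide) (by decide)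
    norm_num only [thetaPow_neg hQ hQ1, zpow_neg, zpow_ofNat] at h
    rw [h]
    field_simp
  have hfour : 2 * thetaLogDerivPow Q 4 - thetaLogDerivPow Q 12 - thetaLogDerivPow Q (-4) =
      thetaReg (Q ^ 10) 1 * (Q ^ 2 * thetaPow Q 2 ^ 2 / thetaPow Q 4 ^ 3) := by
    have h := thetaPow_weierstrass_logDeriv hQ hQ1 (a := 4) (b := 8)
      (by decide) (by decide) (by decide)
    norm_num only [thetaPow_neg hQ hQ1, thetaPow_eight hQ, thetaPow_twelve hQ hQ1, zpow_neg,
      zpow_ofNat] at h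
    rw [h]
    field_simp
  have hneg4 := thetaLogDerivPow_neg hQ hQ1 (k := 4) (by decide)
  have hneg5 := thetaLogDerivPow_neg hQ hQ1 (k := 5) (by decide)
  have hshift1 := thetaLogDerivPow_ten_add hQ hQ1 (k := -9) (by decide)
  have hshift5 := thetaLogDerivPow_ten_add hQ hQ1 (k := -5) (by decide)
  have hshift12 := thetaLogDerivPow_ten_add hQ hQ1 (k := 2) (by decide)
  norm_num only at hshift1 hshift5 hshift12
  linear_combination -hone - hfour + 2 * hshift1 + hneg4 - hshift12 - hshift5 / 2 - hneg5 / 2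

/-- With `Q = q⁵`, the theta quotient in the coefficient of `q²` of the 5-dissection of the rank
differences. -/
noncomputable def rankCoeff₂ (Q : ℂ) : ℂ := -Q * thetaPow Q 1 / (thetaPow Q 4 * thetaPow Q 5)

/-- With `Q = q⁵`, the theta quotient in the coefficient of `q³` of the 5-dissection of the rank
differences. -/
noncomputable def rankCoeff₃ (Q : ℂ) : ℂ := -1 / thetaPow Q 4

/-- With `Q = q⁵`, the theta quotient in the coefficient of `q⁴` of the 5-dissection of the rank
differences. -/
noncomputable def rankCoeff₄ (Q : ℂ) : ℂ :=
  psiCoeff₀ Q * (thetaPow Q 1 / (thetaPow Q 4 * thetaPow Q 5))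

/-- With `Q = q⁵`, the theta quotient in the coefficient of `q⁰` of the 5-dissection of the rank
differences. -/
noncomputable def rankCoeff₀ (Q : ℂ) : ℂ := -psiCoeff₀ Q * rankCoeff₃ Q - psiCoeff₁ Q * rankCoeff₂ Q

lemma psiCoeff_mul_rankCoeff_residue_zero (hQ : Q ≠ 0) (hQ1 : ‖Q‖ < 1) :
    psiCoeff₀ Q * rankCoeff₀ Q + Q * (psiCoeff₁ Q * rankCoeff₄ Q + rankCoeff₂ Q) =
      thetaPow Q 2 * thetaPow Q 4 ^ 2 / (thetaPow Q 1 ^ 2 * thetaPow Q 3 * thetaPow Q 5) -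
        Q ^ 2 * thetaPow Q 2 ^ 2 / thetaPow Q 4 ^ 3 := by
  obtain ⟨h1, h2, h3, h4, h5⟩ := thetaPow_one_to_five_ne_zero hQ hQ1
  have h123 := thetaPow_weierstrass_one_two_three hQ hQ1
  have h124 := thetaPow_weierstrass_one_two_four hQ hQ1
  have h125 := thetaPow_weierstrass_one_two_five hQ hQ1
  have h135 := thetaPow_weierstrass_one_three_five hQ hQ1
  have h145 := thetaPow_weierstrass_one_four_five hQ hQ1
  simp only [rankCoeff₀, rankCoeff₂, rankCoeff₃, rankCoeff₄, psiCoeff₀, psiCoeff₁]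
  generalize thetaPow Q 1 = u₁ at *
  generalize thetaPow Q 2 = u₂ at *
  generalize thetaPow Q 3 = u₃ at *
  generalize thetaPow Q 4 = u₄ at *
  generalize thetaPow Q 5 = u₅ at *
  field_simp
  -- The coefficients express the identity in the ideal generated by the three-term relations.
  linear_combination Q ^ 2 * u₁ ^ 3 * u₅ ^ 2 * h123 - Q * u₂ ^ 3 * u₄ * u₅ * h123 +
    Q * u₁ * u₂ ^ 2 * u₅ ^ 2 * h124 - Q * u₁ * u₂ * u₃ ^ 2 * u₄ * h124 -
    Q * u₁ ^ 2 * u₃ * u₅ ^ 2 * h125 + u₁ * u₅ ^ 4 * h125 + Q * u₂ ^ 4 * u₅ * h125 +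
    u₂ * u₃ * u₄ ^ 3 * h125 + u₁ * u₂ * u₄ * u₅ ^ 2 * h135 - u₁ ^ 2 * u₅ ^ 3 * h145

lemma psiCoeff_mul_rankCoeff_residue_one (hQ : Q ≠ 0) (hQ1 : ‖Q‖ < 1) :
    psiCoeff₁ Q * rankCoeff₀ Q + Q * rankCoeff₃ Q =
      thetaPow Q 3 / (thetaPow Q 1 * thetaPow Q 2) := by
  obtain ⟨h1, h2, h3, h4, _⟩ := thetaPow_one_to_five_ne_zero hQ hQ1
  have h124 := thetaPow_weierstrass_one_two_four hQ hQ1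
  have h135 := thetaPow_weierstrass_one_three_five hQ hQ1
  simp only [rankCoeff₀, rankCoeff₂, rankCoeff₃, psiCoeff₀, psiCoeff₁]
  field_simp
  linear_combination thetaPow Q 4 * h135 - Q * thetaPow Q 2 * h124

lemma psiCoeff_mul_rankCoeff_residue_two (Q : ℂ) :
    psiCoeff₀ Q * rankCoeff₂ Q + Q * rankCoeff₄ Q = 0 := by
  rw [rankCoeff₂, rankCoeff₄]
  ring

lemma psiCoeff_mul_rankCoeff_residue_three (Q : ℂ) :
    rankCoeff₀ Q + psiCoeff₀ Q * rankCoeff₃ Q + psiCoeff₁ Q * rankCoeff₂ Q = 0 := by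
  rw [rankCoeff₀]
  ring

lemma psiCoeff_mul_rankCoeff_residue_four (hQ : Q ≠ 0) (hQ1 : ‖Q‖ < 1) :
    psiCoeff₀ Q * rankCoeff₄ Q + psiCoeff₁ Q * rankCoeff₃ Q =
      -2 * Q * thetaPow Q 1 / (thetaPow Q 3 * thetaPow Q 4) := by
  obtain ⟨h1, h2, h3, h4, _⟩ := thetaPow_one_to_five_ne_zero hQ hQ1
  have h124 := thetaPow_weierstrass_one_two_four hQ hQ1
  have h234 := thetaPow_weierstrass_two_three_four hQ hQ1
  simp only [rankCoeff₃, rankCoeff₄, psiCoeff₀, psiCoeff₁]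
  field_simp
  linear_combination thetaPow Q 2 * thetaPow Q 3 * h124 + thetaPow Q 1 * thetaPow Q 4 * h234

end ThetaQuotients

/-! ### Dissection modulo five -/

section Dissection

lemma hasSum_of_hasSum_residues {M : Type*} [AddCommMonoid M] [TopologicalSpace M] [ContinuousAdd M]
    {N : ℕ} [NeZero N] {f : ℤ → M} {r : Fin N → ℤ} (hr : ∀ i, r i % N = (i : ℕ)) {a : Fin N → M}
    (h : ∀ i, HasSum (fun m : ℤ ↦ f (N * m + r i)) (a i)) : HasSum f (∑ i, a i) := by
  have hN : (N : ℤ) ≠ 0 := by exact_mod_cast NeZero.ne N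
  have hclass (i : Fin N) : HasSum (fun n : ℤ ↦ if n % N = (i : ℕ) then f n else 0) (a i) := by
    have hinj : Function.Injective fun m : ℤ ↦ N * m + r i := fun _ _ hmn ↦
      mul_left_cancel₀ hN (add_right_cancel hmn)
    refine (hinj.hasSum_iff fun n hn ↦ if_neg fun hni ↦ hn ?_).1 ?_
    · obtain ⟨m, hm⟩ : (N : ℤ) ∣ n - r i := Int.ModEq.dvd ((hr i).trans hni.symm)
      exact ⟨m, by simp [← hm]⟩
    · simpa [Function.comp_def, hr i] using h i
  convert hasSum_sum (s := Finset.univ) fun i _ ↦ hclass i with n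
  have hlt : (n % N).toNat < N := by
    have := Int.emod_lt_of_pos n (b := N) (by have := NeZero.pos N; omega)
    omega
  have hn : n % N = (n % N).toNat := (Int.toNat_of_nonneg (Int.emod_nonneg n hN)).symm
  rw [Finset.sum_eq_single ⟨_, hlt⟩ (fun i _ hi ↦ if_neg fun h ↦ hi ?_) (by simp), if_pos hn]
  exact Fin.ext (by simp [h])

variable {q : ℂ}

/-- The `n`-th summand of the Lambert series `∑_{n ≠ 0} q^{2n²+an} / (1 - q^{10n})`, whose
combinations generate the rank differences. -/
noncomputable def rankTerm (q : ℂ) (a n : ℤ) : ℂ :=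
  if n = 0 then 0 else q ^ (2 * n ^ 2 + a * n) / (1 - q ^ (10 * n))

lemma hasSum_thetaSeriesPow_residue (hq : q ≠ 0) (hq1 : ‖q‖ < 1) (a r : ℤ) :
    HasSum (fun m : ℤ ↦ q ^ (2 * (5 * m + r) ^ 2 + a * (5 * m + r)))
      (q ^ (2 * r ^ 2 + a * r) * thetaSeriesPow (q ^ 5) (4 * r + a)) := by
  have hnome : ‖(q ^ 5) ^ 10‖ < 1 := by
    simpa only [← pow_mul] using norm_pow_lt_one (n := 5 * 10) (by decide) hq1
  refine (((summable_norm_thetaSeries hnome ((q ^ 5) ^ (4 * r + a))).of_norm.hasSum).mul_left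
    (q ^ (2 * r ^ 2 + a * r))).congr_fun fun m ↦ ?_
  simp only [← zpow_natCast, ← zpow_mul, ← zpow_add₀ hq]
  congr 1
  push_cast
  ring

lemma rankTerm_residue (hq : q ≠ 0) (a r m : ℤ) (h : 5 * m + r ≠ 0) :
    rankTerm q a (5 * m + r) = q ^ (2 * r ^ 2 + a * r) *
      lambertTerm ((q ^ 5) ^ 10) ((q ^ 5) ^ (2 * r)) ((q ^ 5) ^ (4 * r + a)) m := by
  rw [rankTerm, if_neg h, lambertTerm, ← mul_div_assoc]
  simp only [← zpow_natCast, ← zpow_mul, ← zpow_add₀ hq]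
  congr 1
  · congr 1
    push_cast
    ring
  · congr 2
    push_cast
    ring

lemma hasSum_rankTerm_residue (hq : q ≠ 0) (hq1 : ‖q‖ < 1) (a : ℤ) {r : ℤ} (hr : r % 5 ≠ 0) :
    HasSum (fun m : ℤ ↦ rankTerm q a (5 * m + r))
      (q ^ (2 * r ^ 2 + a * r) * lambertPow (q ^ 5) (2 * r) (4 * r + a)) := by
  have hQ : q ^ 5 ≠ 0 := pow_ne_zero _ hq
  have hQ1 : ‖q ^ 5‖ < 1 := norm_pow_lt_one (by decide) hq1
  have hw : (q ^ 5) ^ 10 ≠ 0 := pow_ne_zero _ hQ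
  have hw1 : ‖(q ^ 5) ^ 10‖ < 1 := norm_pow_lt_one (by decide) hQ1
  refine (((summable_lambertTerm hw hw1 (zpow_ne_zero (2 * r) hQ) ((q ^ 5) ^ (4 * r + a))
    fun m _ ↦ zpow_mul_ne_one_of_theta_ne_zero hw hw1
      (thetaPow_ne_zero hQ hQ1 (k := 2 * r) (by omega)) m).hasSum).mul_left _).congr_fun fun m ↦
    (rankTerm_residue hq a r m (by omega))

lemma hasSum_rankTerm_residue_zero (hq : q ≠ 0) (hq1 : ‖q‖ < 1) (a : ℤ) :
    HasSum (fun m : ℤ ↦ rankTerm q a (5 * m)) (lambertRegPow (q ^ 5) a) := by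
  have hQ : q ^ 5 ≠ 0 := pow_ne_zero _ hq
  have hQ1 : ‖q ^ 5‖ < 1 := norm_pow_lt_one (by decide) hq1
  have hw1 : ‖(q ^ 5) ^ 10‖ < 1 := norm_pow_lt_one (by decide) hQ1
  refine (summable_lambertReg (pow_ne_zero _ hQ) hw1 one_ne_zero ((q ^ 5) ^ a) fun m hm ↦ by
    rw [mul_one]; exact zpow_ne_one_of_norm_lt_one hw1 hm).hasSum.congr_fun fun m ↦ ?_
  rcases eq_or_ne m 0 with rfl | hm
  · simp [rankTerm]
  · simpa [hm] using rankTerm_residue hq a 0 m (by omega)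

lemma hasSum_psi (hq : q ≠ 0) (hq1 : ‖q‖ < 1) :
    HasSum (fun n : ℤ ↦ q ^ (2 * n ^ 2 + n))
      (thetaSeriesPow (q ^ 5) 5 * (psiCoeff₀ (q ^ 5) + q * psiCoeff₁ (q ^ 5) + q ^ 3)) := by
  have hQ : q ^ 5 ≠ 0 := pow_ne_zero _ hq
  have hQ1 : ‖q ^ 5‖ < 1 := norm_pow_lt_one (by decide) hq1
  have hsum := hasSum_of_hasSum_residues (N := 5) (f := fun n : ℤ ↦ q ^ (2 * n ^ 2 + n))
    (r := ![0, 1, 2, 3, -1]) (by decide)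
    (a := ![thetaSeriesPow (q ^ 5) 1, q ^ 3 * thetaSeriesPow (q ^ 5) 5,
      q ^ 10 * thetaSeriesPow (q ^ 5) 9, q ^ 21 * thetaSeriesPow (q ^ 5) 13,
      q * thetaSeriesPow (q ^ 5) (-3)]) fun i ↦ by
    fin_cases i
    · simpa using hasSum_thetaSeriesPow_residue hq hq1 1 0
    · simpa using hasSum_thetaSeriesPow_residue hq hq1 1 1
    · simpa using hasSum_thetaSeriesPow_residue hq hq1 1 2
    · simpa using hasSum_thetaSeriesPow_residue hq hq1 1 3
    · simpa using hasSum_thetaSeriesPow_residue hq hq1 1 (-1)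
  convert hsum using 1
  simp only [Fin.sum_univ_five, Matrix.cons_val]
  linear_combination -thetaSeriesPow_one_add hQ hQ1 - q * thetaSeriesPow_neg_three_add hQ hQ1

lemma hasSum_rankTerm_one (hq : q ≠ 0) (hq1 : ‖q‖ < 1) :
    HasSum (rankTerm q 1)
      (lambertRegPow (q ^ 5) 1 + q ^ 3 * lambertPow (q ^ 5) 2 5 + q ^ 10 * lambertPow (q ^ 5) 4 9 +
        q ^ 21 * lambertPow (q ^ 5) 6 13 + q * lambertPow (q ^ 5) (-2) (-3)) := by
  have hsum := hasSum_of_hasSum_residues (N := 5) (f := rankTerm q 1)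
    (r := ![0, 1, 2, 3, -1]) (by decide)
    (a := ![lambertRegPow (q ^ 5) 1, q ^ 3 * lambertPow (q ^ 5) 2 5,
      q ^ 10 * lambertPow (q ^ 5) 4 9, q ^ 21 * lambertPow (q ^ 5) 6 13,
      q * lambertPow (q ^ 5) (-2) (-3)]) fun i ↦ by
    fin_cases i
    · simpa using hasSum_rankTerm_residue_zero hq hq1 1
    · simpa using hasSum_rankTerm_residue hq hq1 1 (r := 1) (by decide)
    · simpa using hasSum_rankTerm_residue hq hq1 1 (r := 2) (by decide)
    · simpa using hasSum_rankTerm_residue hq hq1 1 (r := 3) (by decide)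
    · simpa using hasSum_rankTerm_residue hq hq1 1 (r := -1) (by decide)
  simpa only [Fin.sum_univ_five, Matrix.cons_val] using hsum

lemma hasSum_rankTerm_three (hq : q ≠ 0) (hq1 : ‖q‖ < 1) :
    HasSum (rankTerm q 3)
      (lambertRegPow (q ^ 5) 3 + q ^ 5 * lambertPow (q ^ 5) 2 7 + q ^ 14 * lambertPow (q ^ 5) 4 11 +
        q ^ 2 * lambertPow (q ^ 5) (-4) (-5) + q⁻¹ * lambertPow (q ^ 5) (-2) (-1)) := by
  have hsum := hasSum_of_hasSum_residues (N := 5) (f := rankTerm q 3)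
    (r := ![0, 1, 2, -2, -1]) (by decide)
    (a := ![lambertRegPow (q ^ 5) 3, q ^ 5 * lambertPow (q ^ 5) 2 7,
      q ^ 14 * lambertPow (q ^ 5) 4 11, q ^ 2 * lambertPow (q ^ 5) (-4) (-5),
      q⁻¹ * lambertPow (q ^ 5) (-2) (-1)]) fun i ↦ by
    fin_cases i
    · simpa using hasSum_rankTerm_residue_zero hq hq1 3
    · simpa using hasSum_rankTerm_residue hq hq1 3 (r := 1) (by decide)
    · simpa using hasSum_rankTerm_residue hq hq1 3 (r := 2) (by decide)
    · simpa using hasSum_rankTerm_residue hq hq1 3 (r := -2) (by decide)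
    · simpa using hasSum_rankTerm_residue hq hq1 3 (r := -1) (by decide)
  simpa only [Fin.sum_univ_five, Matrix.cons_val] using hsum

-- `lambertPow (q ^ 5) 2 5` and `lambertPow (q ^ 5) (-4) (-5)` are the two Lambert series that do
-- not cancel; no component `q ^ 1 * f (q ^ 5)` is left on the right.
theorem rankTerm_dissection (hq : q ≠ 0) (hq1 : ‖q‖ < 1) :
    thetaSeriesPow (q ^ 5) 5 * (2 * ∑' n, rankTerm q 3 n - ∑' n, rankTerm q 1 n) =
      (∑' n : ℤ, q ^ (2 * n ^ 2 + n)) *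
        ((thetaReg ((q ^ 5) ^ 10) 1 * rankCoeff₀ (q ^ 5) - lambertPow (q ^ 5) 2 5) +
          q ^ 2 * (thetaReg ((q ^ 5) ^ 10) 1 * rankCoeff₂ (q ^ 5)) +
          q ^ 3 * (thetaReg ((q ^ 5) ^ 10) 1 * rankCoeff₃ (q ^ 5)) +
          q ^ 4 * (thetaReg ((q ^ 5) ^ 10) 1 * rankCoeff₄ (q ^ 5) +
            2 * lambertPow (q ^ 5) (-4) (-5) / q ^ 5)) := by
  rw [(hasSum_psi hq hq1).tsum_eq, (hasSum_rankTerm_one hq hq1).tsum_eq,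
    (hasSum_rankTerm_three hq hq1).tsum_eq]
  obtain ⟨Q, hQq⟩ : ∃ Q, Q = q ^ 5 := ⟨_, rfl⟩
  have hQ : Q ≠ 0 := hQq ▸ pow_ne_zero _ hq
  have hQ1 : ‖Q‖ < 1 := hQq ▸ norm_pow_lt_one (by decide) hq1
  have hclass₀ := thetaLogDerivPow_combination hQ hQ1
  rw [← psiCoeff_mul_rankCoeff_residue_zero hQ hQ1] at hclass₀
  have hreg₁ := lambertRegPow_one_add hQ hQ1
  have hreg₃ := lambertRegPow_three_add hQ hQ1
  have hclass₁ := lambertPow_neg_two_add_lambertPow_six hQ hQ1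
  rw [mul_div_assoc, ← psiCoeff_mul_rankCoeff_residue_one hQ hQ1] at hclass₁
  have hclass₄ : 2 * (lambertPow Q (-2) (-1) + Q ^ 3 * lambertPow Q 4 11) =
      2 * (psiCoeff₀ Q * lambertPow Q (-4) (-5)) + thetaReg (Q ^ 10) 1 * Q *
        (psiCoeff₀ Q * rankCoeff₄ Q + psiCoeff₁ Q * rankCoeff₃ Q) := by
    rw [lambertPow_neg_two_add_lambertPow_four hQ hQ1, psiCoeff_mul_rankCoeff_residue_four hQ hQ1]
    ring
  rw [← hQq, mul_assoc]
  congr 1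
  field_simp
  subst hQq
  linear_combination q ^ 5 * (2 * q * hreg₃ - q * hreg₁ - q ^ 2 * hclass₁ + hclass₄ + q * hclass₀ -
    thetaReg ((q ^ 5) ^ 10) 1 * (q ^ 3 * psiCoeff_mul_rankCoeff_residue_two (q ^ 5) +
      q ^ 4 * psiCoeff_mul_rankCoeff_residue_three (q ^ 5)))

end Dissection

/-! ### Removing the largest part -/

/-- The multisets of parts of the partitions without repeated odd parts. -/
structure IsOddDistinct (s : Multiset ℕ) : Prop where
  zero_notMem : 0 ∉ s
  count_le_one : ∀ i, Odd i → s.count i ≤ 1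

/-- The partitions without repeated odd parts of all nonnegative integers; the partitioned integer
is the sum of the multiset. -/
abbrev OddDistinctPartition : Type := {s : Multiset ℕ // IsOddDistinct s}

/-- The M₂-rank in terms of the multiset of parts. -/
def m2RankParts (s : Multiset ℕ) : ℤ := ((s.sup + 1) / 2 : ℕ) - (Multiset.card s : ℤ)

lemma isOddDistinct_zero : IsOddDistinct 0 := ⟨by simp, by simp⟩

lemma m2RankParts_zero : m2RankParts 0 = 0 := by simp [m2RankParts]

lemma count_map_add_two (s : Multiset ℕ) (a : ℕ) :
    (s.map (· + 2)).count (a + 2) = s.count a :=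
  Multiset.count_map_eq_count' _ _ (add_left_injective 2) a

/-- A partition without repeated odd parts, split into its largest part `2K + 1 - ε` and the
multiset `ρ` of the remaining parts. The empty partition is encoded by `K = 0`, `ε = 1`, `ρ = 0`,
that is, by a largest part equal to `0`. -/
@[ext]
structure LargestPartSplit where
  K : ℕ
  ε : ℕ
  ρ : Multiset ℕ
  ε_le_one : ε ≤ 1
  isOddDistinct : IsOddDistinct ρ
  le_two_mul : ∀ i ∈ ρ, i ≤ 2 * K

namespace LargestPartSplit

/-- The largest part. -/
def largest (t : LargestPartSplit) : ℕ := 2 * t.K + 1 - t.ε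

/-- The parts of the partition encoded by a splitting. -/
def parts (t : LargestPartSplit) : Multiset ℕ := if t.largest = 0 then 0 else t.largest ::ₘ t.ρ

lemma K_eq_zero_and_ε_eq_one_of_largest_eq_zero {t : LargestPartSplit} (h : t.largest = 0) :
    t.K = 0 ∧ t.ε = 1 := by
  have := t.ε_le_one
  rw [largest] at h
  omega

lemma ρ_eq_zero_of_largest_eq_zero {t : LargestPartSplit} (h : t.largest = 0) : t.ρ = 0 :=
  Multiset.eq_zero_of_forall_notMem fun i hi ↦ t.isOddDistinct.zero_notMem <| by
    have := t.le_two_mul i hi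
    rwa [show i = 0 by have := K_eq_zero_and_ε_eq_one_of_largest_eq_zero h; omega] at hi

lemma le_largest (t : LargestPartSplit) {i : ℕ} (hi : i ∈ t.ρ) : i ≤ t.largest := by
  have := t.le_two_mul i hi
  have := t.ε_le_one
  rw [largest]
  omega

lemma sup_parts (t : LargestPartSplit) : t.parts.sup = t.largest := by
  rw [parts]
  split_ifs with h
  · simp [h]
  · rw [Multiset.sup_cons, sup_eq_left]
    exact Multiset.sup_le.mpr fun i ↦ t.le_largest

lemma largest_notMem_of_odd {t : LargestPartSplit} (h : Odd t.largest) : t.largest ∉ t.ρ := by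
  intro hmem
  have := t.le_two_mul _ hmem
  have := t.ε_le_one
  obtain ⟨j, hj⟩ := h
  rw [largest] at *
  omega

lemma isOddDistinct_parts (t : LargestPartSplit) : IsOddDistinct t.parts := by
  rw [parts]
  split_ifs with h
  · exact isOddDistinct_zero
  refine ⟨?_, fun i hi ↦ ?_⟩
  · simpa [eq_comm, h] using t.isOddDistinct.zero_notMem
  · rcases eq_or_ne i t.largest with rfl | hne
    · simp [largest_notMem_of_odd hi]
    · simpa [Multiset.count_cons_of_ne hne] using t.isOddDistinct.count_le_one i hi

lemma sum_parts (t : LargestPartSplit) : t.parts.sum + t.ε = 2 * t.K + 1 + t.ρ.sum := by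
  rw [parts]
  split_ifs with h
  · have := K_eq_zero_and_ε_eq_one_of_largest_eq_zero h
    simp [ρ_eq_zero_of_largest_eq_zero h, this]
  · have := t.ε_le_one
    rw [Multiset.sum_cons, largest]
    omega

lemma parts_injective : Function.Injective parts := by
  intro t t' h
  have hlargest : t.largest = t'.largest := by rw [← sup_parts, ← sup_parts, h]
  have hKε : t.K = t'.K ∧ t.ε = t'.ε := by
    have := t.ε_le_one
    have := t'.ε_le_one
    rw [largest, largest] at hlargest
    omega
  refine LargestPartSplit.ext hKε.1 hKε.2 ?_
  by_cases h0 : t.largest = 0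
  · rw [ρ_eq_zero_of_largest_eq_zero h0, ρ_eq_zero_of_largest_eq_zero (hlargest ▸ h0)]
  · rwa [parts, parts, if_neg h0, if_neg (hlargest ▸ h0), hlargest, Multiset.cons_inj_right] at h

lemma exists_parts_eq {s : Multiset ℕ} (hs : IsOddDistinct s) :
    ∃ t : LargestPartSplit, t.parts = s := by
  rcases eq_or_ne s 0 with rfl | hs0
  · exact ⟨⟨0, 1, 0, le_rfl, isOddDistinct_zero, by simp⟩, rfl⟩
  obtain ⟨l, hl, hmax⟩ : ∃ l ∈ s, ∀ i ∈ s, i ≤ l := by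
    simpa using Finset.exists_max_image s.toFinset id (by simpa using hs0)
  have hlargest : 2 * (l / 2) + 1 - (1 - l % 2) = l := by omega
  have hl0 : l ≠ 0 := fun h ↦ hs.zero_notMem (h ▸ hl)
  have hle (i : ℕ) (hi : i ∈ s.erase l) : i ≤ 2 * (l / 2) := by
    have hil := hmax i (Multiset.mem_of_mem_erase hi)
    rcases Nat.even_or_odd l with ⟨j, hj⟩ | hodd
    · omega
    · have hne : i ≠ l := by
        rintro rfl
        have := Multiset.count_erase_self i s ▸ Multiset.count_pos.mpr hi
        have := hs.count_le_one i hodd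
        omega
      have := Nat.odd_iff.mp hodd
      omega
  exact ⟨⟨l / 2, 1 - l % 2, s.erase l, by omega,
    ⟨fun h ↦ hs.zero_notMem (Multiset.mem_of_mem_erase h), fun i hi ↦
      (Multiset.count_le_of_le i (Multiset.erase_le l s)).trans (hs.count_le_one i hi)⟩, hle⟩, by
    simpa [parts, largest, hlargest, hl0] using Multiset.cons_erase hl⟩

/-- The encoding of partitions without repeated odd parts by their splittings. -/
noncomputable def equivPartition : LargestPartSplit ≃ OddDistinctPartition :=
  Equiv.ofBijective (fun t ↦ ⟨t.parts, t.isOddDistinct_parts⟩)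
    ⟨fun _ _ h ↦ parts_injective (congrArg Subtype.val h), fun s ↦
      (exists_parts_eq s.2).imp fun _ ht ↦ Subtype.ext ht⟩

/-- The multiset `ρ` with all parts increased by `2`, padded with `ε` parts `1` and with parts `2`
up to `k` parts in all. -/
def pad (t : LargestPartSplit) (k : ℕ) : Multiset ℕ :=
  t.ρ.map (· + 2) + Multiset.replicate (k - t.ε - Multiset.card t.ρ) 2 + Multiset.replicate t.ε 1

variable (t : LargestPartSplit) (k : ℕ)

lemma card_pad {k : ℕ} (h : Multiset.card t.ρ + t.ε ≤ k) : Multiset.card (t.pad k) = k := by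
  simp only [pad, Multiset.card_add, Multiset.card_map, Multiset.card_replicate]
  omega

lemma sum_pad {k : ℕ} (h : Multiset.card t.ρ + t.ε ≤ k) :
    (t.pad k).sum + t.ε = t.ρ.sum + 2 * k := by
  simp only [pad, Multiset.sum_add, Multiset.sum_map_add, Multiset.map_id', Multiset.map_const',
    Multiset.sum_replicate, smul_eq_mul]
  omega

lemma count_zero_pad : (t.pad k).count 0 = 0 := by
  simp [pad, Multiset.count_replicate]

lemma count_one_pad : (t.pad k).count 1 = t.ε := by
  simp [pad, Multiset.count_replicate]

lemma count_two_pad : (t.pad k).count 2 = k - t.ε - Multiset.card t.ρ := by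
  simp [pad, Multiset.count_replicate, t.isOddDistinct.zero_notMem]

lemma count_add_three_pad (a : ℕ) : (t.pad k).count (a + 3) = t.ρ.count (a + 1) := by
  simpa [pad, Multiset.count_replicate] using count_map_add_two t.ρ (a + 1)

lemma isOddDistinct_pad : IsOddDistinct (t.pad k) := by
  refine ⟨Multiset.count_eq_zero.mp (t.count_zero_pad k), fun i hi ↦ ?_⟩
  match i, hi with
  | 2, hi => exact absurd hi (by decide)
  | 1, _ => exact (t.count_one_pad k).trans_le t.ε_le_one
  | a + 3, ha =>
    exact (t.count_add_three_pad k a).trans_le (t.isOddDistinct.count_le_one _ (by grind))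

lemma le_of_mem_pad {i : ℕ} (hi : i ∈ t.pad k) : i ≤ 2 * t.K + 2 := by
  simp only [pad, Multiset.mem_add, Multiset.mem_map, Multiset.mem_replicate] at hi
  rcases hi with (⟨a, ha, rfl⟩ | h) | h
  · have := t.le_two_mul a ha
    omega
  all_goals omega

variable {t k} in
lemma eq_of_pad_eq {t' : LargestPartSplit} (hK : t.K = t'.K) (h : t.pad k = t'.pad k) :
    t = t' := by
  refine LargestPartSplit.ext hK ?_ (Multiset.ext.mpr fun a ↦ ?_)
  · rw [← t.count_one_pad k, h, t'.count_one_pad]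
  · match a with
    | 0 => simp [t.isOddDistinct.zero_notMem, t'.isOddDistinct.zero_notMem]
    | a + 1 => rw [← t.count_add_three_pad k, h, t'.count_add_three_pad]

end LargestPartSplit

/-- The parts exceeding `2`, decreased by `2`; this recovers `ρ` from `LargestPartSplit.pad`. -/
def shrinkParts (s : Multiset ℕ) : Multiset ℕ := (s.filter (2 < ·)).map (· - 2)

section Shrink

variable {s : Multiset ℕ}

lemma count_shrinkParts (s : Multiset ℕ) (a : ℕ) :
    (shrinkParts s).count (a + 1) = s.count (a + 3) := by
  have hmap : (shrinkParts s).map (· + 2) = s.filter (2 < ·) := by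
    rw [shrinkParts, Multiset.map_map]
    refine (Multiset.map_congr rfl fun i hi ↦ ?_).trans (Multiset.map_id _)
    exact Nat.sub_add_cancel (Multiset.mem_filter.mp hi).2.le
  rw [← count_map_add_two, hmap, Multiset.count_filter_of_pos (by omega)]

lemma isOddDistinct_shrinkParts (hs : ∀ i, Odd i → s.count i ≤ 1) :
    IsOddDistinct (shrinkParts s) := by
  refine ⟨fun h ↦ ?_, fun i hi ↦ ?_⟩
  · obtain ⟨a, ha, h0⟩ := Multiset.mem_map.mp h
    have := (Multiset.mem_filter.mp ha).2
    omega
  · match i, hi with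
    | a + 1, ha => exact (count_shrinkParts s a).trans_le (hs _ (by grind))

lemma card_eq_count_one_add_count_two_add_card_shrinkParts (hs : 0 ∉ s) :
    Multiset.card s = s.count 1 + s.count 2 + Multiset.card (shrinkParts s) := by
  rw [shrinkParts, Multiset.card_map]
  induction s using Multiset.induction with
  | empty => simp
  | cons a s ih =>
    obtain ⟨ha, hs⟩ : a ≠ 0 ∧ 0 ∉ s := by simpa [eq_comm] using hs
    rw [Multiset.card_cons, ih hs, Multiset.count_cons, Multiset.count_cons, Multiset.filter_cons,
      Multiset.card_add]
    split_ifs <;> simp <;> omega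

lemma exists_pad_eq (hs : IsOddDistinct s) {K : ℕ} (hK : ∀ i ∈ s, i ≤ 2 * K + 2) :
    ∃ t : LargestPartSplit, t.K = K ∧ Multiset.card t.ρ + t.ε ≤ Multiset.card s ∧
      t.pad (Multiset.card s) = s := by
  have hcard := card_eq_count_one_add_count_two_add_card_shrinkParts hs.zero_notMem
  let t : LargestPartSplit := ⟨K, s.count 1, shrinkParts s, hs.count_le_one 1 odd_one,
    isOddDistinct_shrinkParts hs.count_le_one, fun i hi ↦ by
      obtain ⟨a, ha, rfl⟩ := Multiset.mem_map.mp hi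
      have := hK a (Multiset.mem_filter.mp ha).1
      omega⟩
  refine ⟨t, rfl, ?_, Multiset.ext.mpr fun a ↦ ?_⟩
  · change Multiset.card (shrinkParts s) + s.count 1 ≤ _
    omega
  · match a with
    | 0 => rw [t.count_zero_pad, Multiset.count_eq_zero_of_notMem hs.zero_notMem]
    | 1 => exact t.count_one_pad _
    | 2 =>
      rw [t.count_two_pad]
      change _ - s.count 1 - Multiset.card (shrinkParts s) = _
      omega
    | a + 3 => exact (t.count_add_three_pad _ a).trans (count_shrinkParts s a)

end Shrink

/-- The M₂-rank, with the value `-1` at the empty partition. This is the value for which the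
formula `m2RankLow_parts` also covers the empty partition. -/
def m2RankLow (s : Multiset ℕ) : ℤ := if s = 0 then -1 else m2RankParts s

/-- The M₂-rank, with the value `1` at the empty partition. This is the value for which
`m2RankHigh_le_neg_iff` also covers the empty partition. -/
def m2RankHigh (s : Multiset ℕ) : ℤ := if s = 0 then 1 else m2RankParts s

lemma m2RankLow_parts (t : LargestPartSplit) :
    m2RankLow t.parts = t.K - t.ε - Multiset.card t.ρ := by
  rw [m2RankLow, m2RankParts, t.sup_parts, LargestPartSplit.parts]
  by_cases h : t.largest = 0
  · have := LargestPartSplit.K_eq_zero_and_ε_eq_one_of_largest_eq_zero h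
    simp [h, LargestPartSplit.ρ_eq_zero_of_largest_eq_zero h, this]
  · have := t.ε_le_one
    rw [if_neg h, if_neg (Multiset.cons_ne_zero), Multiset.card_cons, LargestPartSplit.largest]
    omega

lemma m2RankHigh_le_neg_iff {s : Multiset ℕ} (hs : 0 ∉ s) (m : ℤ) :
    m2RankHigh s ≤ -m ↔
      ∃ K : ℕ, (K : ℤ) = Multiset.card s - m - 1 ∧ ∀ i ∈ s, i ≤ 2 * K + 2 := by
  rcases eq_or_ne s 0 with rfl | hs0
  · simp only [m2RankHigh, if_pos, Multiset.card_zero, Multiset.notMem_zero, false_imp_iff,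
      implies_true, and_true]
    exact ⟨fun h ↦ ⟨(-m - 1).toNat, by omega⟩, fun ⟨K, hK⟩ ↦ by omega⟩
  rw [m2RankHigh, if_neg hs0, m2RankParts]
  constructor
  · intro h
    obtain ⟨a, ha⟩ := Multiset.exists_mem_of_ne_zero hs0
    have ha0 : a ≠ 0 := fun h ↦ hs (h ▸ ha)
    have := Multiset.le_sup ha
    refine ⟨(Multiset.card s - m - 1).toNat, by omega, fun i hi ↦ ?_⟩
    have := Multiset.le_sup hi
    omega
  · rintro ⟨K, hK, hle⟩
    have := Multiset.sup_le.mpr hle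
    omega

lemma card_add_ε_le_of_le_m2RankLow {t : LargestPartSplit} {m : ℤ}
    (h : -m - 1 ≤ m2RankLow t.parts) :
    Multiset.card t.ρ + t.ε ≤ (t.K + m + 1).toNat ∧ 0 ≤ t.K + m + 1 := by
  rw [m2RankLow_parts] at h
  omega

lemma pad_bijOn (m : ℤ) :
    Set.BijOn (fun t : LargestPartSplit ↦
        (⟨t.pad (t.K + m + 1).toNat, t.isOddDistinct_pad _⟩ : OddDistinctPartition))
      {t | -m - 1 ≤ m2RankLow t.parts} {s | m2RankHigh s.1 ≤ -m} := by
  refine ⟨fun t ht ↦ ?_, fun t ht t' ht' h ↦ ?_, fun s hs ↦ ?_⟩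
  · obtain ⟨hcard, hK⟩ := card_add_ε_le_of_le_m2RankLow ht
    refine (m2RankHigh_le_neg_iff (t.isOddDistinct_pad _).zero_notMem m).mpr
      ⟨t.K, ?_, fun i hi ↦ t.le_of_mem_pad _ hi⟩
    rw [t.card_pad hcard]
    omega
  · obtain ⟨hcard, hK⟩ := card_add_ε_le_of_le_m2RankLow ht
    obtain ⟨hcard', hK'⟩ := card_add_ε_le_of_le_m2RankLow ht'
    have hpad : t.pad (t.K + m + 1).toNat = t'.pad (t'.K + m + 1).toNat := congrArg Subtype.val h
    have hk : (t.K + m + 1).toNat = (t'.K + m + 1).toNat := by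
      rw [← t.card_pad hcard, hpad, t'.card_pad hcard']
    exact LargestPartSplit.eq_of_pad_eq (by omega) (hk ▸ hpad)
  · obtain ⟨K, hK, hle⟩ := (m2RankHigh_le_neg_iff s.2.zero_notMem m).mp hs
    obtain ⟨t, rfl, hcard, hpad⟩ := exists_pad_eq s.2 hle
    refine ⟨t, ?_, Subtype.ext ?_⟩
    · rw [Set.mem_ofPred_eq, m2RankLow_parts]
      omega
    · simpa only [show (t.K + m + 1).toNat = Multiset.card s.1 by omega] using hpad

theorem exists_m2Rank_shift_equiv (m : ℤ) :
    ∃ e : {s : OddDistinctPartition | -m - 1 ≤ m2RankLow s.1} ≃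
        {s : OddDistinctPartition | m2RankHigh s.1 ≤ -m},
      ∀ s, ((e s).1.1.sum : ℤ) = s.1.1.sum + (2 * m + 1) := by
  let split : {t : LargestPartSplit | -m - 1 ≤ m2RankLow t.parts} ≃
      {s : OddDistinctPartition | -m - 1 ≤ m2RankLow s.1} :=
    LargestPartSplit.equivPartition.subtypeEquiv fun _ ↦ Iff.rfl
  refine ⟨split.symm.trans (pad_bijOn m).equiv, fun s ↦ ?_⟩
  obtain ⟨t, rfl⟩ := split.surjective s
  obtain ⟨hcard, hK⟩ := card_add_ε_le_of_le_m2RankLow t.2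
  have hparts := t.1.sum_parts
  have hpad := t.1.sum_pad hcard
  rw [Equiv.trans_apply, Equiv.symm_apply_apply]
  change ((t.1.pad (t.1.K + m + 1).toNat).sum : ℤ) = t.1.parts.sum + (2 * m + 1)
  omega

/-! ### Generating functions of sets of partitions -/

section PartitionGF

/-- The members of `OddDistinctPartition` with sum `n` are the partitions of `n` without repeated
odd parts. -/
def sumFiberEquiv (n : ℕ) :
    {s : OddDistinctPartition // s.1.sum = n} ≃ {p : n.Partition // p.noRepeatedOdd} where
  toFun s := ⟨⟨s.1.1, fun hi ↦ Nat.pos_of_ne_zero fun h ↦ s.1.2.zero_notMem (h ▸ hi), s.2⟩,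
    s.1.2.count_le_one⟩
  invFun p := ⟨⟨p.1.parts, fun h ↦ (p.1.parts_pos h).ne' rfl, p.2⟩, p.1.parts_sum⟩
  left_inv _ := rfl
  right_inv _ := rfl

lemma finite_sum_eq (n : ℕ) : Finite {s : OddDistinctPartition // s.1.sum = n} :=
  .of_equiv _ (sumFiberEquiv n).symm

lemma card_partition_le_two_pow (n : ℕ) : Nat.card n.Partition ≤ 2 ^ n := by
  rw [Nat.card_eq_fintype_card]
  calc Fintype.card n.Partition ≤ Fintype.card (Composition n) :=
        Fintype.card_le_of_surjective _ Nat.Partition.ofComposition_surj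
    _ = 2 ^ (n - 1) := composition_card n
    _ ≤ 2 ^ n := Nat.pow_le_pow_right two_pos (Nat.sub_le _ _)

lemma card_sum_eq_le_two_pow (n : ℕ) :
    Nat.card {s : OddDistinctPartition // s.1.sum = n} ≤ 2 ^ n :=
  (Nat.card_congr (sumFiberEquiv n)).trans_le <|
    (Finite.card_subtype_le _).trans (card_partition_le_two_pow n)

lemma summable_pow_sum_real {r : ℝ} (hr : 0 ≤ r) (hr2 : r < 1 / 2) :
    Summable fun s : OddDistinctPartition ↦ r ^ s.1.sum := by
  rw [← (Equiv.sigmaFiberEquiv fun s : OddDistinctPartition ↦ s.1.sum).summable_iff]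
  refine (summable_sigma_of_nonneg fun _ ↦ pow_nonneg hr _).mpr ?_
  refine ⟨fun n ↦ have := finite_sum_eq n; Summable.of_finite, ?_⟩
  have hfiber (n : ℕ) : ∑' s : {s : OddDistinctPartition // s.1.sum = n}, r ^ s.1.1.sum =
      Nat.card {s : OddDistinctPartition // s.1.sum = n} * r ^ n := by
    rw [← nsmul_eq_mul, ← tsum_const]
    exact tsum_congr fun s ↦ by rw [s.2]
  refine .of_nonneg_of_le (fun n ↦ tsum_nonneg fun _ ↦ pow_nonneg hr _) (fun n ↦ ?_)
    (summable_geometric_of_lt_one (r := 2 * r) (by positivity) (by linarith))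
  calc _ = Nat.card {s : OddDistinctPartition // s.1.sum = n} * r ^ n := hfiber n
    _ ≤ 2 ^ n * r ^ n := by
      gcongr
      exact_mod_cast card_sum_eq_le_two_pow n
    _ = (2 * r) ^ n := (mul_pow ..).symm

/-- The generating function `∑ x^{|s|}` of the partitions `s` in a set `S`. -/
noncomputable def partitionGF (x : ℂ) (S : Set OddDistinctPartition) : ℂ :=
  ∑' s : S, x ^ s.1.1.sum

variable {x : ℂ}

lemma summable_pow_sum (hx2 : ‖x‖ < 1 / 2) :
    Summable fun s : OddDistinctPartition ↦ x ^ s.1.sum :=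
  .of_norm <| by simpa only [norm_pow] using summable_pow_sum_real (norm_nonneg x) hx2

lemma norm_partitionGF_le (hx2 : ‖x‖ < 1 / 2) (S : Set OddDistinctPartition) :
    ‖partitionGF x S‖ ≤ ∑' s : OddDistinctPartition, ‖x‖ ^ s.1.sum := by
  have hsum := summable_pow_sum_real (norm_nonneg x) hx2
  refine (tsum_of_norm_bounded (hsum.subtype S).hasSum fun s ↦ (norm_pow _ _).le).trans ?_
  exact hsum.tsum_subtype_le _ S fun _ ↦ by positivity

lemma partitionGF_diff (hx2 : ‖x‖ < 1 / 2) {S T : Set OddDistinctPartition} (h : T ⊆ S) :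
    partitionGF x (S \ T) = partitionGF x S - partitionGF x T := by
  have hsum := summable_pow_sum hx2
  simp only [partitionGF, tsum_subtype _ fun s : OddDistinctPartition ↦ x ^ s.1.sum]
  rw [Set.indicator_sdiff h, ← (hsum.indicator S).tsum_sub (hsum.indicator T)]
  rfl

lemma partitionGF_compl (hx2 : ‖x‖ < 1 / 2) (S : Set OddDistinctPartition) :
    partitionGF x Sᶜ = partitionGF x Set.univ - partitionGF x S := by
  rw [Set.compl_eq_univ_sdiff, partitionGF_diff hx2 (Set.subset_univ S)]

lemma partitionGF_empty_partition : partitionGF x {⟨0, isOddDistinct_zero⟩} = 1 := by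
  simp [partitionGF]

lemma hasSum_partitionGF_fiber (hx2 : ‖x‖ < 1 / 2) {α : Type*} (f : OddDistinctPartition → α)
    (S : Set OddDistinctPartition) :
    HasSum (fun a ↦ partitionGF x {s ∈ S | f s = a}) (partitionGF x S) := by
  have h := ((summable_pow_sum hx2).indicator S).hasSum.tsum_fiberwise f
  simp only [partitionGF, tsum_subtype _ fun s : OddDistinctPartition ↦ x ^ s.1.sum]
  refine h.congr_fun fun a ↦ ?_
  rw [tsum_subtype (f ⁻¹' {a}), Set.indicator_indicator, Set.inter_comm]
  rfl

lemma hasSum_N2_mul_pow (hx2 : ‖x‖ < 1 / 2) (r ℓ : ℕ) :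
    HasSum (fun n ↦ (N2 r ℓ n : ℂ) * x ^ n)
      (partitionGF x {s | m2RankParts s.1 ≡ r [ZMOD ℓ]}) := by
  refine (hasSum_partitionGF_fiber hx2 (fun s ↦ s.1.sum) _).congr_fun fun n ↦ ?_
  let e : {s : OddDistinctPartition | m2RankParts s.1 ≡ r [ZMOD ℓ] ∧ s.1.sum = n} ≃
      {p : n.Partition // p.noRepeatedOdd ∧ p.m2Rank ≡ r [ZMOD ℓ]} :=
    ((Equiv.subtypeEquivRight fun _ ↦ and_comm).trans
      (Equiv.subtypeSubtypeEquivSubtypeInter _ _).symm).trans <|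
    ((sumFiberEquiv n).subtypeEquiv fun _ ↦ Iff.rfl).trans
      (Equiv.subtypeSubtypeEquivSubtypeInter _ fun p : n.Partition ↦ p.m2Rank ≡ r [ZMOD ℓ])
  rw [N2, ← Nat.card_congr e, ← nsmul_eq_mul, ← tsum_const]
  exact tsum_congr fun s ↦ by rw [s.2.2]

end PartitionGF

/-! ### The generating functions of the M₂-rank -/

section PartialTheta

/-- The `k`-th summand of `partialTheta x M`. -/
noncomputable def partialThetaTerm (x : ℂ) (M k : ℕ) : ℂ :=
  (-1) ^ k * x ^ (2 * k ^ 2 + 3 * k + 1 + 2 * M * (k + 1))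

/-- The partial theta series `∑_{k ≥ 1} (-1)^{k+1} x^{2k²-k+2Mk}`, with `k` shifted by one. -/
noncomputable def partialTheta (x : ℂ) (M : ℕ) : ℂ := ∑' k : ℕ, partialThetaTerm x M k

variable {x : ℂ}

lemma norm_partialThetaTerm_le (hx1 : ‖x‖ < 1) (M k : ℕ) :
    ‖partialThetaTerm x M k‖ ≤ ‖x‖ ^ M * ‖x‖ ^ k := by
  rw [partialThetaTerm, norm_mul, norm_pow, norm_pow, norm_neg, norm_one, one_pow, one_mul,
    ← pow_add]
  exact pow_le_pow_of_le_one (norm_nonneg _) hx1.le (by nlinarith)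

lemma summable_partialThetaTerm (hx1 : ‖x‖ < 1) (M : ℕ) : Summable (partialThetaTerm x M) :=
  .of_norm_bounded ((summable_geometric_of_lt_one (norm_nonneg x) hx1).mul_left _)
    (norm_partialThetaTerm_le hx1 M)

lemma norm_partialTheta_le (hx1 : ‖x‖ < 1) (M : ℕ) :
    ‖partialTheta x M‖ ≤ ∑' k : ℕ, ‖x‖ ^ k :=
  tsum_of_norm_bounded (summable_geometric_of_lt_one (norm_nonneg x) hx1).hasSum fun k ↦
    (norm_partialThetaTerm_le hx1 M k).trans <|
      mul_le_of_le_one_left (by positivity) (pow_le_one₀ (norm_nonneg _) hx1.le)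

lemma partialTheta_eq_mul_one_sub (hx1 : ‖x‖ < 1) (M : ℕ) :
    partialTheta x M = x ^ (2 * M + 1) * (1 - partialTheta x (M + 2)) := by
  rw [partialTheta, (summable_partialThetaTerm hx1 M).tsum_eq_zero_add, partialTheta, mul_sub,
    mul_one, ← tsum_mul_left, sub_eq_add_neg, ← tsum_neg]
  congr 1
  · simp [partialThetaTerm, add_comm]
  · refine tsum_congr fun k ↦ ?_
    simp only [partialThetaTerm]
    ring

lemma eq_zero_of_norm_le_mul_norm_comp {ι E : Type*} [NormedAddCommGroup E] {d : ι → E} {σ : ι → ι}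
    {r B : ℝ} (hr0 : 0 ≤ r) (hr1 : r < 1) (hB : ∀ i, ‖d i‖ ≤ B)
    (hd : ∀ i, ‖d i‖ ≤ r * ‖d (σ i)‖) (i : ι) : d i = 0 := by
  have hiter (n : ℕ) : ∀ i, ‖d i‖ ≤ r ^ n * B := by
    induction n with
    | zero => simpa using hB
    | succ n ih =>
      intro i
      rw [pow_succ', mul_assoc]
      exact (hd i).trans (mul_le_mul_of_nonneg_left (ih _) hr0)
  have hlim : Tendsto (fun n : ℕ ↦ r ^ n * B) atTop (𝓝 0) := by
    simpa using (tendsto_pow_atTop_nhds_zero_of_lt_one hr0 hr1).mul_const B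
  exact norm_le_zero_iff.mp (ge_of_tendsto' hlim fun n ↦ hiter n i)

lemma eq_mul_partialTheta_of_recurrence (hx1 : ‖x‖ < 1) {c : ℂ} {u : ℕ → ℂ} {B : ℝ}
    (hB : ∀ M, ‖u M‖ ≤ B) (hu : ∀ M, 1 ≤ M → u M = x ^ (2 * M + 1) * (c - u (M + 2)))
    {M : ℕ} (hM : 1 ≤ M) : u M = c * partialTheta x M := by
  let d (M : ℕ) : ℂ := u (M + 1) - c * partialTheta x (M + 1)
  have hbound (M : ℕ) : ‖d M‖ ≤ B + ‖c‖ * ∑' k : ℕ, ‖x‖ ^ k := by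
    refine (norm_sub_le _ _).trans (add_le_add (hB _) ?_)
    rw [norm_mul]
    exact mul_le_mul_of_nonneg_left (norm_partialTheta_le hx1 _) (norm_nonneg _)
  have hrec (M : ℕ) : ‖d M‖ ≤ ‖x‖ * ‖d (M + 2)‖ := by
    have hd : d M = -(x ^ (2 * (M + 1) + 1) * d (M + 2)) := by
      linear_combination hu (M + 1) (by omega) - c * partialTheta_eq_mul_one_sub hx1 (M + 1)
    rw [hd, norm_neg, norm_mul, norm_pow]
    exact mul_le_mul_of_nonneg_right
      (pow_le_of_le_one (norm_nonneg _) hx1.le (by omega)) (norm_nonneg _)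
  obtain ⟨M, rfl⟩ := Nat.exists_eq_add_of_le' hM
  exact sub_eq_zero.mp (eq_zero_of_norm_le_mul_norm_comp (norm_nonneg x) hx1 hbound hrec M)

end PartialTheta

section RankGF

variable {x : ℂ}

lemma partitionGF_m2RankHigh_le (hx : x ≠ 0) (m : ℤ) :
    partitionGF x {s | m2RankHigh s.1 ≤ -m} =
      x ^ (2 * m + 1) * partitionGF x {s | -m - 1 ≤ m2RankLow s.1} := by
  obtain ⟨e, he⟩ := exists_m2Rank_shift_equiv m
  rw [partitionGF, partitionGF, ← e.tsum_eq, ← tsum_mul_left]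
  refine tsum_congr fun s ↦ ?_
  rw [← zpow_natCast, he, add_comm, zpow_add₀ hx, zpow_natCast]

lemma le_m2RankLow_iff {s : Multiset ℕ} {m : ℤ} (hm : m ≠ 0) :
    m ≤ m2RankLow s ↔ m ≤ m2RankParts s := by
  rw [m2RankLow]
  split_ifs with hs
  · rw [hs, m2RankParts_zero]
    omega
  · rfl

lemma m2RankHigh_le_iff {s : Multiset ℕ} {m : ℤ} (hm : m ≠ 0) :
    m2RankHigh s ≤ m ↔ m2RankParts s ≤ m := by
  rw [m2RankHigh]
  split_ifs with hs
  · rw [hs, m2RankParts_zero]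
    omega
  · rfl

lemma partitionGF_le_neg_m2RankParts (hx : x ≠ 0) (hx2 : ‖x‖ < 1 / 2) {M : ℕ} (hM : 1 ≤ M) :
    partitionGF x {s | m2RankParts s.1 ≤ -M} = x ^ (2 * M + 1) *
      (partitionGF x Set.univ - partitionGF x {s | m2RankParts s.1 ≤ -(M + 2 : ℕ)}) := by
  have hcompl : {s : OddDistinctPartition | m2RankParts s.1 ≤ -(M + 2 : ℕ)}ᶜ =
      {s | -(M : ℤ) - 1 ≤ m2RankLow s.1} := by
    ext s
    rw [Set.mem_compl_iff, Set.mem_ofPred_eq, Set.mem_ofPred_eq, le_m2RankLow_iff (by omega)]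
    omega
  have hshift := partitionGF_m2RankHigh_le hx M
  simp only [m2RankHigh_le_iff (show -(M : ℤ) ≠ 0 by omega)] at hshift
  rw [← partitionGF_compl hx2, hcompl, hshift]
  norm_cast

lemma partitionGF_le_m2RankLow (hx : x ≠ 0) (hx2 : ‖x‖ < 1 / 2) (M : ℕ) :
    partitionGF x {s | M ≤ m2RankLow s.1} = x ^ (2 * M + 1) *
      (partitionGF x Set.univ - partitionGF x {s | (M + 2 : ℕ) ≤ m2RankParts s.1}) := by
  have hcompl : {s : OddDistinctPartition | (M + 2 : ℕ) ≤ m2RankParts s.1}ᶜ =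
      {s | m2RankHigh s.1 ≤ -(-(M : ℤ) - 1)} := by
    ext s
    rw [Set.mem_compl_iff, Set.mem_ofPred_eq, Set.mem_ofPred_eq, m2RankHigh_le_iff (by omega)]
    omega
  rw [← partitionGF_compl hx2, hcompl, partitionGF_m2RankHigh_le hx, ← mul_assoc,
    ← zpow_natCast, ← zpow_add₀ hx, show ((2 * M + 1 : ℕ) : ℤ) + (2 * (-M - 1) + 1) = 0 by
    push_cast; ring, zpow_zero, one_mul]
  simp

lemma partitionGF_le_m2RankParts (hx : x ≠ 0) (hx2 : ‖x‖ < 1 / 2) {M : ℕ} (hM : 1 ≤ M) :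
    partitionGF x {s | M ≤ m2RankParts s.1} = x ^ (2 * M + 1) *
      (partitionGF x Set.univ - partitionGF x {s | (M + 2 : ℕ) ≤ m2RankParts s.1}) := by
  rw [← partitionGF_le_m2RankLow hx hx2]
  simp only [le_m2RankLow_iff (show (M : ℤ) ≠ 0 by omega)]

lemma partitionGF_nonneg_m2RankParts (hx2 : ‖x‖ < 1 / 2) :
    partitionGF x {s | 0 ≤ m2RankParts s.1} = 1 + partitionGF x {s | 0 ≤ m2RankLow s.1} := by
  have hdiff : {s : OddDistinctPartition | 0 ≤ m2RankLow s.1} =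
      {s | 0 ≤ m2RankParts s.1} \ {⟨0, isOddDistinct_zero⟩} := by
    ext s
    by_cases hs : s.1 = 0 <;> simp [m2RankLow, Subtype.ext_iff, hs]
  rw [hdiff, partitionGF_diff hx2 (by simp [m2RankParts_zero]), partitionGF_empty_partition]
  ring

lemma partitionGF_le_neg_m2RankParts_eq_mul (hx : x ≠ 0) (hx2 : ‖x‖ < 1 / 2) {M : ℕ}
    (hM : 1 ≤ M) : partitionGF x {s | m2RankParts s.1 ≤ -M} =
      partitionGF x Set.univ * partialTheta x M :=
  eq_mul_partialTheta_of_recurrence (hx2.trans (by norm_num)) (fun _ ↦ norm_partitionGF_le hx2 _)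
    (fun _ ↦ partitionGF_le_neg_m2RankParts hx hx2) hM

lemma partitionGF_le_m2RankParts_eq_mul (hx : x ≠ 0) (hx2 : ‖x‖ < 1 / 2) {M : ℕ} (hM : 1 ≤ M) :
    partitionGF x {s | M ≤ m2RankParts s.1} = partitionGF x Set.univ * partialTheta x M :=
  eq_mul_partialTheta_of_recurrence (hx2.trans (by norm_num)) (fun _ ↦ norm_partitionGF_le hx2 _)
    (fun _ ↦ partitionGF_le_m2RankParts hx hx2) hM

lemma partitionGF_univ_mul (hx : x ≠ 0) (hx2 : ‖x‖ < 1 / 2) :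
    partitionGF x Set.univ * (1 - partialTheta x 0 - partialTheta x 1) = 1 := by
  have hlow := partitionGF_le_m2RankLow hx hx2 0
  rw [partitionGF_le_m2RankParts_eq_mul hx hx2 (by norm_num)] at hlow
  have hnonneg : partitionGF x {s | 0 ≤ m2RankParts s.1} =
      partitionGF x Set.univ - partitionGF x Set.univ * partialTheta x 1 := by
    rw [← partitionGF_le_neg_m2RankParts_eq_mul hx hx2 le_rfl, ← partitionGF_compl hx2]
    congr 1
    ext s
    simp only [Set.mem_compl_iff, Set.mem_ofPred_eq]
    omega
  have hrec := partialTheta_eq_mul_one_sub (x := x) (hx2.trans (by norm_num)) 0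
  have hsplit := partitionGF_nonneg_m2RankParts hx2
  simp only [Nat.cast_zero] at hlow
  linear_combination hsplit - hnonneg + hlow - partitionGF x Set.univ * hrec

lemma partitionGF_m2RankParts_eq (hx : x ≠ 0) (hx2 : ‖x‖ < 1 / 2) {M : ℕ} (hM : 1 ≤ M) :
    partitionGF x {s | m2RankParts s.1 = M} =
      partitionGF x Set.univ * (partialTheta x M - partialTheta x (M + 1)) := by
  rw [mul_sub, ← partitionGF_le_m2RankParts_eq_mul hx hx2 hM,
    ← partitionGF_le_m2RankParts_eq_mul hx hx2 (by omega), ← partitionGF_diff hx2]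
  · congr 1
    ext s
    simp only [Set.mem_sdiff, Set.mem_ofPred_eq]
    omega
  · exact fun s hs ↦ by simp only [Set.mem_ofPred_eq] at hs ⊢; omega

lemma partitionGF_m2RankParts_eq_neg (hx : x ≠ 0) (hx2 : ‖x‖ < 1 / 2) {M : ℕ} (hM : 1 ≤ M) :
    partitionGF x {s | m2RankParts s.1 = -M} =
      partitionGF x Set.univ * (partialTheta x M - partialTheta x (M + 1)) := by
  rw [mul_sub, ← partitionGF_le_neg_m2RankParts_eq_mul hx hx2 hM,
    ← partitionGF_le_neg_m2RankParts_eq_mul hx hx2 (by omega), ← partitionGF_diff hx2]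
  · congr 1
    ext s
    simp only [Set.mem_sdiff, Set.mem_ofPred_eq]
    omega
  · exact fun s hs ↦ by simp only [Set.mem_ofPred_eq] at hs ⊢; omega

lemma hasSum_partitionGF_m2RankParts_eq (hx2 : ‖x‖ < 1 / 2) {ℓ : ℤ} (hℓ : ℓ ≠ 0) (r : ℤ) :
    HasSum (fun m ↦ partitionGF x {s | m2RankParts s.1 = ℓ * m + r})
      (partitionGF x {s | m2RankParts s.1 ≡ r [ZMOD ℓ]}) := by
  refine (hasSum_partitionGF_fiber hx2 (fun s ↦ (m2RankParts s.1 - r) / ℓ) _).congr_fun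
    fun m ↦ congrArg _ (Set.ext fun s ↦ ⟨fun h ↦ ?_, fun ⟨hmod, hm⟩ ↦ ?_⟩)
  · rw [Set.mem_ofPred_eq] at h
    exact ⟨by simp [Int.ModEq, h], by simp [h, hℓ]⟩
  · have := Int.mul_ediv_cancel' hmod.symm.dvd
    rw [Set.mem_ofPred_eq]
    linarith [hm ▸ this]

end RankGF

section RankDifference

variable {x q : ℂ}

lemma hasSum_partitionGF_rank_difference (hx : x ≠ 0) (hx2 : ‖x‖ < 1 / 2) :
    HasSum (fun j : ℕ ↦ partitionGF x Set.univ *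
        (partialTheta x (5 * j + 1) - 2 * partialTheta x (5 * j + 2)
          + 2 * partialTheta x (5 * j + 4) - partialTheta x (5 * j + 5)))
      (partitionGF x {s | m2RankParts s.1 ≡ 1 [ZMOD 5]} -
        partitionGF x {s | m2RankParts s.1 ≡ 2 [ZMOD 5]}) := by
  have hsum := (hasSum_partitionGF_m2RankParts_eq hx2 (ℓ := 5) (by decide) 1).sub
    (hasSum_partitionGF_m2RankParts_eq hx2 (ℓ := 5) (by decide) 2)
  refine hsum.nat_add_neg_add_one.congr_fun fun j ↦ ?_
  have h₁ := partitionGF_m2RankParts_eq hx hx2 (M := 5 * j + 1) (by omega)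
  have h₂ := partitionGF_m2RankParts_eq hx hx2 (M := 5 * j + 2) (by omega)
  have h₃ := partitionGF_m2RankParts_eq_neg hx hx2 (M := 5 * j + 3) (by omega)
  have h₄ := partitionGF_m2RankParts_eq_neg hx hx2 (M := 5 * j + 4) (by omega)
  push_cast at h₁ h₂ h₃ h₄
  rw [h₁, h₂, show (5 * -((j : ℤ) + 1) + 1) = -(5 * j + 4) by ring,
    show (5 * -((j : ℤ) + 1) + 2) = -(5 * j + 3) by ring, h₃, h₄]
  ring

/-- The sum over `j` of the partial theta series `partialTheta x (ℓ * j + i)`, in the form of a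
Lambert series. -/
noncomputable def partialThetaLambert (x : ℂ) (ℓ i : ℕ) : ℂ :=
  ∑' k : ℕ, partialThetaTerm x i k / (1 - x ^ (2 * ℓ * (k + 1)))

lemma summable_partialThetaTerm_prod (hx1 : ‖x‖ < 1) {ℓ : ℕ} (hℓ : ℓ ≠ 0) (i : ℕ) :
    Summable fun p : ℕ × ℕ ↦ partialThetaTerm x (ℓ * p.1 + i) p.2 := by
  have hgeom := summable_geometric_of_lt_one (norm_nonneg x) hx1
  refine .of_norm_bounded (hgeom.mul_of_nonneg hgeom (fun _ ↦ by positivity) fun _ ↦ by positivity)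
    fun p ↦ (norm_partialThetaTerm_le hx1 _ _).trans ?_
  refine mul_le_mul_of_nonneg_right ?_ (by positivity)
  exact pow_le_pow_of_le_one (norm_nonneg _) hx1.le
    ((Nat.le_mul_of_pos_left _ (Nat.pos_of_ne_zero hℓ)).trans (Nat.le_add_right _ _))

lemma tsum_partialThetaTerm_mul_add (hx1 : ‖x‖ < 1) {ℓ : ℕ} (hℓ : ℓ ≠ 0) (i k : ℕ) :
    ∑' j : ℕ, partialThetaTerm x (ℓ * j + i) k =
      partialThetaTerm x i k / (1 - x ^ (2 * ℓ * (k + 1))) := by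
  rw [div_eq_mul_inv,
    ← tsum_geometric_of_norm_lt_one (norm_pow_lt_one (by positivity) hx1), ← tsum_mul_left]
  refine tsum_congr fun j ↦ ?_
  simp only [partialThetaTerm]
  ring

lemma hasSum_partialThetaLambert (hx1 : ‖x‖ < 1) {ℓ : ℕ} (hℓ : ℓ ≠ 0) (i : ℕ) :
    HasSum (fun k ↦ partialThetaTerm x i k / (1 - x ^ (2 * ℓ * (k + 1))))
      (partialThetaLambert x ℓ i) := by
  have h := (summable_partialThetaTerm_prod hx1 hℓ i).prod_symm.prod
  simp only [Prod.swap_prod_mk, tsum_partialThetaTerm_mul_add hx1 hℓ] at h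
  exact h.hasSum

lemma hasSum_partialTheta_mul_add (hx1 : ‖x‖ < 1) {ℓ : ℕ} (hℓ : ℓ ≠ 0) (i : ℕ) :
    HasSum (fun j ↦ partialTheta x (ℓ * j + i)) (partialThetaLambert x ℓ i) := by
  have hprod := summable_partialThetaTerm_prod hx1 hℓ i
  have hcomm : ∑' j, partialTheta x (ℓ * j + i) = partialThetaLambert x ℓ i := by
    simp only [partialThetaLambert, ← tsum_partialThetaTerm_mul_add hx1 hℓ]
    exact (Summable.tsum_comm (f := fun j k ↦ partialThetaTerm x (ℓ * j + i) k) hprod).symm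
  exact hcomm ▸ hprod.prod.hasSum

lemma partitionGF_rank_difference_eq_mul (hx : x ≠ 0) (hx2 : ‖x‖ < 1 / 2) :
    partitionGF x {s | m2RankParts s.1 ≡ 1 [ZMOD 5]} -
        partitionGF x {s | m2RankParts s.1 ≡ 2 [ZMOD 5]} =
      partitionGF x Set.univ * (partialThetaLambert x 5 1 - 2 * partialThetaLambert x 5 2
        + 2 * partialThetaLambert x 5 4 - partialThetaLambert x 5 5) := by
  have h (i : ℕ) :=
    hasSum_partialTheta_mul_add (x := x) (hx2.trans (by norm_num)) (by decide : (5 : ℕ) ≠ 0) i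
  exact (hasSum_partitionGF_rank_difference hx hx2).unique <|
    ((((h 1).sub ((h 2).mul_left 2)).add ((h 4).mul_left 2)).sub (h 5)).mul_left _

/-! ### The substitution `x = -q` -/

lemma partialThetaTerm_neg (q : ℂ) (M k : ℕ) :
    partialThetaTerm (-q) M k = -q ^ (2 * k ^ 2 + 3 * k + 1 + 2 * M * (k + 1)) := by
  have hsign : (-1 : ℂ) ^ k * (-1) ^ (2 * k ^ 2 + 3 * k + 1 + 2 * M * (k + 1)) = -1 := by
    rw [← pow_add, show k + (2 * k ^ 2 + 3 * k + 1 + 2 * M * (k + 1)) =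
      2 * (k ^ 2 + 2 * k + M * (k + 1)) + 1 by ring]
    exact Odd.neg_one_pow ⟨_, rfl⟩
  rw [partialThetaTerm, neg_pow q, ← mul_assoc, hsign, neg_one_mul]

lemma tsum_psi_eq_one_sub_partialTheta (hq1 : ‖q‖ < 1) :
    ∑' n : ℤ, q ^ (2 * n ^ 2 + n) = 1 - partialTheta (-q) 0 - partialTheta (-q) 1 := by
  have hneg (M : ℕ) := (summable_partialThetaTerm ((norm_neg q).trans_lt hq1) M).hasSum.neg
  rw [show 1 - partialTheta (-q) 0 - partialTheta (-q) 1 =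
    (-partialTheta (-q) 1 + 1) + -partialTheta (-q) 0 by ring]
  refine (HasSum.of_nat_of_neg_add_one ?_ ?_).tsum_eq
  · rw [← hasSum_nat_add_iff' 1]
    simp only [Finset.range_one, Finset.sum_singleton, Nat.cast_zero]
    norm_num
    refine (hneg 1).congr_fun fun k ↦ ?_
    rw [partialThetaTerm_neg, neg_neg, ← zpow_natCast]
    congr 1
    push_cast
    ring
  · refine (hneg 0).congr_fun fun k ↦ ?_
    rw [partialThetaTerm_neg, neg_neg, ← zpow_natCast]
    congr 1
    push_cast
    ring

lemma neg_pow_two_mul_five_mul (q : ℂ) (m : ℕ) : (-q) ^ (2 * 5 * m) = q ^ (2 * 5 * m) := by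
  rw [mul_assoc, pow_mul, neg_sq, ← pow_mul]

lemma rankTerm_natCast_add_one (q : ℂ) (i k : ℕ) :
    rankTerm q (2 * i - 1) (k + 1) =
      -(partialThetaTerm (-q) i k / (1 - (-q) ^ (2 * 5 * (k + 1)))) := by
  rw [rankTerm, if_neg (by omega), partialThetaTerm_neg, neg_pow_two_mul_five_mul,
    neg_div, neg_neg, ← zpow_natCast, ← zpow_natCast]
  congr 3
  all_goals
    push_cast
    ring

lemma rankTerm_neg_natCast_add_one (hq : q ≠ 0) (hq1 : ‖q‖ < 1) {i i' : ℕ} (hi : i + i' = 6)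
    (k : ℕ) : rankTerm q (2 * i - 1) (-(k + 1)) =
      partialThetaTerm (-q) i' k / (1 - (-q) ^ (2 * 5 * (k + 1))) := by
  rw [rankTerm, if_neg (by omega), partialThetaTerm_neg, neg_pow_two_mul_five_mul]
  set y := q ^ (2 * 5 * (k + 1)) with hy
  have hy0 : y ≠ 0 := pow_ne_zero _ hq
  have hy1 : 1 - y ≠ 0 := sub_ne_zero.mpr fun h ↦ by
    have := norm_pow_lt_one (n := 2 * 5 * (k + 1)) (by positivity) hq1
    rw [← hy, ← h, norm_one] at this
    exact this.false
  have hden : q ^ (10 * -((k : ℤ) + 1)) = y⁻¹ := by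
    rw [hy, ← zpow_natCast, ← zpow_neg]
    congr 1
  have hnum : q ^ (2 * k ^ 2 + 3 * k + 1 + 2 * i' * (k + 1)) =
      q ^ (2 * (-((k : ℤ) + 1)) ^ 2 + (2 * i - 1) * -((k : ℤ) + 1)) * y := by
    rw [hy, ← zpow_natCast, ← zpow_natCast, ← zpow_add₀ hq]
    congr 1
    rw [show (i : ℤ) = 6 - i' by omega]
    push_cast
    ring
  have hy1' : 1 - y⁻¹ = -(1 - y) / y := by
    rw [neg_sub, sub_div, div_self hy0, one_div]
  rw [hden, hnum, hy1']
  field_simp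

lemma tsum_rankTerm (hq : q ≠ 0) (hq1 : ‖q‖ < 1) {i i' : ℕ} (hi : i + i' = 6) :
    ∑' n, rankTerm q (2 * i - 1) n =
      partialThetaLambert (-q) 5 i' - partialThetaLambert (-q) 5 i := by
  have h (i : ℕ) := hasSum_partialThetaLambert ((norm_neg q).trans_lt hq1)
    (by decide : (5 : ℕ) ≠ 0) i
  rw [sub_eq_neg_add (partialThetaLambert (-q) 5 i')]
  refine (HasSum.of_nat_of_neg_add_one ?_ ?_).tsum_eq
  · refine (hasSum_nat_add_iff' 1).mp ?_
    simpa [rankTerm_natCast_add_one, show rankTerm q (2 * i - 1) 0 = 0 from if_pos rfl] using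
      (h i).neg
  · simpa only [rankTerm_neg_natCast_add_one hq hq1 hi] using h i'

lemma tsum_psi_mul_partitionGF_univ (hq : q ≠ 0) (hq2 : ‖q‖ < 1 / 2) :
    (∑' n : ℤ, q ^ (2 * n ^ 2 + n)) * partitionGF (-q) Set.univ = 1 := by
  rw [tsum_psi_eq_one_sub_partialTheta (hq2.trans (by norm_num)), mul_comm,
    partitionGF_univ_mul (neg_ne_zero.mpr hq) ((norm_neg q).trans_lt hq2)]

lemma tsum_psi_mul_rank_difference (hq : q ≠ 0) (hq2 : ‖q‖ < 1 / 2) :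
    (∑' n : ℤ, q ^ (2 * n ^ 2 + n)) * (partitionGF (-q) {s | m2RankParts s.1 ≡ 1 [ZMOD 5]} -
        partitionGF (-q) {s | m2RankParts s.1 ≡ 2 [ZMOD 5]}) =
      2 * ∑' n, rankTerm q 3 n - ∑' n, rankTerm q 1 n := by
  have hq1 : ‖q‖ < 1 := hq2.trans (by norm_num)
  have h₁ := tsum_rankTerm hq hq1 (i := 1) (i' := 5) rfl
  have h₃ := tsum_rankTerm hq hq1 (i := 2) (i' := 4) rfl
  norm_num at h₁ h₃
  rw [partitionGF_rank_difference_eq_mul (neg_ne_zero.mpr hq) ((norm_neg q).trans_lt hq2),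
    ← mul_assoc, tsum_psi_mul_partitionGF_univ hq hq2, h₁, h₃]
  ring

end RankDifference

/-! ### The coefficients in an arithmetic progression -/

section ArithmeticProgression

lemma sum_range_pow_pow_of_isPrimitiveRoot {R : Type*} [CommRing R] [IsDomain R] {ζ : R} {N : ℕ}
    (hζ : IsPrimitiveRoot ζ N) (i : ℕ) :
    ∑ k ∈ Finset.range N, (ζ ^ k) ^ i = if N ∣ i then (N : R) else 0 := by
  simp only [← pow_mul, mul_comm _ i]
  simp only [pow_mul]
  split_ifs with h
  · simp [(hζ.pow_eq_one_iff_dvd i).mpr h]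
  · refine eq_zero_of_ne_zero_of_mul_left_eq_zero
      (sub_ne_zero.mpr fun h' ↦ h ((hζ.pow_eq_one_iff_dvd i).mp h')) ?_
    rw [mul_geom_sum, ← pow_mul, mul_comm, pow_mul, hζ.pow_eq_one, one_pow, sub_self]

lemma eq_zero_of_hasSum_pow_zero {c : ℕ → ℂ}
    (h : ∀ᶠ x in 𝓝[≠] 0, HasSum (fun n ↦ c n * x ^ n) 0) (n : ℕ) : c n = 0 := by
  have hp : HasFPowerSeriesAt (fun x ↦ ∑' n, c n * x ^ n)
      (FormalMultilinearSeries.ofScalars ℂ c) 0 := by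
    rw [hasFPowerSeriesAt_iff]
    filter_upwards [eventually_nhdsWithin_iff.mp h] with x hx
    simp only [FormalMultilinearSeries.coeff_ofScalars, smul_eq_mul, zero_add, mul_comm (x ^ _)]
    refine Summable.hasSum ?_
    rcases eq_or_ne x 0 with rfl | hx0
    · exact summable_of_ne_finset_zero (s := {0}) fun m hm ↦ by simp_all
    · exact (hx hx0).summable
  have hzero : (fun x ↦ ∑' n, c n * x ^ n) =ᶠ[𝓝 0] 0 :=
    hp.analyticAt.frequently_zero_iff_eventually_zero.mp
      (h.mono fun _ hx ↦ hx.tsum_eq).frequently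
  have h_coeff := congrArg (fun p ↦ p.coeff n) (hp.congr hzero).eq_zero
  rw [FormalMultilinearSeries.coeff_ofScalars] at h_coeff
  exact h_coeff.trans rfl

variable {c : ℕ → ℂ} {N : ℕ} {ρ : ℝ} {I : Finset ℕ} {F : ℕ → ℂ → ℂ}

lemma hasSum_residue_of_dissection (hN : N ≠ 0)
    (h : ∀ x, x ≠ 0 → ‖x‖ < ρ → HasSum (fun m ↦ c m * x ^ m) (∑ i ∈ I, x ^ i * F i (x ^ N)))
    {n : ℕ} (hn : ∀ i ∈ I, ¬ i ≡ n [MOD N]) {x : ℂ} (hx : x ≠ 0) (hxρ : ‖x‖ < ρ) :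
    HasSum (fun m ↦ (if m ≡ n [MOD N] then c m else 0) * x ^ m) 0 := by
  obtain ⟨ζ, hζ⟩ : ∃ ζ : ℂ, IsPrimitiveRoot ζ N := ⟨_, Complex.isPrimitiveRoot_exp N hN⟩
  have hdvd (m : ℕ) : N ∣ m + (N - 1) * n ↔ m ≡ n [MOD N] := by
    have hadd : m + (N - 1) * n + n = m + N * n := by
      obtain ⟨k, rfl⟩ := Nat.exists_eq_succ_of_ne_zero hN
      rw [Nat.succ_sub_one, Nat.succ_eq_add_one]
      ring
    rw [← Nat.modEq_zero_iff_dvd, ← Nat.ModEq.add_iff_right (Nat.ModEq.refl n), hadd, zero_add]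
    simp only [Nat.ModEq, Nat.add_mul_mod_self_left]
  have hpow (k : ℕ) : (ζ ^ k) ^ N = 1 := by
    rw [← pow_mul, mul_comm, pow_mul, hζ.pow_eq_one, one_pow]
  have hrot (k : ℕ) : HasSum (fun m ↦ c m * x ^ m * (ζ ^ k) ^ (m + (N - 1) * n))
      (∑ i ∈ I, x ^ i * F i (x ^ N) * (ζ ^ k) ^ (i + (N - 1) * n)) := by
    have := (h (ζ ^ k * x) (mul_ne_zero (pow_ne_zero _ (hζ.ne_zero hN)) hx)
      (by rwa [norm_mul, norm_pow, hζ.norm'_eq_one hN, one_pow, one_mul])).mul_left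
      ((ζ ^ k) ^ ((N - 1) * n))
    simp only [mul_pow _ x, hpow, one_mul, Finset.mul_sum] at this
    rw [Finset.sum_congr rfl fun i _ ↦ show x ^ i * F i (x ^ N) * (ζ ^ k) ^ (i + (N - 1) * n) =
      (ζ ^ k) ^ ((N - 1) * n) * ((ζ ^ k) ^ i * x ^ i * F i (x ^ N)) by ring]
    refine this.congr_fun fun m ↦ ?_
    ring
  have hsum := (hasSum_sum (s := Finset.range N) fun k _ ↦ hrot k).mul_left (N : ℂ)⁻¹
  rw [Finset.sum_comm] at hsum
  simp only [← Finset.mul_sum, sum_range_pow_pow_of_isPrimitiveRoot hζ, hdvd] at hsum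
  rw [Finset.sum_eq_zero fun i hi ↦ by rw [if_neg (hn i hi), mul_zero], mul_zero] at hsum
  refine hsum.congr_fun fun m ↦ ?_
  split_ifs
  · field_simp
  · simp

lemma eq_zero_of_dissection (hN : N ≠ 0) (hρ : 0 < ρ)
    (h : ∀ x, x ≠ 0 → ‖x‖ < ρ → HasSum (fun m ↦ c m * x ^ m) (∑ i ∈ I, x ^ i * F i (x ^ N)))
    {n : ℕ} (hn : ∀ i ∈ I, ¬ i ≡ n [MOD N]) : c n = 0 := by
  have hball : ∀ᶠ x in 𝓝[≠] (0 : ℂ), x ≠ 0 ∧ ‖x‖ < ρ :=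
    eventually_mem_nhdsWithin.and <| eventually_nhdsWithin_of_eventually_nhds <|
      (continuous_norm.tendsto' 0 0 norm_zero).eventually_lt_const hρ
  have hzero := eq_zero_of_hasSum_pow_zero
    (hball.mono fun x hx ↦ hasSum_residue_of_dissection hN h hn hx.1 hx.2) n
  rwa [if_pos (Nat.ModEq.refl n)] at hzero

end ArithmeticProgression

lemma exists_rank_difference_dissection :
    ∃ F : ℕ → ℂ → ℂ, ∀ q : ℂ, q ≠ 0 → ‖q‖ < 1 / 2 →
      partitionGF (-q) {s | m2RankParts s.1 ≡ 1 [ZMOD 5]} -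
          partitionGF (-q) {s | m2RankParts s.1 ≡ 2 [ZMOD 5]} =
        ∑ i ∈ {0, 2, 3, 4}, q ^ i * F i (q ^ 5) := by
  refine ⟨fun i Q ↦ (match i with
    | 0 => thetaReg (Q ^ 10) 1 * rankCoeff₀ Q - lambertPow Q 2 5
    | 2 => thetaReg (Q ^ 10) 1 * rankCoeff₂ Q
    | 3 => thetaReg (Q ^ 10) 1 * rankCoeff₃ Q
    | _ => thetaReg (Q ^ 10) 1 * rankCoeff₄ Q + 2 * lambertPow Q (-4) (-5) / Q) /
      thetaSeriesPow Q 5, fun q hq hq2 ↦ ?_⟩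
  have hq1 : ‖q‖ < 1 := hq2.trans (by norm_num)
  have hpsi := left_ne_zero_of_mul_eq_one (tsum_psi_mul_partitionGF_univ hq hq2)
  have htheta : thetaSeriesPow (q ^ 5) 5 ≠ 0 :=
    left_ne_zero_of_mul ((hasSum_psi hq hq1).tsum_eq ▸ hpsi)
  have hdissection := rankTerm_dissection hq hq1
  rw [← tsum_psi_mul_rank_difference hq hq2, mul_left_comm] at hdissection
  rw [← mul_div_cancel_left₀ (_ - _) htheta, mul_left_cancel₀ hpsi hdissection]
  simp only [Finset.mem_insert, OfNat.zero_ne_ofNat, Finset.mem_singleton, or_self,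
    not_false_eq_true, Finset.sum_insert, pow_zero, one_mul, Nat.reduceEqDiff, Finset.sum_singleton]
  ring

theorem M2_rank_diff_mod5_12_d1 (n : ℕ) : N2 1 5 (5 * n + 1) = N2 2 5 (5 * n + 1) := by
  obtain ⟨F, hF⟩ := exists_rank_difference_dissection
  have hseries (q : ℂ) (hq : q ≠ 0) (hq2 : ‖q‖ < 1 / 2) :
      HasSum (fun m ↦ (-1) ^ m * ((N2 1 5 m : ℂ) - N2 2 5 m) * q ^ m)
        (∑ i ∈ {0, 2, 3, 4}, q ^ i * F i (q ^ 5)) := by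
    have hN2 := hasSum_N2_mul_pow ((norm_neg q).trans_lt hq2)
    refine (hF q hq hq2 ▸ (hN2 1 5).sub (hN2 2 5)).congr_fun fun m ↦ ?_
    rw [neg_pow q]
    ring
  have hzero := eq_zero_of_dissection (n := 5 * n + 1) (by decide) (by norm_num) hseries
    (by simp [Nat.ModEq])
  exact_mod_cast sub_eq_zero.mp ((mul_eq_zero.mp hzero).resolve_left (by simp))
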